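/- Let p, q : Fin n → EuclideanSpace ℝ (Fin d) be injective families whose values are exactly the extreme points of P := convexHull ℝ (Set.range p) and Q := convexHull ℝ (Set.range q) respectively, and assume P and Q are combinatorially equivalent with compatible labelling. Assume: (1) there are points c_P, c_Q ∈ EuclideanSpace ℝ (Fin d) and real numbers r_P, r_Q ≥ 0 with ‖p i − c_P‖ = r_P and ‖q i − c_Q‖ = r_Q for all i (P and Q are inscribed in spheres of radii r_P and r_Q); (2) c_Q ∈ interior Q; (3) ‖q i − q j‖ ≤ ‖p i − p j‖ for every edge (i,j) of P. Then r_P ≥ r_Q, and r_P = r_Q holds if and only if there exists an isometry e : EuclideanSpace ℝ (Fin d) ≃ᵢ EuclideanSpace ℝ (Fin d) with e (p i) = q i for all i. -/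

import Mathlib

/-- For `i ≠ j`, the pair `(i,j)` is an edge of the polytope `convexHull ℝ (Set.range p)`
if the closed segment between `p i` and `p j` is an extreme subset of it. -/
def IsEdge {n d : ℕ} (p : Fin n → EuclideanSpace ℝ (Fin d)) (i j : Fin n) : Prop :=
  i ≠ j ∧ IsExtreme ℝ (convexHull ℝ (Set.range p)) (segment ℝ (p i) (p j))

/-- Two polytopes with labelled vertices are combinatorially equivalent with compatible
labelling if for every `S ⊆ Fin n`, `convexHull ℝ (p '' S)` is an extreme subset of the
first polytope exactly when `convexHull ℝ (q '' S)` is an extreme subset of the second. -/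
def CombEquiv {n d : ℕ} (p q : Fin n → EuclideanSpace ℝ (Fin d)) : Prop :=
  ∀ S : Set (Fin n),
    IsExtreme ℝ (convexHull ℝ (Set.range p)) (convexHull ℝ (p '' S)) ↔
    IsExtreme ℝ (convexHull ℝ (Set.range q)) (convexHull ℝ (q '' S))

open scoped InnerProductSpace

/-- Hyperbolic forms: negative semidefinite on a hyperplane. -/
theorem hyp_of_hyperplane {V : Type*} [AddCommGroup V] [Module ℝ V]
    (B : V → V → ℝ) (hsymm : ∀ x y, B x y = B y x)
    (hlin : ∀ (s : ℝ) x y z, B (x + s • y) z = B x z + s * B y z)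
    (l : V → ℝ) (hl : ∀ (s : ℝ) x y, l (x + s • y) = l x + s * l y)
    (hneg : ∀ x, l x = 0 → B x x ≤ 0) (c x : V) (hc : 0 < B c c) :
    B x x * B c c ≤ B c x ^ 2 := by
  have key : ∀ s : ℝ, ∀ x y, B (x + s • y) (x + s • y) = B x x + 2 * s * B x y + s ^ 2 * B y y := by
    intro s x y
    rw [hlin, hsymm x, hsymm y, hlin, hlin, hsymm y x]; ring
  by_cases hlc : l c = 0
  · have := hneg c hlc
    linarith
  · have h0 : l (x + (-(l x / l c)) • c) = 0 := by
      rw [hl]; field_simp; ring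
    have h1 := hneg _ h0
    rw [key, hsymm x c] at h1
    nlinarith [sq_nonneg (B c x - (l x / l c) * B c c)]

theorem matrix_lemma {ι : Type*} [Fintype ι] [DecidableEq ι] (B : ι → ι → ℝ) (J : ι → Prop)
    (hsymm : ∀ i j, B i j = B j i) (hoff : ∀ i j, i ≠ j → 0 ≤ B i j)
    (hJ : ∀ i j, ¬ J i → B i j = 0)
    (π c : ι → ℝ) (hπ : ∀ i, 0 < π i) (hc : ∀ i, 0 < c i)
    (hBc : ∀ i, J i → ∑ j, B i j * c j = π i * c i)
    (hconn : ∀ I : ι → Prop, (∃ i, J i ∧ I i) → (∀ i j, J i → J j → I i → i ≠ j → 0 < B i j → I j) →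
      ∀ i, J i → I i)
    (hboch : ∀ x : ι → ℝ, ∑ i, x i * ∑ j, B i j * x j ≤ ∑ i, (∑ j, B i j * x j) ^ 2 / π i)
    (x : ι → ℝ) (hx : ∑ i, c i * ∑ j, B i j * x j = 0) :
    ∑ i, x i * ∑ j, B i j * x j ≤ 0 := by
  classical
  -- the symmetric operator
  set s : ι → ℝ := fun i => Real.sqrt (π i) with hs
  have hspos : ∀ i, 0 < s i := fun i => Real.sqrt_pos.2 (hπ i)
  have hssq : ∀ i, s i * s i = π i := fun i => Real.mul_self_sqrt (hπ i).le
  let A : Matrix ι ι ℝ := Matrix.of fun i j => B i j / (s i * s j)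
  have hA : A.IsHermitian := by
    ext i j
    simp [A, hsymm i j, mul_comm]
  -- eigenvectors
  let v : ι → ι → ℝ := fun k => (hA.eigenvectorBasis k).ofLp
  let μ : ι → ℝ := hA.eigenvalues
  have hAv : ∀ k, A.mulVec (v k) = μ k • v k := fun k => hA.mulVec_eigenvectorBasis k
  -- transformed eigenvectors z = v / s
  have hBz : ∀ k i, ∑ j, B i j * (v k j / s j) = μ k * (π i * (v k i / s i)) := by
    intro k i
    have h := congrFun (hAv k) i
    simp only [Matrix.mulVec, dotProduct, Pi.smul_apply, smul_eq_mul, A, Matrix.of_apply] at h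
    have h2 : ∑ j, B i j * (v k j / s j) = s i * ∑ j, B i j / (s i * s j) * v k j := by
      rw [Finset.mul_sum]
      refine Finset.sum_congr rfl fun j _ => ?_
      have := (hspos i).ne'; have := (hspos j).ne'
      field_simp
    rw [h2, h, ← hssq i]
    have := (hspos i).ne'
    field_simp
  have hquad : ∀ z : ι → ℝ, ∑ i, (if J i then π i else 0) * z i ^ 2 - ∑ i, z i * ∑ j, B i j * z j
      = (1/2) * ∑ i, ∑ j, B i j * c i * c j * (z i / c i - z j / c j) ^ 2 := by
    intro z
    have e1 : ∀ i, (if J i then π i else 0) * z i ^ 2 = ∑ j, B i j * c i * c j * (z i / c i) ^ 2 := by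
      intro i
      have hci := (hc i).ne'
      split_ifs with h
      · have : ∑ j, B i j * c i * c j * (z i / c i) ^ 2 = (c i * (z i / c i) ^ 2) * ∑ j, B i j * c j := by
          rw [Finset.mul_sum]; refine Finset.sum_congr rfl fun j _ => by ring
        rw [this, hBc i h]; field_simp
      · simp [hJ i _ h]
    have e2 : ∀ i, z i * ∑ j, B i j * z j = ∑ j, B i j * c i * c j * ((z i / c i) * (z j / c j)) := by
      intro i
      rw [Finset.mul_sum]; refine Finset.sum_congr rfl fun j _ => ?_
      have hci := (hc i).ne'
      have hcj := (hc j).ne'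
      field_simp
    have e3 : ∑ i, ∑ j, B i j * c i * c j * (z j / c j) ^ 2 = ∑ i, ∑ j, B i j * c i * c j * (z i / c i) ^ 2 := by
      rw [Finset.sum_comm]
      refine Finset.sum_congr rfl fun j _ => Finset.sum_congr rfl fun i _ => ?_
      rw [hsymm]; ring
    have e4 : ∑ i, ∑ j, B i j * c i * c j * (z i / c i - z j / c j) ^ 2 =
        ∑ i, ∑ j, B i j * c i * c j * (z i / c i) ^ 2 + ∑ i, ∑ j, B i j * c i * c j * (z j / c j) ^ 2
         - 2 * ∑ i, ∑ j, B i j * c i * c j * ((z i / c i) * (z j / c j)) := by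
      rw [Finset.mul_sum, ← Finset.sum_add_distrib, ← Finset.sum_sub_distrib]
      refine Finset.sum_congr rfl fun i _ => ?_
      rw [Finset.mul_sum, ← Finset.sum_add_distrib, ← Finset.sum_sub_distrib]
      refine Finset.sum_congr rfl fun j _ => by ring
    rw [e4, e3, Finset.sum_congr rfl fun i _ => e1 i, Finset.sum_congr rfl fun i _ => e2 i]; ring
  have hqnn : ∀ z : ι → ℝ, ∀ i j, 0 ≤ B i j * c i * c j * (z i / c i - z j / c j) ^ 2 := by
    intro z i j
    by_cases hij : i = j
    · subst hij; simp
    · have := hoff i j hij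
      have := (hc i).le; have := (hc j).le
      positivity
  have hnorm : ∀ k, ∑ i, π i * (v k i / s i) ^ 2 = 1 := by
    intro k
    have h1 : ‖hA.eigenvectorBasis k‖ = 1 := hA.eigenvectorBasis.orthonormal.1 k
    have h2 : ‖hA.eigenvectorBasis k‖ ^ 2 = ∑ i, (v k i) ^ 2 := by
      rw [EuclideanSpace.norm_sq_eq]; simp [v]
    rw [h1] at h2
    rw [← one_pow 2, h2]
    refine Finset.sum_congr rfl fun i _ => ?_
    rw [← hssq i]
    have := (hspos i).ne'
    field_simp
  have hq1 : ∀ k, ∑ i, (v k i / s i) * ∑ j, B i j * (v k j / s j) = μ k := by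
    intro k
    calc _ = μ k * ∑ i, π i * (v k i / s i) ^ 2 := by
          rw [Finset.mul_sum]; refine Finset.sum_congr rfl fun i _ => ?_
          rw [hBz]; ring
      _ = μ k := by rw [hnorm, mul_one]
  have hq2 : ∀ k, ∑ i, (∑ j, B i j * (v k j / s j)) ^ 2 / π i = μ k ^ 2 := by
    intro k
    calc _ = μ k ^ 2 * ∑ i, π i * (v k i / s i) ^ 2 := by
          rw [Finset.mul_sum]; refine Finset.sum_congr rfl fun i _ => ?_
          rw [hBz]
          have := (hπ i).ne'
          field_simp
      _ = μ k ^ 2 := by rw [hnorm, mul_one]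
  -- dichotomy
  have hdich : ∀ k, 0 < μ k → ∑ i, π i * (v k i / s i) * x i = 0 := by
    intro k hk
    have h1 : 1 ≤ μ k := by
      have := hboch (fun i => v k i / s i)
      rw [hq1, hq2] at this
      nlinarith
    set z : ι → ℝ := fun i => v k i / s i with hz
    have hzJ : ∀ i, ¬ J i → z i = 0 := by
      intro i hi
      have := hBz k i
      simp only [hJ i _ hi, zero_mul, Finset.sum_const_zero] at this
      have h3 : π i * z i = 0 := by
        rcases mul_eq_zero.1 this.symm with h | h
        · linarith
        · exact h
      exact (mul_eq_zero.1 h3).resolve_left (hπ i).ne'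
    have hle : ∑ i, (if J i then π i else 0) * z i ^ 2 = 1 := by
      rw [← hnorm k]
      refine Finset.sum_congr rfl fun i _ => ?_
      split_ifs with h
      · rfl
      · have := hzJ i h
        simp only [hz] at this
        simp [this]
    have h4 := hquad z
    rw [hle, hq1 k] at h4
    have h5 : 0 ≤ ∑ i, ∑ j, B i j * c i * c j * (z i / c i - z j / c j) ^ 2 :=
      Finset.sum_nonneg fun i _ => Finset.sum_nonneg fun j _ => hqnn z i j
    have h6 : ∑ i, ∑ j, B i j * c i * c j * (z i / c i - z j / c j) ^ 2 = 0 := by linarith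
    have h7 : ∀ i j, B i j * c i * c j * (z i / c i - z j / c j) ^ 2 = 0 := by
      intro i j
      have := (Finset.sum_eq_zero_iff_of_nonneg (fun i _ => Finset.sum_nonneg fun j _ => hqnn z i j)).1 h6 i (Finset.mem_univ _)
      exact (Finset.sum_eq_zero_iff_of_nonneg (fun j _ => hqnn z i j)).1 this j (Finset.mem_univ _)
    have h8 : ∃ t : ℝ, ∀ i, J i → z i = t * c i := by
      by_cases hne : ∃ i, J i
      · obtain ⟨i0, hi0⟩ := hne
        refine ⟨z i0 / c i0, fun i hi => ?_⟩
        have := hconn (fun i => z i / c i = z i0 / c i0) ⟨i0, hi0, rfl⟩ (by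
          intro i j _ _ h _ hB
          have h9 := h7 i j
          have h10 : 0 < B i j * c i * c j := mul_pos (mul_pos hB (hc i)) (hc j)
          have h11 := (mul_eq_zero.1 h9).resolve_left h10.ne'
          have h12 := pow_eq_zero_iff (two_ne_zero) |>.1 h11
          show z j / c j = _
          rw [← h]; linarith) i hi
        rw [← this]
        have := (hc i).ne'
        field_simp
      · exact ⟨0, fun i hi => (hne ⟨i, hi⟩).elim⟩
    obtain ⟨t, ht⟩ := h8
    have h9 : ∀ i, π i * z i = t * ∑ j, B i j * c j := by
      intro i
      by_cases hi : J i
      · rw [hBc i hi, ht i hi]; ring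
      · rw [hzJ i hi]; simp [hJ i _ hi]
    calc ∑ i, π i * z i * x i = t * ∑ i, c i * ∑ j, B i j * x j := by
          simp_rw [h9, Finset.mul_sum, Finset.sum_mul]
          rw [Finset.sum_comm]
          refine Finset.sum_congr rfl fun i _ => Finset.sum_congr rfl fun j _ => ?_
          rw [hsymm]; ring
      _ = 0 := by rw [hx, mul_zero]
  -- expansion
  let y : EuclideanSpace ℝ ι := WithLp.toLp 2 fun i => s i * x i
  have hy : ∀ i, y i = s i * x i := fun i => rfl
  have hexp : ∑ i, x i * ∑ j, B i j * x j = ∑ k, μ k * (⟪hA.eigenvectorBasis k, y⟫_ℝ) ^ 2 := by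
    have hyr : ∀ j, s j * x j = ∑ k, ⟪hA.eigenvectorBasis k, y⟫_ℝ * v k j := by
      intro j
      have := congrArg (fun w : EuclideanSpace ℝ ι => w j) (hA.eigenvectorBasis.sum_repr' y)
      simp only [] at this
      rw [← hy, ← this]
      simp [v]
    have hBx : ∀ i, ∑ j, B i j * x j = s i * ∑ k, ⟪hA.eigenvectorBasis k, y⟫_ℝ * μ k * v k i := by
      intro i
      have : ∀ j, B i j * x j = ∑ k, ⟪hA.eigenvectorBasis k, y⟫_ℝ * (B i j * (v k j / s j)) := by
        intro j
        have h1 : x j = (s j * x j) / s j := by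
          have := (hspos j).ne'
          field_simp
        rw [h1, hyr j, Finset.sum_div, Finset.mul_sum]
        refine Finset.sum_congr rfl fun k _ => by ring
      simp_rw [this]
      rw [Finset.sum_comm, Finset.mul_sum]
      refine Finset.sum_congr rfl fun k _ => ?_
      rw [← Finset.mul_sum, hBz, ← hssq i]
      have := (hspos i).ne'
      field_simp
    have hin : ∀ k, ⟪hA.eigenvectorBasis k, y⟫_ℝ = ∑ i, v k i * (s i * x i) := by
      intro k
      rw [PiLp.inner_apply]
      refine Finset.sum_congr rfl fun i _ => ?_
      simp [v, hy]; ring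
    simp_rw [hBx, Finset.mul_sum]
    rw [Finset.sum_comm]
    refine Finset.sum_congr rfl fun k _ => ?_
    rw [sq]
    nth_rewrite 3 [hin k]
    rw [Finset.mul_sum, Finset.mul_sum]
    refine Finset.sum_congr rfl fun i _ => by ring
  rw [hexp]
  refine Finset.sum_nonpos fun k _ => ?_
  by_cases hk : 0 < μ k
  · have h0 : ⟪hA.eigenvectorBasis k, y⟫_ℝ = 0 := by
      rw [← hdich k hk, PiLp.inner_apply]
      refine Finset.sum_congr rfl fun i _ => ?_
      rw [← hssq i]
      have := (hspos i).ne'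
      simp [v, hy]; field_simp
    rw [h0]; simp
  · exact mul_nonpos_of_nonpos_of_nonneg (not_lt.1 hk) (sq_nonneg _)

open scoped InnerProductSpace

abbrev EE (d : ℕ) := EuclideanSpace ℝ (Fin d)

noncomputable def detE (d : ℕ) : (EE d) [⋀^Fin d]→ₗ[ℝ] ℝ :=
  (EuclideanSpace.basisFun (Fin d) ℝ).toBasis.det

noncomputable def DD {n d : ℕ} (p : Fin n → EE d) (U : Finset (Fin n)) : ℝ :=
  if h : U.card = d then |detE d (fun i => p (U.orderEmbOfFin h i))| else 0

theorem DD_eq {n d : ℕ} (p : Fin n → EE d) (U : Finset (Fin n)) (f : Fin d → Fin n)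
    (hf : Function.Injective f) (hU : Finset.univ.image f = U) :
    DD p U = |detE d (fun i => p (f i))| := by
  have hcard : U.card = d := by
    rw [← hU, Finset.card_image_of_injective _ hf]; simp
  have hmem : ∀ i, f i ∈ U := fun i => by rw [← hU]; exact Finset.mem_image_of_mem _ (Finset.mem_univ _)
  let σ : Fin d → Fin d := fun i => (U.orderIsoOfFin hcard).symm ⟨f i, hmem i⟩
  have hσ : Function.Injective σ := by
    intro i j hij
    have := (U.orderIsoOfFin hcard).symm.injective hij
    exact hf (Subtype.ext_iff.1 this)
  let τ : Equiv.Perm (Fin d) := Equiv.ofBijective σ (Finite.injective_iff_bijective.1 hσ)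
  have hfe : (fun i => p (f i)) = (fun i => p (U.orderEmbOfFin hcard i)) ∘ τ := by
    funext i
    have : U.orderEmbOfFin hcard (τ i) = f i := by
      show (U.orderIsoOfFin hcard (σ i) : Fin n) = f i
      simp [σ]
    simp [this]
  rw [DD, dif_pos hcard, hfe, AlternatingMap.map_perm]
  rcases Int.units_eq_one_or (Equiv.Perm.sign τ) with h | h <;> simp [h]

theorem DD_ridge {n d : ℕ} (p : Fin n → EE d) (τ : Finset (Fin n)) (j k : Fin n)
    (hτ : τ.card + 1 = d) (hj : j ∉ τ) (hk : k ∉ τ) (r : ℝ) (a : Fin n → ℝ)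
    (hpk : p k = r • p j + ∑ i ∈ τ, a i • p i) :
    DD p (insert k τ) = |r| * DD p (insert j τ) := by
  subst hτ
  let e := τ.orderEmbOfFin rfl
  have key : ∀ j, j ∉ τ → DD p (insert j τ) = |detE _ (Function.update (fun i => p ((Fin.cons j e : Fin (τ.card+1) → Fin n) i)) 0 (p j))| := by
    intro j hj
    rw [DD_eq p (insert j τ) (Fin.cons j e)]
    · congr 2
      funext i
      refine Fin.cases ?_ (fun i => ?_) i <;> simp
    · rw [Fin.cons_injective_iff]
      exact ⟨by simpa [e] using hj, e.injective⟩
    · ext x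
      simp only [Finset.mem_image, Finset.mem_univ, true_and, Finset.mem_insert]
      rw [Fin.exists_fin_succ]
      simp only [Fin.cons_zero, Fin.cons_succ]
      have : (∃ i, e i = x) ↔ x ∈ τ := by
        have := Finset.range_orderEmbOfFin τ rfl
        rw [← Finset.mem_coe, ← this]; rfl
      rw [this]
      exact or_congr eq_comm Iff.rfl
  have hupd : ∀ w, Function.update (fun i => p ((Fin.cons k e : Fin (τ.card+1) → Fin n) i)) 0 w
      = Function.update (fun i => p ((Fin.cons j e : Fin (τ.card+1) → Fin n) i)) 0 w := by
    intro w
    funext i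
    refine Fin.cases ?_ (fun i => ?_) i
    · simp
    · simp
  rw [key k hk, key j hj, hupd, hpk, AlternatingMap.map_update_add, AlternatingMap.map_update_smul,
    AlternatingMap.map_update_sum]
  rw [Finset.sum_eq_zero, add_zero, smul_eq_mul, abs_mul]
  intro i hi
  rw [AlternatingMap.map_update_smul]
  obtain ⟨m, hm⟩ : ∃ m, e m = i := by
    have := Finset.range_orderEmbOfFin τ rfl
    have h2 : i ∈ Set.range e := by rw [this]; exact hi
    exact h2
  have : p i = (fun i => p ((Fin.cons j e : Fin (τ.card+1) → Fin n) i)) m.succ := by simp [hm]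
  rw [this, AlternatingMap.map_update_self _ _ (Fin.succ_ne_zero m).symm, smul_zero]

theorem exists_tight {n d : ℕ} {p : Fin n → EE d} {S : Finset (Fin n)}
    (h : LinearIndepOn ℝ p (S : Set (Fin n))) (c : Fin n → ℝ) :
    ∃ v : EE d, ∀ i ∈ S, ⟪v, p i⟫_ℝ = c i := by
  obtain ⟨g, hg⟩ := LinearMap.exists_leftInverse_of_injective
    (Finsupp.linearCombination ℝ (fun i : (S : Set (Fin n)) => p i))
    (LinearMap.ker_eq_bot.2 h)
  let f : EE d →ₗ[ℝ] ℝ := (Finsupp.linearCombination ℝ (fun i : (S : Set (Fin n)) => c i)) ∘ₗ g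
  refine ⟨(InnerProductSpace.toDual ℝ (EE d)).symm (LinearMap.toContinuousLinearMap f), fun i hi => ?_⟩
  rw [InnerProductSpace.toDual_symm_apply]
  have h2 : g (p i) = Finsupp.single ⟨i, hi⟩ 1 := by
    have := LinearMap.congr_fun hg (Finsupp.single ⟨i, hi⟩ 1)
    simpa using this
  simp [f, h2]

theorem exists_perp {n d : ℕ} (p : Fin n → EE d) (S : Finset (Fin n)) (h : S.card < d) :
    ∃ u : EE d, u ≠ 0 ∧ ∀ i ∈ S, ⟪u, p i⟫_ℝ = 0 := by
  have h1 : Module.finrank ℝ (Submodule.span ℝ (p '' S)) < Module.finrank ℝ (EE d) := by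
    rw [finrank_euclideanSpace_fin]
    have : Module.finrank ℝ (Submodule.span ℝ ((S.image p : Finset (EE d)) : Set (EE d))) ≤ (S.image p).card :=
      finrank_span_finset_le_card _
    have h2 := Finset.card_image_le (s := S) (f := p)
    rw [Finset.coe_image] at this
    omega
  have h2 : (Submodule.span ℝ (p '' S))ᗮ ≠ ⊥ := by
    intro h3
    rw [Submodule.orthogonal_eq_bot_iff] at h3
    rw [h3] at h1
    simp at h1
  obtain ⟨u, hu, hu0⟩ := Submodule.exists_mem_ne_zero_of_ne_bot h2
  refine ⟨u, hu0, fun i hi => ?_⟩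
  rw [Submodule.mem_orthogonal'] at hu
  exact hu _ (Submodule.subset_span ⟨i, hi, rfl⟩)

theorem card_le_of_indep {n d : ℕ} {p : Fin n → EE d} {S : Finset (Fin n)}
    (h : LinearIndepOn ℝ p (S : Set (Fin n))) : S.card ≤ d := by
  have := LinearIndependent.fintype_card_le_finrank (R := ℝ) (b := fun i : (S : Set (Fin n)) => p i) h
  simpa using this

theorem span_of_indep {n d : ℕ} {p : Fin n → EE d} {S : Finset (Fin n)}
    (h : LinearIndepOn ℝ p (S : Set (Fin n))) (hc : S.card = d) :
    Submodule.span ℝ (p '' S) = ⊤ := by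
  have h1 := LinearIndependent.span_eq_top_of_card_eq_finrank' (K := ℝ) (b := fun i : (S : Set (Fin n)) => p i) h
    (by simpa using hc)
  rw [← h1]; congr 1; ext x; simp

theorem perp_zero_of_indep {n d : ℕ} {p : Fin n → EE d} {S : Finset (Fin n)}
    (h : LinearIndepOn ℝ p (S : Set (Fin n))) (hc : S.card = d) (u : EE d)
    (hu : ∀ i ∈ S, ⟪u, p i⟫_ℝ = 0) : u = 0 := by
  have h1 : u ∈ (Submodule.span ℝ (p '' S))ᗮ := by
    rw [Submodule.mem_orthogonal']
    intro w hw
    induction hw using Submodule.span_induction with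
    | mem x hx => obtain ⟨i, hi, rfl⟩ := hx; exact hu i hi
    | zero => simp
    | add x y _ _ hx hy => rw [inner_add_right, hx, hy, add_zero]
    | smul a x _ hx => rw [inner_smul_right, hx, mul_zero]
  rw [span_of_indep h hc] at h1
  simpa using h1

theorem DD_pos {n d : ℕ} {p : Fin n → EE d} {S : Finset (Fin n)}
    (h : LinearIndepOn ℝ p (S : Set (Fin n))) (hc : S.card = d) : 0 < DD p S := by
  rw [DD, dif_pos hc, abs_pos]
  have hli : LinearIndependent ℝ (fun i => p (S.orderEmbOfFin hc i)) := by
    have := LinearIndependent.comp (R := ℝ) (v := fun i : (S : Set (Fin n)) => p i) h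
      (fun i => (⟨S.orderEmbOfFin hc i, S.orderEmbOfFin_mem hc i⟩ : (S : Set (Fin n))))
      (by intro i j hij; exact (S.orderEmbOfFin hc).injective (Subtype.ext_iff.1 hij))
    exact this
  have hsp : Submodule.span ℝ (Set.range fun i => p (S.orderEmbOfFin hc i)) = ⊤ :=
    hli.span_eq_top_of_card_eq_finrank' (by simp)
  exact ((Module.Basis.is_basis_iff_det (EuclideanSpace.basisFun (Fin d) ℝ).toBasis).1 ⟨hli, hsp⟩).ne_zero

open scoped InnerProductSpace
open Classical in
noncomputable def tv {n d : ℕ} (p : Fin n → EE d) (S : Finset (Fin n)) (c : Fin n → ℝ) : EE d :=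
  if h : ∃ v : EE d, ∀ i ∈ S, ⟪v, p i⟫_ℝ = c i then h.choose else 0

open Classical in
noncomputable def FF {n d : ℕ} (p : Fin n → EE d) (T : Finset (Fin n) → Prop) :
    List (Fin n → ℝ) → Finset (Fin n) → ℝ
  | [], S => if T S ∧ S.card = d then (DD p S)⁻¹ else 0
  | c :: L, S => if T S then ∑ j, (c j - ⟪tv p S c, p j⟫_ℝ) * FF p T L (insert j S) else 0

structure Fan {n d : ℕ} (p : Fin n → EE d) (T : Finset (Fin n) → Prop) : Prop where
  empty : T ∅
  down : ∀ S S', S' ⊆ S → T S → T S'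
  indep : ∀ S, T S → LinearIndepOn ℝ p (S : Set (Fin n))
  cover : ∀ S, T S → ∀ w : EE d, ∃ U, T U ∧ S ⊆ U ∧ ∃ l : Fin n → ℝ, (∀ i ∈ U, i ∉ S → 0 ≤ l i) ∧
    w = ∑ i ∈ U, l i • p i
  carrier : ∀ S U U' (l l' : Fin n → ℝ), T U → T U' → S ⊆ U → S ⊆ U' → (∀ i ∈ U, i ∉ S → 0 ≤ l i) →
    (∀ i ∈ U', i ∉ S → 0 ≤ l' i) → ∑ i ∈ U, l i • p i = ∑ i ∈ U', l' i • p i →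
    ∀ i ∈ U, i ∉ S → 0 < l i → i ∈ U'

section
variable {n d : ℕ} {p : Fin n → EE d} {T : Finset (Fin n) → Prop}

theorem mem_span_fin {p : Fin n → EE d} {S : Finset (Fin n)} {x : EE d}
    (h : x ∈ Submodule.span ℝ (p '' S)) : ∃ a : Fin n → ℝ, ∑ i ∈ S, a i • p i = x := by
  rw [Submodule.mem_span_image_finset_iff_exists_fun] at h
  obtain ⟨a, ha⟩ := h
  refine ⟨fun i => if h : i ∈ S then a ⟨i, h⟩ else 0, ?_⟩
  rw [← ha, ← Finset.sum_coe_sort S]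
  refine Finset.sum_congr rfl fun i _ => ?_
  simp

theorem Fan.tight (hF : Fan p T) {S : Finset (Fin n)} (hS : T S) (c : Fin n → ℝ) :
    ∀ i ∈ S, ⟪tv p S c, p i⟫_ℝ = c i := by
  have h := exists_tight (hF.indep S hS) c
  rw [tv, dif_pos h]
  exact h.choose_spec

theorem Fan.not_mem (hF : Fan p T) (L : List (Fin n → ℝ)) {S : Finset (Fin n)} (hS : ¬ T S) :
    FF p T L S = 0 := by
  cases L <;> simp [FF, hS]

theorem Fan.card_ne (hF : Fan p T) (L : List (Fin n → ℝ)) : ∀ {S : Finset (Fin n)},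
    S.card + L.length ≠ d → FF p T L S = 0 := by
  induction L with
  | nil => intro S h; simp only [List.length_nil, add_zero] at h; simp [FF, h]
  | cons c L ih =>
    intro S h
    by_cases hS : T S
    · rw [FF, if_pos hS]
      refine Finset.sum_eq_zero fun j _ => ?_
      by_cases hj : j ∈ S
      · rw [hF.tight hS c j hj]; simp
      · rw [ih, mul_zero]
        rw [Finset.card_insert_of_notMem hj]
        simp only [List.length_cons] at h
        omega
    · exact hF.not_mem _ hS

theorem Fan.side (hF : Fan p T) {S : Finset (Fin n)} (hS : T S) (u : EE d) (hu0 : u ≠ 0)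
    (hu : ∀ i ∈ S, ⟪u, p i⟫_ℝ = 0) : ∃ j, j ∉ S ∧ T (insert j S) ∧ 0 < ⟪u, p j⟫_ℝ := by
  obtain ⟨U, hU, hSU, l, hl, hw⟩ := hF.cover S hS u
  have h1 : 0 < ⟪u, u⟫_ℝ := real_inner_self_pos.2 hu0
  have h2 : ⟪u, u⟫_ℝ = ∑ i ∈ U, l i * ⟪u, p i⟫_ℝ := by
    have h3 : ⟪u, u⟫_ℝ = ⟪u, ∑ i ∈ U, l i • p i⟫_ℝ := by rw [← hw]
    rw [h3, inner_sum]
    simp [inner_smul_right]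
  rw [h2] at h1
  obtain ⟨i, hi, hpos⟩ := Finset.exists_lt_of_sum_lt (s := U) (f := fun _ => (0:ℝ)) (by simpa using h1)
  have hiS : i ∉ S := fun h => by rw [hu i h] at hpos; simp at hpos
  refine ⟨i, hiS, hF.down U _ (Finset.insert_subset hi hSU) hU, ?_⟩
  exact pos_of_mul_pos_right hpos (hl i hi hiS)

theorem Fan.pure (hF : Fan p T) {S : Finset (Fin n)} (hS : T S) (h : S.card < d) :
    ∃ j, j ∉ S ∧ T (insert j S) := by
  obtain ⟨u, hu0, hu⟩ := exists_perp p S h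
  obtain ⟨j, h1, h2, _⟩ := hF.side hS u hu0 hu
  exact ⟨j, h1, h2⟩

theorem Fan.ridge_coord (hF : Fan p T) {S : Finset (Fin n)} (hc : S.card + 1 = d) (u : EE d)
    (hu : ∀ i ∈ S, ⟪u, p i⟫_ℝ = 0) {j k : Fin n} (hj : j ∉ S) (hTj : T (insert j S))
    (huj : ⟪u, p j⟫_ℝ ≠ 0) : ∃ a : Fin n → ℝ,
      p k = (⟪u, p k⟫_ℝ / ⟪u, p j⟫_ℝ) • p j + ∑ i ∈ S, a i • p i := by
  have hsp := span_of_indep (hF.indep _ hTj) (by rw [Finset.card_insert_of_notMem hj, hc])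
  have hmem : p k ∈ Submodule.span ℝ (p '' (insert j S : Finset (Fin n))) := by rw [hsp]; trivial
  obtain ⟨a, ha⟩ := mem_span_fin hmem
  rw [Finset.sum_insert hj] at ha
  have h2 : ⟪u, p k⟫_ℝ = a j * ⟪u, p j⟫_ℝ := by
    rw [← ha, inner_add_right, inner_sum, Finset.sum_eq_zero, add_zero, inner_smul_right]
    intro i hi
    rw [inner_smul_right, hu i hi, mul_zero]
  refine ⟨a, ?_⟩
  rw [← ha]
  congr 2
  rw [ha, h2]; field_simp

theorem Fan.ridge_unique (hF : Fan p T) {S : Finset (Fin n)} (hc : S.card + 1 = d) (u : EE d)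
    (hu : ∀ i ∈ S, ⟪u, p i⟫_ℝ = 0) {j k : Fin n} (hj : j ∉ S) (hTj : T (insert j S))
    (hTk : T (insert k S)) (hjk : 0 < ⟪u, p j⟫_ℝ * ⟪u, p k⟫_ℝ) : j = k := by
  have huj : ⟪u, p j⟫_ℝ ≠ 0 := fun h => by simp [h] at hjk
  have huk : ⟪u, p k⟫_ℝ ≠ 0 := fun h => by simp [h] at hjk
  have hk : k ∉ S := fun h => huk (hu k h)
  obtain ⟨a, ha⟩ := hF.ridge_coord hc u hu (k := k) hj hTj huj
  have hr : 0 < ⟪u, p k⟫_ℝ / ⟪u, p j⟫_ℝ := by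
    rcases lt_or_gt_of_ne huj with h | h
    · exact div_pos_of_neg_of_neg (by nlinarith) h
    · exact div_pos (by nlinarith) h
  have := hF.carrier S (insert j S) (insert k S)
    (fun i => if i = j then ⟪u, p k⟫_ℝ / ⟪u, p j⟫_ℝ else a i) (fun i => if i = k then 1 else 0)
    hTj hTk (Finset.subset_insert _ _) (Finset.subset_insert _ _)
    (by
      intro i hi hiS
      have : i = j := by simpa [hiS] using hi
      simp only [this, if_true]; exact hr.le)
    (by intro i hi hiS; split_ifs <;> norm_num)
    (by
      rw [Finset.sum_insert hj, Finset.sum_insert hk]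
      have e1 : ∑ x ∈ S, (if x = j then ⟪u, p k⟫_ℝ / ⟪u, p j⟫_ℝ else a x) • p x = ∑ x ∈ S, a x • p x := by
        refine Finset.sum_congr rfl fun x hx => ?_
        rw [if_neg (by rintro rfl; exact hj hx)]
      have e2 : ∑ x ∈ S, (if x = k then (1:ℝ) else 0) • p x = 0 := by
        refine Finset.sum_eq_zero fun x hx => ?_
        rw [if_neg (by rintro rfl; exact hk hx), zero_smul]
      rw [e1, e2]; simp only [if_true, one_smul, add_zero]; exact ha.symm)
    j (Finset.mem_insert_self _ _) hj (by simpa using hr)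
  simpa [hj] using this

theorem Fan.balance_base (hF : Fan p T) {S : Finset (Fin n)} (hS : T S) (u : EE d)
    (hu : ∀ i ∈ S, ⟪u, p i⟫_ℝ = 0) : ∑ j, ⟪u, p j⟫_ℝ * FF p T [] (insert j S) = 0 := by
  by_cases hu0 : u = 0
  · simp [hu0]
  by_cases hc : S.card + 1 = d
  swap
  · refine Finset.sum_eq_zero fun j _ => ?_
    by_cases hj : j ∈ S
    · rw [hu j hj]; simp
    · rw [hF.card_ne, mul_zero]
      rw [Finset.card_insert_of_notMem hj]; simpa using hc
  obtain ⟨j, hj, hTj, huj⟩ := hF.side hS u hu0 hu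
  obtain ⟨k, hk, hTk, huk⟩ := hF.side hS (-u) (neg_ne_zero.2 hu0) (fun i hi => by rw [inner_neg_left, hu i hi, neg_zero])
  rw [inner_neg_left, neg_pos] at huk
  have hjk : j ≠ k := by rintro rfl; linarith
  rw [Finset.sum_eq_add j k hjk]
  · obtain ⟨a, ha⟩ := hF.ridge_coord hc u hu (k := k) hj hTj huj.ne'
    have hD := DD_ridge p S j k hc hj hk _ a ha
    have hDj := DD_pos (hF.indep _ hTj) (by rw [Finset.card_insert_of_notMem hj, hc])
    rw [FF, FF, if_pos ⟨hTj, by rw [Finset.card_insert_of_notMem hj, hc]⟩,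
      if_pos ⟨hTk, by rw [Finset.card_insert_of_notMem hk, hc]⟩, hD, abs_div, abs_of_neg huk, abs_of_pos huj]
    have := huk.ne
    field_simp
    ring
  · intro i _ hi
    by_contra hne
    have h1 : ⟪u, p i⟫_ℝ ≠ 0 := fun h => hne (by simp [h])
    have h2 : T (insert i S) := by
      by_contra h; exact hne (by rw [hF.not_mem _ h, mul_zero])
    rcases lt_or_gt_of_ne h1 with h | h
    · exact hi.2 (hF.ridge_unique hc u hu hk hTk h2 (mul_pos_of_neg_of_neg huk h)).symm
    · exact hi.1 (hF.ridge_unique hc u hu hj hTj h2 (mul_pos huj h)).symm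
  · simp
  · simp

/-- Independence of the choice of the tight vector, given balancing. -/
theorem Fan.cons_of_balance (hF : Fan p T) (L : List (Fin n → ℝ))
    (hb : ∀ {S : Finset (Fin n)}, T S → ∀ u : EE d, (∀ i ∈ S, ⟪u, p i⟫_ℝ = 0) →
      ∑ j, ⟪u, p j⟫_ℝ * FF p T L (insert j S) = 0)
    {S : Finset (Fin n)} (hS : T S) (c : Fin n → ℝ) (v : EE d) (hv : ∀ i ∈ S, ⟪v, p i⟫_ℝ = c i) :
    FF p T (c :: L) S = ∑ j, (c j - ⟪v, p j⟫_ℝ) * FF p T L (insert j S) := by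
  rw [FF, if_pos hS]
  have := hb hS (tv p S c - v) (fun i hi => by
    rw [inner_sub_left, hF.tight hS c i hi, hv i hi, sub_self])
  rw [← sub_eq_zero, ← Finset.sum_sub_distrib, ← neg_eq_zero, ← Finset.sum_neg_distrib, ← this]
  refine Finset.sum_congr rfl fun j _ => ?_
  rw [inner_sub_left]; ring

open Classical in
/-- dual vector of `j` relative to `S`. -/
noncomputable def dualv (p : Fin n → EE d) (S : Finset (Fin n)) (j : Fin n) : EE d :=
  tv p (insert j S) (fun i => if i = j then 1 else 0)

theorem Fan.dualv_self (hF : Fan p T) {S : Finset (Fin n)} {j : Fin n} (h : T (insert j S)) :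
    ⟪dualv p S j, p j⟫_ℝ = 1 := by
  rw [dualv, hF.tight h _ j (Finset.mem_insert_self _ _)]; simp

theorem Fan.dualv_S (hF : Fan p T) {S : Finset (Fin n)} {j : Fin n} (h : T (insert j S)) (hj : j ∉ S)
    {i : Fin n} (hi : i ∈ S) : ⟪dualv p S j, p i⟫_ℝ = 0 := by
  rw [dualv, hF.tight h _ i (Finset.mem_insert_of_mem hi), if_neg]
  rintro rfl; exact hj hi

theorem Fan.cons_insert (hF : Fan p T) (L : List (Fin n → ℝ))
    (hb : ∀ {S : Finset (Fin n)}, T S → ∀ u : EE d, (∀ i ∈ S, ⟪u, p i⟫_ℝ = 0) →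
      ∑ j, ⟪u, p j⟫_ℝ * FF p T L (insert j S) = 0)
    {S : Finset (Fin n)} (c : Fin n → ℝ) (v : EE d) (hv : ∀ i ∈ S, ⟪v, p i⟫_ℝ = c i)
    (j : Fin n) (hj : j ∉ S) :
    FF p T (c :: L) (insert j S) = ∑ k, ((c k - ⟪v, p k⟫_ℝ) - (c j - ⟪v, p j⟫_ℝ) * ⟪dualv p S j, p k⟫_ℝ)
      * FF p T L (insert j (insert k S)) := by
  by_cases hT : T (insert j S)
  · rw [hF.cons_of_balance L hb hT c (v + (c j - ⟪v, p j⟫_ℝ) • dualv p S j)]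
    · refine Finset.sum_congr rfl fun k _ => ?_
      rw [inner_add_left, real_inner_smul_left, Finset.insert_comm]; ring
    · intro i hi
      rw [inner_add_left, real_inner_smul_left]
      rcases Finset.mem_insert.1 hi with rfl | hi
      · rw [hF.dualv_self hT]; ring
      · rw [hF.dualv_S hT hj hi, hv i hi]; ring
  · rw [hF.not_mem _ hT, Finset.sum_eq_zero]
    intro k _
    rw [hF.not_mem, mul_zero]
    intro h
    exact hT (hF.down _ _ (Finset.insert_subset_insert _ (Finset.subset_insert _ _)) h)

theorem Fan.balance (hF : Fan p T) (L : List (Fin n → ℝ)) :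
    ∀ {S : Finset (Fin n)}, T S → ∀ u : EE d, (∀ i ∈ S, ⟪u, p i⟫_ℝ = 0) →
      ∑ j, ⟪u, p j⟫_ℝ * FF p T L (insert j S) = 0 := by
  induction L with
  | nil => intro S hS u hu; exact hF.balance_base hS u hu
  | cons c L ih =>
    intro S hS u hu
    have hv := hF.tight hS c
    set v := tv p S c
    have e1 : ∀ j, ⟪u, p j⟫_ℝ * FF p T (c :: L) (insert j S) =
        ∑ k, ⟪u, p j⟫_ℝ * (((c k - ⟪v, p k⟫_ℝ) - (c j - ⟪v, p j⟫_ℝ) * ⟪dualv p S j, p k⟫_ℝ)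
      * FF p T L (insert j (insert k S))) := by
      intro j
      by_cases hj : j ∈ S
      · rw [hu j hj]; simp
      · rw [hF.cons_insert L ih c v hv j hj, Finset.mul_sum]
    have e2 : ∀ j k, ⟪u, p j⟫_ℝ * (((c k - ⟪v, p k⟫_ℝ) - (c j - ⟪v, p j⟫_ℝ) * ⟪dualv p S j, p k⟫_ℝ)
      * FF p T L (insert j (insert k S))) = ⟪u, p j⟫_ℝ * (c k - ⟪v, p k⟫_ℝ) * FF p T L (insert j (insert k S))
        - ⟪u, p j⟫_ℝ * (c j - ⟪v, p j⟫_ℝ) * ⟪dualv p S j, p k⟫_ℝ * FF p T L (insert j (insert k S)) := by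
      intro j k; ring
    simp_rw [e1, e2, Finset.sum_sub_distrib]
    rw [Finset.sum_comm, ← Finset.sum_sub_distrib]
    refine Finset.sum_eq_zero fun k _ => ?_
    by_cases hk : k ∈ S
    · simp [hv k hk]
    by_cases hT : T (insert k S)
    · have := ih hT (u - ⟪u, p k⟫_ℝ • dualv p S k) (by
        intro i hi
        rw [inner_sub_left, real_inner_smul_left]
        rcases Finset.mem_insert.1 hi with rfl | hi
        · rw [hF.dualv_self hT]; ring
        · rw [hF.dualv_S hT hk hi, hu i hi]; ring)
      rw [← Finset.sum_sub_distrib]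
      rw [← mul_zero (c k - ⟪v, p k⟫_ℝ), ← this, Finset.mul_sum]
      refine Finset.sum_congr rfl fun j _ => ?_
      rw [inner_sub_left, real_inner_smul_left, Finset.insert_comm k j]; ring
    · have h0 : ∀ j, FF p T L (insert j (insert k S)) = 0 := fun j => hF.not_mem _ fun h =>
        hT (hF.down _ _ (Finset.subset_insert _ _) h)
      have h1 : ∀ j, FF p T L (insert k (insert j S)) = 0 := fun j => by rw [Finset.insert_comm]; exact h0 j
      simp [h0, h1]

theorem Fan.cons (hF : Fan p T) (L : List (Fin n → ℝ)) {S : Finset (Fin n)} (hS : T S)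
    (c : Fin n → ℝ) (v : EE d) (hv : ∀ i ∈ S, ⟪v, p i⟫_ℝ = c i) :
    FF p T (c :: L) S = ∑ j, (c j - ⟪v, p j⟫_ℝ) * FF p T L (insert j S) :=
  hF.cons_of_balance L (hF.balance L) hS c v hv

theorem Fan.linear_first (hF : Fan p T) (L : List (Fin n → ℝ)) (S : Finset (Fin n)) (s : ℝ)
    (a b : Fin n → ℝ) : FF p T ((a + s • b) :: L) S = FF p T (a :: L) S + s * FF p T (b :: L) S := by
  by_cases hS : T S
  · have ha := hF.tight hS a
    have hb := hF.tight hS b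
    rw [hF.cons L hS (a + s • b) (tv p S a + s • tv p S b), hF.cons L hS a _ ha, hF.cons L hS b _ hb,
      Finset.mul_sum, ← Finset.sum_add_distrib]
    · refine Finset.sum_congr rfl fun j _ => ?_
      rw [inner_add_left, real_inner_smul_left]; simp; ring
    · intro i hi
      rw [inner_add_left, real_inner_smul_left, ha i hi, hb i hi]; simp
  · simp [hF.not_mem _ hS]

theorem Fan.kills (hF : Fan p T) (L : List (Fin n → ℝ)) (S : Finset (Fin n)) (v : EE d) :
    FF p T ((fun i => ⟪v, p i⟫_ℝ) :: L) S = 0 := by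
  by_cases hS : T S
  · rw [hF.cons L hS _ v (fun i _ => rfl)]; simp
  · exact hF.not_mem _ hS

theorem Fan.swap (hF : Fan p T) (L : List (Fin n → ℝ)) (S : Finset (Fin n)) (a b : Fin n → ℝ) :
    FF p T (a :: b :: L) S = FF p T (b :: a :: L) S := by
  by_cases hS : T S
  swap
  · simp [hF.not_mem _ hS]
  have key : ∀ a b : Fin n → ℝ, FF p T (a :: b :: L) S =
      ∑ j, ∑ k, (a j - ⟪tv p S a, p j⟫_ℝ) * (b k - ⟪tv p S b, p k⟫_ℝ) * FF p T L (insert j (insert k S))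
      - ∑ j, ∑ k, (a j - ⟪tv p S a, p j⟫_ℝ) * (b j - ⟪tv p S b, p j⟫_ℝ) * ⟪dualv p S j, p k⟫_ℝ * FF p T L (insert j (insert k S)) := by
    intro a b
    rw [hF.cons _ hS a _ (hF.tight hS a), ← Finset.sum_sub_distrib]
    refine Finset.sum_congr rfl fun j _ => ?_
    by_cases hj : j ∈ S
    · simp [hF.tight hS a j hj]
    · rw [hF.cons_insert L (hF.balance L) b _ (hF.tight hS b) j hj, Finset.mul_sum, ← Finset.sum_sub_distrib]
      refine Finset.sum_congr rfl fun k _ => ?_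
      ring
  rw [key a b, key b a]
  congr 1
  · rw [Finset.sum_comm]
    refine Finset.sum_congr rfl fun j _ => Finset.sum_congr rfl fun k _ => ?_
    rw [Finset.insert_comm]; ring
  · refine Finset.sum_congr rfl fun j _ => Finset.sum_congr rfl fun k _ => ?_
    ring

theorem Fan.perm (hF : Fan p T) {L L' : List (Fin n → ℝ)} (h : L.Perm L') :
    ∀ S, FF p T L S = FF p T L' S := by
  induction h with
  | nil => intro S; rfl
  | cons c _ ih =>
    intro S
    simp only [FF, ih]
  | swap a b L => intro S; exact (hF.swap _ _ _ _)
  | trans _ _ ih1 ih2 => intro S; rw [ih1, ih2]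

theorem Fan.single (hF : Fan p T) (L : List (Fin n → ℝ)) {S : Finset (Fin n)} {j : Fin n} (hj : j ∉ S) :
    FF p T (Pi.single j 1 :: L) S = FF p T L (insert j S) := by
  by_cases hS : T S
  · rw [hF.cons L hS _ 0]
    · rw [Finset.sum_eq_single j]
      · simp
      · intro k _ hk; simp [hk]
      · simp
    · intro i hi
      rw [inner_zero_left, Pi.single_eq_of_ne]
      rintro rfl; exact hj hi
  · rw [hF.not_mem _ hS, hF.not_mem]
    intro h; exact hS (hF.down _ _ (Finset.subset_insert _ _) h)
end

open scoped InnerProductSpace Topology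
open Filter

theorem small_pos {n : ℕ} (f g : Fin n → ℝ) : ∃ δ : ℝ, 0 < δ ∧ ∀ i, 0 < f i → 0 < f i + δ * g i := by
  have h : ∀ᶠ δ : ℝ in 𝓝[>] (0:ℝ), ∀ i, 0 < f i → 0 < f i + δ * g i := by
    rw [Filter.eventually_all]
    intro i
    by_cases hi : 0 < f i
    · have hc : Tendsto (fun δ : ℝ => f i + δ * g i) (𝓝[>] (0:ℝ)) (𝓝 (f i + 0 * g i)) :=
        ((by fun_prop : Continuous fun δ : ℝ => f i + δ * g i).tendsto 0).mono_left nhdsWithin_le_nhds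
      rw [zero_mul, add_zero] at hc
      filter_upwards [hc.eventually (lt_mem_nhds hi)] with δ h _ using h
    · exact Eventually.of_forall fun δ h => (hi h).elim
  obtain ⟨δ, h1, h2⟩ := (h.and self_mem_nhdsWithin).exists
  exact ⟨δ, h2, h1⟩

theorem spanning_bound {n d : ℕ} (p : Fin n → EE d) (hspan : ∀ u : EE d, u ≠ 0 → ∃ i, 0 < ⟪u, p i⟫_ℝ) :
    ∃ m : ℝ, 0 < m ∧ ∀ v : EE d, m * ‖v‖ ≤ ∑ i, max ⟪v, p i⟫_ℝ 0 := by
  have hcont : Continuous fun v : EE d => ∑ i, max ⟪v, p i⟫_ℝ 0 := by fun_prop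
  by_cases hne : (Metric.sphere (0 : EE d) 1).Nonempty
  · obtain ⟨u, hu, hmin⟩ := (isCompact_sphere (0 : EE d) 1).exists_isMinOn hne hcont.continuousOn
    have hu0 : u ≠ 0 := by
      rintro rfl; simp at hu
    refine ⟨∑ i, max ⟪u, p i⟫_ℝ 0, ?_, fun v => ?_⟩
    · obtain ⟨i, hi⟩ := hspan u hu0
      exact Finset.sum_pos' (fun i _ => le_max_right _ _) ⟨i, Finset.mem_univ _, lt_max_of_lt_left hi⟩
    · by_cases hv : v = 0
      · simp [hv]
      · have hnv : 0 < ‖v‖ := norm_pos_iff.2 hv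
        have h1 : (‖v‖⁻¹ • v) ∈ Metric.sphere (0 : EE d) 1 := by
          simp [norm_smul, hnv.ne']
        have h2 := hmin h1
        simp only [Set.mem_ofPred_eq] at h2
        calc _ ≤ (∑ i, max ⟪‖v‖⁻¹ • v, p i⟫_ℝ 0) * ‖v‖ := by gcongr
          _ = _ := by
            rw [Finset.sum_mul]
            refine Finset.sum_congr rfl fun i _ => ?_
            rw [real_inner_smul_left, max_mul_of_nonneg _ _ hnv.le]
            field_simp
            simp
  · refine ⟨1, one_pos, fun v => ?_⟩
    have hv : v = 0 := by
      by_contra hv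
      exact hne ⟨‖v‖⁻¹ • v, by simp [norm_smul, (norm_pos_iff.2 hv).ne']⟩
    simp [hv]

def TT {n d : ℕ} (p : Fin n → EE d) (c : Fin n → ℝ) (S : Finset (Fin n)) : Prop :=
  ∃ v : EE d, (∀ i ∈ S, ⟪v, p i⟫_ℝ = c i) ∧ ∀ i, i ∉ S → ⟪v, p i⟫_ℝ < c i

theorem fan_of {n d : ℕ} (p : Fin n → EE d) (c : Fin n → ℝ)
    (hspan : ∀ u : EE d, u ≠ 0 → ∃ i, 0 < ⟪u, p i⟫_ℝ)
    (h0 : TT p c ∅) (hind : ∀ S, TT p c S → LinearIndepOn ℝ p (S : Set (Fin n))) :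
    Fan p (TT p c) where
  empty := h0
  indep := hind
  down := by
    intro S S' hSS hS
    obtain ⟨w, hw⟩ := exists_tight (hind S hS) (fun i => if i ∈ S' then 0 else 1)
    obtain ⟨v, hv1, hv2⟩ := hS
    obtain ⟨δ, hδ, h⟩ := small_pos (fun i => c i - ⟪v, p i⟫_ℝ) (fun i => ⟪w, p i⟫_ℝ)
    refine ⟨v - δ • w, fun i hi => ?_, fun i hi => ?_⟩
    · rw [inner_sub_left, real_inner_smul_left, hv1 i (hSS hi), hw i (hSS hi), if_pos hi]; ring
    · rw [inner_sub_left, real_inner_smul_left]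
      by_cases hiS : i ∈ S
      · rw [hv1 i hiS, hw i hiS, if_neg hi]; linarith
      · have := h i (by linarith [hv2 i hiS])
        linarith
  cover := by
    intro S hS w
    obtain ⟨m, hm, hbd⟩ := spanning_bound p hspan
    let K : Set (EE d) := {v | (∀ i ∈ S, ⟪v, p i⟫_ℝ = c i) ∧ ∀ i, ⟪v, p i⟫_ℝ ≤ c i}
    have hKc : IsClosed K := by
      have : K = (⋂ i ∈ S, {v : EE d | ⟪v, p i⟫_ℝ = c i}) ∩ ⋂ i, {v : EE d | ⟪v, p i⟫_ℝ ≤ c i} := by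
        ext v; simp [K]
      rw [this]
      refine IsClosed.inter ?_ ?_
      · exact isClosed_biInter fun i _ => isClosed_eq (by fun_prop) continuous_const
      · exact isClosed_iInter fun i => isClosed_le (by fun_prop) continuous_const
    have hKb : K ⊆ Metric.closedBall 0 ((∑ i, max (c i) 0) / m) := by
      intro v hv
      rw [mem_closedBall_zero_iff, le_div_iff₀ hm, mul_comm]
      refine (hbd v).trans (Finset.sum_le_sum fun i _ => max_le_max (hv.2 i) le_rfl)
    have hKcomp : IsCompact K := (isCompact_closedBall _ _).of_isClosed_subset hKc hKb
    have hKne : K.Nonempty := by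
      obtain ⟨v, hv1, hv2⟩ := hS
      refine ⟨v, hv1, fun i => ?_⟩
      by_cases hi : i ∈ S
      · exact (hv1 i hi).le
      · exact (hv2 i hi).le
    obtain ⟨v, hvK, hmax⟩ := hKcomp.exists_isMaxOn hKne
      (by fun_prop : Continuous fun v : EE d => ⟪w, v⟫_ℝ).continuousOn
    let U : Finset (Fin n) := Finset.univ.filter fun i => ⟪v, p i⟫_ℝ = c i
    have hUmem : ∀ i, i ∈ U ↔ ⟪v, p i⟫_ℝ = c i := fun i => by simp [U]
    have hTU : TT p c U := ⟨v, fun i hi => (hUmem i).1 hi, fun i hi =>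
      lt_of_le_of_ne (hvK.2 i) fun h => hi ((hUmem i).2 h)⟩
    have hSU : S ⊆ U := fun i hi => (hUmem i).2 (hvK.1 i hi)
    have hopt : ∀ z : EE d, (∀ i ∈ S, ⟪z, p i⟫_ℝ = 0) → (∀ i ∈ U, ⟪z, p i⟫_ℝ ≤ 0) → ⟪w, z⟫_ℝ ≤ 0 := by
      intro z hz1 hz2
      obtain ⟨δ, hδ, h⟩ := small_pos (fun i => c i - ⟪v, p i⟫_ℝ) (fun i => -⟪z, p i⟫_ℝ)
      have : v + δ • z ∈ K := by
        refine ⟨fun i hi => ?_, fun i => ?_⟩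
        · rw [inner_add_left, real_inner_smul_left, hvK.1 i hi, hz1 i hi]; ring
        · rw [inner_add_left, real_inner_smul_left]
          by_cases hi : i ∈ U
          · have := hz2 i hi
            have := (hUmem i).1 hi
            nlinarith
          · have h3 : 0 < c i - ⟪v, p i⟫_ℝ := by
              have := lt_of_le_of_ne (hvK.2 i) fun h => hi ((hUmem i).2 h)
              linarith
            have := h i h3
            linarith
      have h2 := hmax this
      simp only [Set.mem_ofPred_eq, inner_add_right, inner_smul_right] at h2
      nlinarith
    have hwspan : w ∈ Submodule.span ℝ (p '' U) := by
      set W := Submodule.span ℝ (p '' U)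
      obtain ⟨a, ha, u, hu, hsum⟩ := Submodule.exists_add_mem_mem_orthogonal (K := W) w
      have hup : ∀ i ∈ U, ⟪u, p i⟫_ℝ = 0 := fun i hi =>
        (Submodule.mem_orthogonal' W u).1 hu _ (Submodule.subset_span ⟨i, hi, rfl⟩)
      have h1 := hopt u (fun i hi => hup i (hSU hi)) (fun i hi => (hup i hi).le)
      rw [hsum, inner_add_left, Submodule.inner_right_of_mem_orthogonal ha hu, zero_add] at h1
      have hu0 : u = 0 := by
        by_contra h
        exact absurd h1 (not_le.2 (real_inner_self_pos.2 h))
      rw [hsum, hu0, add_zero]; exact ha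
    obtain ⟨l, hl⟩ := mem_span_fin hwspan
    refine ⟨U, hTU, hSU, l, fun i hi hiS => ?_, hl.symm⟩
    obtain ⟨e, he⟩ := exists_tight (hind U hTU) (fun k => if k = i then -1 else 0)
    have h1 := hopt e (fun k hk => by
      rw [he k (hSU hk), if_neg]; rintro rfl; exact hiS hk) (fun k hk => by
      rw [he k hk]; split_ifs <;> norm_num)
    rw [← hl, sum_inner, Finset.sum_eq_single i] at h1
    · rw [real_inner_smul_left, real_inner_comm, he i hi, if_pos rfl] at h1
      linarith
    · intro k hk hki
      rw [real_inner_smul_left, real_inner_comm, he k hk, if_neg hki, mul_zero]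
    · intro h; exact (h hi).elim
  carrier := by
    intro S U U' l l' hU hU' hSU hSU' hl hl' heq i hi hiS hli
    obtain ⟨v, hv1, hv2⟩ := hU
    obtain ⟨v', hv1', hv2'⟩ := hU'
    have hle : ∀ k, ⟪v, p k⟫_ℝ ≤ c k := fun k => by
      by_cases hk : k ∈ U
      · exact (hv1 k hk).le
      · exact (hv2 k hk).le
    have hle' : ∀ k, ⟪v', p k⟫_ℝ ≤ c k := fun k => by
      by_cases hk : k ∈ U'
      · exact (hv1' k hk).le
      · exact (hv2' k hk).le
    have h1 : ⟪v - v', ∑ i ∈ U, l i • p i⟫_ℝ = ⟪v - v', ∑ i ∈ U', l' i • p i⟫_ℝ := by rw [heq]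
    simp only [inner_sum, inner_smul_right, inner_sub_left] at h1
    have h2 : ∀ k ∈ U, 0 ≤ l k * (⟪v, p k⟫_ℝ - ⟪v', p k⟫_ℝ) := by
      intro k hk
      by_cases hkS : k ∈ S
      · rw [hv1 k hk, hv1' k (hSU' hkS)]; simp
      · rw [hv1 k hk]; exact mul_nonneg (hl k hk hkS) (by linarith [hle' k])
    have h3 : ∑ k ∈ U', l' k * (⟪v, p k⟫_ℝ - ⟪v', p k⟫_ℝ) ≤ 0 := by
      refine Finset.sum_nonpos fun k hk => ?_
      by_cases hkS : k ∈ S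
      · rw [hv1 k (hSU hkS), hv1' k hk]; simp
      · rw [hv1' k hk]; exact mul_nonpos_of_nonneg_of_nonpos (hl' k hk hkS) (by linarith [hle k])
    have h4 : ∑ k ∈ U, l k * (⟪v, p k⟫_ℝ - ⟪v', p k⟫_ℝ) = 0 :=
      le_antisymm (h1.trans_le h3) (Finset.sum_nonneg h2)
    have h5 := (Finset.sum_eq_zero_iff_of_nonneg h2).1 h4 i hi
    by_contra hiU'
    have h6 := hv2' i hiU'
    rw [hv1 i hi] at h5
    rcases mul_eq_zero.1 h5 with h | h <;> linarith

section
variable {n d : ℕ} {p : Fin n → EE d} {T : Finset (Fin n) → Prop}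

def Amp (p : Fin n → EE d) (T : Finset (Fin n) → Prop) (c : Fin n → ℝ) : Prop :=
  ∀ S, T S → ∃ v : EE d, (∀ i ∈ S, ⟪v, p i⟫_ℝ = c i) ∧ ∀ i, i ∉ S → ⟪v, p i⟫_ℝ < c i

def Nef (p : Fin n → EE d) (T : Finset (Fin n) → Prop) (c : Fin n → ℝ) : Prop :=
  ∀ S, T S → ∃ v : EE d, (∀ i ∈ S, ⟪v, p i⟫_ℝ = c i) ∧ ∀ i, ⟪v, p i⟫_ℝ ≤ c i

theorem amp_TT (p : Fin n → EE d) (c : Fin n → ℝ) : Amp p (TT p c) c := fun _ hS => hS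

theorem Amp.nef {c : Fin n → ℝ} (h : Amp p T c) : Nef p T c := by
  intro S hS
  obtain ⟨v, h1, h2⟩ := h S hS
  refine ⟨v, h1, fun i => ?_⟩
  by_cases hi : i ∈ S
  · exact (h1 i hi).le
  · exact (h2 i hi).le

theorem Nef.add_amp {b c : Fin n → ℝ} (hb : Amp p T b) (hc : Nef p T c) {t : ℝ} (ht : 0 < t) :
    Amp p T (c + t • b) := by
  intro S hS
  obtain ⟨v, h1, h2⟩ := hb S hS
  obtain ⟨w, h3, h4⟩ := hc S hS
  refine ⟨w + t • v, fun i hi => ?_, fun i hi => ?_⟩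
  · rw [inner_add_left, real_inner_smul_left, h1 i hi, h3 i hi]; simp
  · rw [inner_add_left, real_inner_smul_left]
    simp only [Pi.add_apply, Pi.smul_apply, smul_eq_mul]
    have := mul_lt_mul_of_pos_left (h2 i hi) ht
    linarith [h4 i]

theorem Fan.nonneg (hF : Fan p T) (L : List (Fin n → ℝ)) : ∀ (_ : ∀ c ∈ L, Nef p T c) (S : Finset (Fin n)),
    0 ≤ FF p T L S := by
  induction L with
  | nil =>
    intro _ S
    rw [FF]; split_ifs
    · rw [DD]; split_ifs
      · positivity
      · simp
    · exact le_rfl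
  | cons c L ih =>
    intro h S
    by_cases hS : T S
    · obtain ⟨v, h1, h2⟩ := h c (by simp) S hS
      rw [hF.cons L hS c v h1]
      exact Finset.sum_nonneg fun j _ => mul_nonneg (by linarith [h2 j]) (ih (fun c hc => h c (by simp [hc])) _)
    · rw [hF.not_mem _ hS]

theorem Fan.pos (hF : Fan p T) (L : List (Fin n → ℝ)) : ∀ (_ : ∀ c ∈ L, Amp p T c) (S : Finset (Fin n)),
    T S → S.card + L.length = d → 0 < FF p T L S := by
  induction L with
  | nil =>
    intro _ S hS hc
    simp only [List.length_nil, add_zero] at hc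
    rw [FF, if_pos ⟨hS, hc⟩]
    exact inv_pos.2 (DD_pos (hF.indep S hS) hc)
  | cons c L ih =>
    intro h S hS hc
    obtain ⟨v, h1, h2⟩ := h c (by simp) S hS
    simp only [List.length_cons] at hc
    obtain ⟨j, hj, hTj⟩ := hF.pure hS (by omega)
    rw [hF.cons L hS c v h1]
    refine Finset.sum_pos' (fun k _ => ?_) ⟨j, Finset.mem_univ _, ?_⟩
    · refine mul_nonneg ?_ (hF.nonneg L (fun c hc => (h c (by simp [hc])).nef) _)
      by_cases hk : k ∈ S
      · rw [h1 k hk]; simp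
      · linarith [h2 k hk]
    · refine mul_pos (by linarith [h2 j hj]) (ih (fun c hc => h c (by simp [hc])) _ hTj ?_)
      rw [Finset.card_insert_of_notMem hj]; omega

theorem Fan.conn (hF : Fan p T) {S : Finset (Fin n)} (hS : T S) (hc : S.card + 2 ≤ d) (I : Fin n → Prop)
    (hne : ∃ i, i ∉ S ∧ T (insert i S) ∧ I i)
    (hcl : ∀ j k, j ∉ S → k ∉ S → j ≠ k → T (insert k (insert j S)) → I j → I k) :
    ∀ j, j ∉ S → T (insert j S) → I j := by
  classical
  by_contra hcon
  push Not at hcon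
  obtain ⟨j1, hj1, hTj1, hIj1⟩ := hcon
  obtain ⟨i0, hi0, hTi0, hIi0⟩ := hne
  set W := Submodule.span ℝ (p '' (S : Set (Fin n))) with hW
  let V := Wᗮ
  have hVp : ∀ u ∈ V, ∀ i ∈ S, ⟪u, p i⟫_ℝ = 0 := fun u hu i hi =>
    (Submodule.mem_orthogonal' W u).1 hu _ (Submodule.subset_span ⟨i, hi, rfl⟩)
  have hpV : ∀ u, (∀ i ∈ S, ⟪u, p i⟫_ℝ = 0) → u ∈ V := by
    intro u hu
    rw [Submodule.mem_orthogonal']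
    intro w hw
    obtain ⟨a, rfl⟩ := mem_span_fin hw
    rw [inner_sum]
    exact Finset.sum_eq_zero fun i hi => by rw [inner_smul_right, hu i hi, mul_zero]
  have hrank : 1 < Module.rank ℝ V := by
    have h1 : Module.finrank ℝ W ≤ S.card := by
      have : Module.finrank ℝ (Submodule.span ℝ ((S.image p : Finset (EE d)) : Set (EE d))) ≤ (S.image p).card :=
        finrank_span_finset_le_card _
      have h2 := Finset.card_image_le (s := S) (f := p)
      rw [Finset.coe_image] at this
      exact this.trans h2
    have h2 := Submodule.finrank_add_finrank_orthogonal W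
    rw [finrank_euclideanSpace_fin] at h2
    have h3 : 1 < Module.finrank ℝ V := by
      have : Module.finrank ℝ V = Module.finrank ℝ Wᗮ := rfl
      omega
    rw [← Module.finrank_eq_rank]; exact_mod_cast h3
  have hpre : IsPreconnected ({0}ᶜ : Set V) := (isConnected_compl_singleton_of_one_lt_rank hrank 0).isPreconnected
  let δ : Finset (Fin n) → Fin n → EE d := fun U i => tv p U (fun k => if k = i then 1 else 0)
  have hδ : ∀ U, T U → ∀ i ∈ U, ∀ k ∈ U, ⟪δ U i, p k⟫_ℝ = if k = i then 1 else 0 := fun U hU i hi k hk =>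
    hF.tight hU _ k hk
  let C : Finset (Fin n) → Set V := fun U => {u | (u : EE d) ∈ Submodule.span ℝ (p '' (U : Set (Fin n))) ∧
    ∀ i ∈ U, i ∉ S → 0 ≤ ⟪δ U i, (u : EE d)⟫_ℝ}
  have hCc : ∀ U, IsClosed (C U) := by
    intro U
    have : C U = ((↑) : V → EE d) ⁻¹' (Submodule.span ℝ (p '' (U : Set (Fin n))) : Set (EE d)) ∩
        ⋂ i ∈ U, ⋂ (_ : i ∉ S), {u : V | 0 ≤ ⟪δ U i, (u : EE d)⟫_ℝ} := by
      ext u; simp [C]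
    rw [this]
    refine IsClosed.inter ?_ ?_
    · exact (Submodule.closed_of_finiteDimensional _).preimage continuous_subtype_val
    · exact isClosed_biInter fun i _ => isClosed_iInter fun _ => isClosed_le continuous_const (by fun_prop)
  have hrep : ∀ U, T U → ∀ u ∈ C U, (u : EE d) = ∑ i ∈ U, ⟪δ U i, (u : EE d)⟫_ℝ • p i := by
    intro U hU u hu
    obtain ⟨a, ha⟩ := mem_span_fin hu.1
    rw [← ha]
    refine Finset.sum_congr rfl fun i hi => ?_
    congr 1
    rw [inner_sum, Finset.sum_eq_single i]
    · rw [inner_smul_right, hδ U hU i hi i hi]; simp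
    · intro k hk hki
      rw [inner_smul_right, hδ U hU i hi k hk, if_neg hki, mul_zero]
    · intro h; exact (h hi).elim
  let A : Set V := ⋃ U ∈ {U : Finset (Fin n) | T U ∧ S ⊆ U ∧ ∃ i ∈ U, i ∉ S ∧ I i}, C U
  let A' : Set V := ⋃ U ∈ {U : Finset (Fin n) | T U ∧ S ⊆ U ∧ ∀ i ∈ U, i ∉ S → ¬ I i}, C U
  have hAc : IsClosed A := (Set.toFinite _).isClosed_biUnion fun U _ => hCc U
  have hAc' : IsClosed A' := (Set.toFinite _).isClosed_biUnion fun U _ => hCc U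
  have hcov : ({0}ᶜ : Set V) ⊆ A ∪ A' := by
    intro u _
    obtain ⟨U, hU, hSU, l, hl, hu⟩ := hF.cover S hS u
    have huC : u ∈ C U := by
      constructor
      · rw [hu]
        exact Submodule.sum_mem _ fun i hi => Submodule.smul_mem _ _ (Submodule.subset_span ⟨i, hi, rfl⟩)
      · intro i hi hiS
        rw [hu, inner_sum, Finset.sum_eq_single i]
        · rw [inner_smul_right, hδ U hU i hi i hi]; simpa using hl i hi hiS
        · intro k hk hki
          rw [inner_smul_right, hδ U hU i hi k hk, if_neg hki, mul_zero]
        · intro h; exact (h hi).elim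
    by_cases h : ∃ i ∈ U, i ∉ S ∧ I i
    · left; exact Set.mem_biUnion (show U ∈ _ from ⟨hU, hSU, h⟩) huC
    · right; push Not at h; exact Set.mem_biUnion (show U ∈ _ from ⟨hU, hSU, h⟩) huC
  have hproj : ∀ j, j ∉ S → T (insert j S) → ∃ u : V, u ≠ 0 ∧ u ∈ C (insert j S) := by
    intro j hj hT
    obtain ⟨a, ha, u, hu, hsum⟩ := Submodule.exists_add_mem_mem_orthogonal (K := W) (p j)
    have hdS : ∀ i ∈ S, ⟪δ (insert j S) j, p i⟫_ℝ = 0 := by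
      intro i hi
      rw [hδ _ hT j (by simp) i (by simp [hi]), if_neg]; rintro rfl; exact hj hi
    have hda : ⟪δ (insert j S) j, a⟫_ℝ = 0 := by
      rw [real_inner_comm]
      exact (Submodule.mem_orthogonal W _).1 (hpV _ hdS) a ha
    have hdu : ⟪δ (insert j S) j, u⟫_ℝ = 1 := by
      have h1 : ⟪δ (insert j S) j, p j⟫_ℝ = 1 := by rw [hδ _ hT j (by simp) j (by simp)]; simp
      rw [hsum, inner_add_right, hda, zero_add] at h1
      exact h1
    refine ⟨⟨u, hu⟩, ?_, ?_, ?_⟩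
    · intro h
      have : u = 0 := congrArg Subtype.val h
      rw [this] at hdu; simp at hdu
    · have : u = p j - a := by rw [hsum]; simp
      show u ∈ _
      rw [this]
      refine Submodule.sub_mem _ (Submodule.subset_span ⟨j, by simp, rfl⟩) ?_
      exact Submodule.span_mono (Set.image_mono (by simp)) ha
    · intro i hi hiS
      have : i = j := by simpa [hiS] using hi
      subst this
      show 0 ≤ ⟪_, u⟫_ℝ
      rw [hdu]; norm_num
  obtain ⟨u, hu0, huA, huA'⟩ : (({0}ᶜ : Set V) ∩ (A ∩ A')).Nonempty := by
    refine isPreconnected_closed_iff.1 hpre A A' hAc hAc' hcov ?_ ?_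
    · obtain ⟨u, h1, h2⟩ := hproj i0 hi0 hTi0
      exact ⟨u, h1, Set.mem_biUnion (show insert i0 S ∈ _ from ⟨hTi0, Finset.subset_insert _ _, i0, by simp, hi0, hIi0⟩) h2⟩
    · obtain ⟨u, h1, h2⟩ := hproj j1 hj1 hTj1
      refine ⟨u, h1, Set.mem_biUnion (show insert j1 S ∈ _ from ⟨hTj1, Finset.subset_insert _ _, fun i hi hiS => ?_⟩) h2⟩
      have : i = j1 := by simpa [hiS] using hi
      rw [this]; exact hIj1
  obtain ⟨U, ⟨hU, hSU, i', hi'U, hi'S, hIi'⟩, huU⟩ := Set.mem_iUnion₂.1 huA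
  obtain ⟨U', ⟨hU', hSU', hI'⟩, huU'⟩ := Set.mem_iUnion₂.1 huA'
  have hr := hrep U hU u huU
  have hr' := hrep U' hU' u huU'
  obtain ⟨i, hiU, hiS, hpos⟩ : ∃ i ∈ U, i ∉ S ∧ 0 < ⟪δ U i, (u : EE d)⟫_ℝ := by
    by_contra h
    push Not at h
    apply hu0
    have h1 : ⟪(u : EE d), (u : EE d)⟫_ℝ = ⟪(u : EE d), ∑ i ∈ U, ⟪δ U i, (u : EE d)⟫_ℝ • p i⟫_ℝ := by rw [← hr]
    rw [inner_sum, Finset.sum_eq_zero] at h1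
    · have := inner_self_eq_zero.1 h1
      exact Subtype.ext this
    · intro i hi
      rw [inner_smul_right]
      by_cases hiS : i ∈ S
      · rw [hVp u u.2 i hiS, mul_zero]
      · rw [le_antisymm (h i hi hiS) (huU.2 i hi hiS), zero_mul]
  have hiU' := hF.carrier S U U' _ _ hU hU' hSU hSU' huU.2 huU'.2 (hr.symm.trans hr') i hiU hiS hpos
  refine hI' i hiU' hiS ?_
  by_cases hii : i' = i
  · rw [← hii]; exact hIi'
  · exact hcl i' i hi'S hiS hii (hF.down U _ (by
      intro k hk
      simp only [Finset.mem_insert] at hk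
      rcases hk with rfl | rfl | hk
      · exact hiU
      · exact hi'U
      · exact hSU hk) hU) hIi'
end

open scoped InnerProductSpace Topology
open Filter

section
variable {n d : ℕ} {p : Fin n → EE d} {T : Finset (Fin n) → Prop}

theorem Fan.expand (hF : Fan p T) (L : List (Fin n → ℝ)) (S : Finset (Fin n)) (y : Fin n → ℝ) :
    FF p T (y :: L) S = ∑ k, y k * FF p T (Pi.single k 1 :: L) S := by
  have hz : FF p T ((0 : Fin n → ℝ) :: L) S = 0 := by
    have := hF.linear_first L S 1 (0 : Fin n → ℝ) 0
    simp at this; exact this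
  let φ : (Fin n → ℝ) →ₗ[ℝ] ℝ :=
    { toFun := fun y => FF p T (y :: L) S
      map_add' := fun a b => by
        have := hF.linear_first L S 1 a b
        simpa using this
      map_smul' := fun s b => by
        have := hF.linear_first L S s 0 b
        simpa [hz] using this }
  have := LinearMap.pi_apply_eq_sum_univ φ y
  rw [show FF p T (y :: L) S = φ y from rfl, this]
  refine Finset.sum_congr rfl fun k _ => ?_
  rw [smul_eq_mul]
  congr 1
  show FF p T (_ :: L) S = _
  congr 2
  funext i
  simp [Pi.single_apply, eq_comm]

theorem Fan.sub_lin (hF : Fan p T) (L : List (Fin n → ℝ)) (S : Finset (Fin n)) (y : Fin n → ℝ) (v : EE d) :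
    FF p T ((fun i => y i - ⟪v, p i⟫_ℝ) :: L) S = FF p T (y :: L) S := by
  have := hF.linear_first L S (-1) y (fun i => ⟪v, p i⟫_ℝ)
  rw [hF.kills, mul_zero, add_zero] at this
  rw [← this]
  congr 2
  funext i; simp; ring

theorem Fan.sub_lin2 (hF : Fan p T) (L : List (Fin n → ℝ)) (S : Finset (Fin n)) (x y : Fin n → ℝ) (v w : EE d) :
    FF p T ((fun i => x i - ⟪w, p i⟫_ℝ) :: (fun i => y i - ⟪v, p i⟫_ℝ) :: L) S = FF p T (x :: y :: L) S := by
  rw [hF.sub_lin, hF.swap, hF.sub_lin, hF.swap]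

theorem Fan.af_base (hF : Fan p T) {S : Finset (Fin n)} (hS : T S) (hc : S.card + 2 = d) :
    ∃ l : (Fin n → ℝ) → ℝ, (∀ (s : ℝ) x y, l (x + s • y) = l x + s * l y) ∧
      ∀ x, l x = 0 → FF p T [x, x] S ≤ 0 := by
  obtain ⟨i1, hi1, hTi1⟩ := hF.pure hS (by omega)
  obtain ⟨U, hU, hSU, lam, hlam, hcov⟩ := hF.cover S hS (-p i1)
  refine ⟨fun x => x i1 + ∑ i ∈ U, lam i * x i, ?_, ?_⟩
  · intro s x y
    simp only [Pi.add_apply, Pi.smul_apply, smul_eq_mul, mul_add, Finset.sum_add_distrib, Finset.mul_sum]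
    have : ∑ i ∈ U, lam i * (s * y i) = ∑ i ∈ U, s * (lam i * y i) :=
      Finset.sum_congr rfl fun i _ => by ring
    rw [this]; ring
  intro x0 hx0
  have hv := hF.tight hU x0
  set v := tv p U x0
  set x : Fin n → ℝ := fun i => x0 i - ⟪v, p i⟫_ℝ with hx
  have hxU : ∀ i ∈ U, x i = 0 := fun i hi => by simp only [hx]; rw [hv i hi, sub_self]
  have hxS : ∀ i ∈ S, x i = 0 := fun i hi => hxU i (hSU hi)
  have hxi1 : x i1 = 0 := by
    have h1 : -⟪v, p i1⟫_ℝ = ∑ i ∈ U, lam i * ⟪v, p i⟫_ℝ := by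
      rw [← inner_neg_right, hcov, inner_sum]; simp [inner_smul_right]
    have h2 : ∑ i ∈ U, lam i * x0 i = ∑ i ∈ U, lam i * ⟪v, p i⟫_ℝ :=
      Finset.sum_congr rfl fun i hi => by rw [hv i hi]
    simp only [hx]
    simp only [] at hx0
    linarith
  rw [← hF.sub_lin2 [] S x0 x0 v v]
  change FF p T [x, x] S ≤ 0
  have hcard1 : (insert i1 S).card + 1 = d := by rw [Finset.card_insert_of_notMem hi1]; omega
  obtain ⟨m, hm0, hm⟩ := exists_perp p (insert i1 S) (by omega)
  have hmS : ∀ i ∈ S, ⟪m, p i⟫_ℝ = 0 := fun i hi => hm i (by simp [hi])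
  have hmi1 : ⟪m, p i1⟫_ℝ = 0 := hm i1 (by simp)
  obtain ⟨k0, hk0, hTk0⟩ := hF.pure hTi1 (by omega)
  have hcard2 : (insert k0 (insert i1 S)).card = d := by rw [Finset.card_insert_of_notMem hk0]; omega
  have hmk0 : ⟪m, p k0⟫_ℝ ≠ 0 := by
    intro h
    apply hm0
    refine perp_zero_of_indep (hF.indep _ hTk0) hcard2 m fun i hi => ?_
    rcases Finset.mem_insert.1 hi with rfl | hi
    · exact h
    · exact hm i hi
  have hsp : ∀ w : EE d, ⟪m, w⟫_ℝ = 0 → ∃ a : Fin n → ℝ, w = a i1 • p i1 + ∑ i ∈ S, a i • p i := by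
    intro w hw
    have hmem : w ∈ Submodule.span ℝ (p '' (insert k0 (insert i1 S) : Finset (Fin n))) := by
      rw [span_of_indep (hF.indep _ hTk0) hcard2]; trivial
    obtain ⟨a, ha⟩ := mem_span_fin hmem
    rw [Finset.sum_insert hk0, Finset.sum_insert hi1] at ha
    have h1 : a k0 * ⟪m, p k0⟫_ℝ = 0 := by
      rw [← hw, ← ha, inner_add_right, inner_add_right, inner_sum, inner_smul_right, inner_smul_right, hmi1,
        Finset.sum_eq_zero]
      · ring
      · intro i hi
        rw [inner_smul_right, hmS i hi, mul_zero]
    have h2 := (mul_eq_zero.1 h1).resolve_right hmk0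
    rw [h2, zero_smul, zero_add] at ha
    exact ⟨a, ha.symm⟩
  have claim : ∀ (U1 : Finset (Fin n)) (μ : Fin n → ℝ), T U1 → S ⊆ U1 → (∀ i ∈ U1, i ∉ S → 0 ≤ μ i) →
      ⟪m, ∑ i ∈ U1, μ i • p i⟫_ℝ = 0 → ∀ i ∈ U1, i ∉ S → 0 < μ i → x i = 0 := by
    intro U1 μ hU1 hSU1 hμ hperp i hi hiS hpos
    obtain ⟨a, ha⟩ := hsp _ hperp
    rcases le_or_gt 0 (a i1) with h | h
    · have := hF.carrier S U1 (insert i1 S) μ a hU1 hTi1 hSU1 (Finset.subset_insert _ _) hμ (by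
        intro k hk hkS
        have : k = i1 := by simpa [hkS] using hk
        rw [this]; exact h) (by rw [Finset.sum_insert hi1]; exact ha) i hi hiS hpos
      have : i = i1 := by simpa [hiS] using this
      rw [this]; exact hxi1
    · have := hF.carrier S U1 U μ (fun k => (-a i1) * lam k + if k ∈ S then a k else 0) hU1 hU hSU1 hSU hμ (by
        intro k hk hkS
        simp only [hkS, if_false, add_zero]
        exact mul_nonneg (by linarith) (hlam k hk hkS)) (by
          rw [ha]
          simp only [add_smul, Finset.sum_add_distrib, mul_smul, ← Finset.smul_sum, ← hcov, ite_smul, zero_smul]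
          rw [← Finset.sum_filter, Finset.filter_mem_eq_inter, Finset.inter_eq_right.2 hSU]
          simp) i hi hiS hpos
      exact hxU i this
  set z : Fin n → ℝ := fun j => x j / ⟪m, p j⟫_ℝ with hz
  set N : Fin n → ℝ := fun j => ⟪m, p j⟫_ℝ with hN
  have hxz : ∀ j, (j ∈ S ∨ T (insert j S)) → x j = N j * z j := by
    intro j hj
    by_cases hNj : N j = 0
    · rw [hNj, zero_mul]
      by_cases hjS : j ∈ S
      · exact hxS j hjS
      · have hTj := hj.resolve_left hjS
        refine claim (insert j S) (fun i => if i = j then 1 else 0) hTj (Finset.subset_insert _ _)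
          (fun i _ _ => by split_ifs <;> norm_num) ?_ j (by simp) hjS (by simp)
        rw [Finset.sum_insert hjS, Finset.sum_eq_zero]
        · simpa using hNj
        · intro i hi; rw [if_neg (by rintro rfl; exact hjS hi), zero_smul]
    · simp only [hz]; simp only [hN] at hNj ⊢; field_simp
  set G : Fin n → Fin n → ℝ := fun j k => FF p T [] (insert k (insert j S)) with hG
  have hGs : ∀ j k, G j k = G k j := fun j k => by simp only [hG]; rw [Finset.insert_comm]
  have hGT : ∀ j k, G j k ≠ 0 → T (insert k (insert j S)) := fun j k h => by
    by_contra hT; exact h (hF.not_mem _ hT)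
  have hG0 : ∀ j k, 0 ≤ G j k := fun j k => hF.nonneg [] (by simp) _
  have e1 : FF p T [x, x] S = ∑ j, ∑ k, N j * N k * (z j * (z k - z j)) * G j k := by
    rw [hF.cons [x] hS x 0 (fun i hi => by rw [inner_zero_left, hxS i hi])]
    refine Finset.sum_congr rfl fun j _ => ?_
    rw [inner_zero_left, sub_zero]
    by_cases hjS : j ∈ S
    · have : N j = 0 := hmS j hjS
      simp [hxS j hjS, this]
    by_cases hTj : T (insert j S)
    · by_cases hNj : N j = 0
      · rw [hxz j (Or.inr hTj)]; simp [hNj]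
      rw [hF.cons [] hTj x (z j • m), Finset.mul_sum]
      · refine Finset.sum_congr rfl fun k _ => ?_
        by_cases hGk : G j k = 0
        · change x j * (_ * G j k) = _
          rw [hGk]; simp
        · have hTk : T (insert k S) := hF.down _ _ (Finset.insert_subset_insert _ (Finset.subset_insert _ _)) (hGT j k hGk)
          rw [real_inner_smul_left, hxz j (Or.inr hTj), hxz k (Or.inr hTk)]
          change _ * ((_ - z j * N k) * G j k) = _
          ring
      · intro i hi
        rw [real_inner_smul_left]
        rcases Finset.mem_insert.1 hi with rfl | hi
        · rw [hxz i (Or.inr hTj)]; simp only [hN]; ring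
        · rw [hmS i hi, hxS i hi, mul_zero]
    · rw [hF.not_mem _ hTj]
      have : ∀ k, G j k = 0 := fun k => hF.not_mem _ fun h => hTj (hF.down _ _ (Finset.subset_insert _ _) h)
      simp [this]
  have e2 : ∑ j, ∑ k, N j * N k * (z j * (z k - z j)) * G j k = ∑ j, ∑ k, N j * N k * (z k * (z j - z k)) * G j k := by
    rw [Finset.sum_comm]
    refine Finset.sum_congr rfl fun j _ => Finset.sum_congr rfl fun k _ => ?_
    rw [hGs]; ring
  have e3 : ∑ j, ∑ k, N j * N k * (z j * (z k - z j)) * G j k + ∑ j, ∑ k, N j * N k * (z k * (z j - z k)) * G j k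
      = - ∑ j, ∑ k, N j * N k * (z j - z k) ^ 2 * G j k := by
    rw [← Finset.sum_add_distrib, ← Finset.sum_neg_distrib]
    refine Finset.sum_congr rfl fun j _ => ?_
    rw [← Finset.sum_add_distrib, ← Finset.sum_neg_distrib]
    refine Finset.sum_congr rfl fun k _ => by ring
  have e4 : 0 ≤ ∑ j, ∑ k, N j * N k * (z j - z k) ^ 2 * G j k := by
    refine Finset.sum_nonneg fun j _ => Finset.sum_nonneg fun k _ => ?_
    rcases le_or_gt 0 (N j * N k) with h | h
    · exact mul_nonneg (mul_nonneg h (sq_nonneg _)) (hG0 j k)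
    · by_cases hGk : G j k = 0
      · rw [hGk, mul_zero]
      · have hTjk := hGT j k hGk
        have hjk : k ≠ j := by rintro rfl; nlinarith [mul_self_nonneg (N k)]
        have hNj : N j ≠ 0 := by intro h0; rw [h0] at h; simp at h
        have hNk : N k ≠ 0 := by intro h0; rw [h0] at h; simp at h
        have hjS : j ∉ S := fun h0 => hNj (hmS j h0)
        have hkS : k ∉ S := fun h0 => hNk (hmS k h0)
        have hcl := claim (insert k (insert j S)) (fun i => if i = j then |N k| else if i = k then |N j| else 0) hTjk
          ((Finset.subset_insert _ _).trans (Finset.subset_insert _ _)) (fun i _ _ => by split_ifs <;> positivity) (by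
            rw [Finset.sum_insert (by simp [hjk, hkS]), Finset.sum_insert hjS, Finset.sum_eq_zero]
            · simp only [hjk, if_true, if_false, add_zero, inner_add_right, inner_smul_right]
              change |N j| * N k + |N k| * N j = 0
              rcases lt_or_gt_of_ne hNj with h1 | h1
              · have h2 : 0 < N k := by nlinarith
                rw [abs_of_neg h1, abs_of_pos h2]; ring
              · have h2 : N k < 0 := by nlinarith
                rw [abs_of_pos h1, abs_of_neg h2]; ring
            · intro i hi
              rw [if_neg (by rintro rfl; exact hjS hi), if_neg (by rintro rfl; exact hkS hi), zero_smul])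
        have h1 := hcl j (by simp) hjS (by simpa using hNk)
        have h2 := hcl k (by simp) hkS (by simpa [hjk] using hNj)
        simp [hz, h1, h2]
  linarith

theorem Fan.af_step (hF : Fan p T) {S : Finset (Fin n)} (hS : T S) (c1 : Fin n → ℝ) (L : List (Fin n → ℝ))
    (hc : S.card + 3 + L.length = d) (hc1 : Amp p T c1) (hL : ∀ c ∈ L, Amp p T c)
    (ih : ∀ S : Finset (Fin n), T S → S.card + 2 + L.length = d → ∀ c x : Fin n → ℝ, Amp p T c →
      FF p T (x :: x :: L) S * FF p T (c :: c :: L) S ≤ FF p T (c :: x :: L) S ^ 2)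
    (x0 : Fin n → ℝ) (hx0 : FF p T (c1 :: x0 :: c1 :: L) S = 0) :
    FF p T (x0 :: x0 :: c1 :: L) S ≤ 0 := by
  classical
  have hM : ∀ c ∈ c1 :: L, Amp p T c := by
    intro c hc
    rcases List.mem_cons.1 hc with rfl | h
    · exact hc1
    · exact hL c h
  set M := c1 :: L with hMdef
  obtain ⟨v, hv1, hv2⟩ := hc1 S hS
  set ct : Fin n → ℝ := fun i => c1 i - ⟪v, p i⟫_ℝ with hct
  have hctS : ∀ i ∈ S, ct i = 0 := fun i hi => by simp only [hct]; rw [hv1 i hi, sub_self]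
  have hctpos : ∀ i, i ∉ S → 0 < ct i := fun i hi => by simp only [hct]; linarith [hv2 i hi]
  let B : Fin n → Fin n → ℝ := fun j k => if j ∈ S ∨ k ∈ S then 0 else FF p T (Pi.single j 1 :: Pi.single k 1 :: M) S
  have hB : ∀ j k, j ∉ S → k ∉ S → B j k = FF p T (Pi.single j 1 :: Pi.single k 1 :: M) S := fun j k hj hk => by
    simp [B, hj, hk]
  let off : (Fin n → ℝ) → (Fin n → ℝ) := fun y i => if i ∈ S then 0 else y i
  have hoff0 : ∀ y, (∀ i ∈ S, y i = 0) → off y = y := by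
    intro y hy; funext i; simp only [off]; split_ifs with h
    · rw [hy i h]
    · rfl
  have hBy : ∀ j, j ∉ S → ∀ y, ∑ k, B j k * y k = FF p T (off y :: M) (insert j S) := by
    intro j hj y
    rw [← hF.single _ hj, hF.swap, hF.expand]
    refine Finset.sum_congr rfl fun k _ => ?_
    by_cases hk : k ∈ S
    · simp [B, hk, off]
    · rw [hB j k hj hk, hF.swap]; simp [off, hk]; ring
  have hBy0 : ∀ j, j ∈ S → ∀ y : Fin n → ℝ, ∑ k, B j k * y k = 0 := by
    intro j hj y
    exact Finset.sum_eq_zero fun k _ => by simp [B, hj]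
  have hBxy : ∀ x y, ∑ j, x j * ∑ k, B j k * y k = FF p T (off x :: off y :: M) S := by
    intro x y
    rw [hF.expand]
    refine Finset.sum_congr rfl fun j _ => ?_
    by_cases hj : j ∈ S
    · rw [hBy0 j hj]; simp [off, hj]
    · rw [hBy j hj, hF.single _ hj]; simp [off, hj]
  let J : Fin n → Prop := fun j => j ∉ S ∧ T (insert j S)
  let π : Fin n → ℝ := fun j => if J j then FF p T (c1 :: c1 :: L) (insert j S) / ct j else 1
  let c' : Fin n → ℝ := fun j => if j ∈ S then 1 else ct j
  have hoffc : off c' = ct := by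
    funext i; simp only [off, c']; split_ifs with h
    · rw [hctS i h]
    · rfl
  have hcard : ∀ j, j ∉ S → (insert j S).card + 2 + L.length = d := fun j hj => by
    rw [Finset.card_insert_of_notMem hj]; omega
  have hFpos : ∀ j, J j → 0 < FF p T (c1 :: c1 :: L) (insert j S) := by
    intro j hj
    refine hF.pos _ ?_ _ hj.2 (by simp only [List.length_cons]; have := hcard j hj.1; omega)
    intro c hc
    rcases List.mem_cons.1 hc with rfl | h
    · exact hc1
    · exact hM c h
  have key := matrix_lemma B J
    (by
      intro i j
      simp only [B, or_comm]
      split_ifs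
      · rfl
      · rw [hF.swap])
    (by
      intro i j hij
      by_cases h : i ∈ S ∨ j ∈ S
      · simp [B, h]
      · push Not at h
        rw [hB i j h.1 h.2, hF.single _ h.1, hF.single _ (by simp [h.2, hij.symm])]
        exact hF.nonneg _ (fun c hc => (hM c hc).nef) _)
    (by
      intro i j hi
      by_cases h : i ∈ S ∨ j ∈ S
      · simp [B, h]
      · push Not at h
        rw [hB i j h.1 h.2, hF.single _ h.1, hF.not_mem]
        exact fun h' => hi ⟨h.1, h'⟩)
    π c'
    (by
      intro i
      simp only [π]
      split_ifs with h
      · exact div_pos (hFpos i h) (hctpos i h.1)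
      · exact one_pos)
    (by
      intro i
      simp only [c']
      split_ifs with h
      · exact one_pos
      · exact hctpos i h)
    (by
      intro i hi
      rw [hBy i hi.1, hoffc]
      simp only [π, c', if_pos hi, if_neg hi.1]
      rw [hF.sub_lin]
      have := (hctpos i hi.1).ne'
      field_simp
      rfl)
    (by
      intro I hne hcl j hj
      refine hF.conn hS (by omega) (fun j => I j) ?_ ?_ j hj.1 hj.2
      · obtain ⟨i, hi, hI⟩ := hne
        exact ⟨i, hi.1, hi.2, hI⟩
      · intro j k hj hk hjk hT hI
        refine hcl j k ⟨hj, hF.down _ _ (Finset.subset_insert _ _) hT⟩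
          ⟨hk, hF.down _ _ (Finset.insert_subset_insert _ (Finset.subset_insert _ _)) hT⟩ hI hjk ?_
        have hk' : k ∉ insert j S := by simp [hk, hjk.symm]
        rw [hB j k hj hk, hF.single _ hj, hF.single _ hk']
        refine hF.pos _ hM _ hT ?_
        rw [Finset.card_insert_of_notMem hk', Finset.card_insert_of_notMem hj, hMdef, List.length_cons]
        omega)
    (by
      intro x
      rw [hBxy]
      have h1 : FF p T (off x :: off x :: M) S = ∑ j, ct j * FF p T (off x :: off x :: L) (insert j S) := by
        rw [hMdef, hF.perm (show (off x :: off x :: c1 :: L).Perm (c1 :: off x :: off x :: L) from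
          (List.perm_middle (l₁ := [off x, off x]) (a := c1) (l₂ := L))), hF.cons _ hS c1 v hv1]
      rw [h1]
      refine Finset.sum_le_sum fun j _ => ?_
      by_cases hj : j ∈ S
      · rw [hctS j hj, hBy0 j hj]; simp
      rw [hBy j hj]
      by_cases hT : T (insert j S)
      · have hJ : J j := ⟨hj, hT⟩
        have h2 := ih _ hT (hcard j hj) c1 (off x) hc1
        simp only [π, if_pos hJ]
        have h3 := hFpos j hJ
        have h4 := hctpos j hj
        rw [hF.swap L _ c1 (off x)] at h2
        rw [hMdef, div_div_eq_mul_div, le_div_iff₀ h3]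
        nlinarith [mul_le_mul_of_nonneg_right h2 h4.le]
      · rw [hF.not_mem _ hT, hF.not_mem _ hT]; simp)
    (fun i => x0 i - ⟪tv p S x0, p i⟫_ℝ)
    (by
      rw [hBxy, hoffc, hoff0 _ (fun i hi => by rw [hF.tight hS x0 i hi, sub_self])]
      rw [hF.sub_lin2]; exact hx0)
  rw [hBxy, hoff0 _ (fun i hi => by rw [hF.tight hS x0 i hi, sub_self]), hF.sub_lin2] at key
  exact key

theorem Fan.hyp (hF : Fan p T) (L : List (Fin n → ℝ)) (S : Finset (Fin n)) (l : (Fin n → ℝ) → ℝ)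
    (hl : ∀ (s : ℝ) x y, l (x + s • y) = l x + s * l y)
    (hneg : ∀ x, l x = 0 → FF p T (x :: x :: L) S ≤ 0) (c x : Fin n → ℝ) (hpos : 0 < FF p T (c :: c :: L) S) :
    FF p T (x :: x :: L) S * FF p T (c :: c :: L) S ≤ FF p T (c :: x :: L) S ^ 2 :=
  hyp_of_hyperplane (fun x y => FF p T (x :: y :: L) S) (fun x y => hF.swap L S x y)
    (fun s x y z => hF.linear_first (z :: L) S s x y) l hl hneg c x hpos

theorem Fan.af (hF : Fan p T) (L : List (Fin n → ℝ)) : (∀ c ∈ L, Amp p T c) →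
    ∀ S : Finset (Fin n), T S → S.card + 2 + L.length = d → ∀ c x : Fin n → ℝ, Amp p T c →
      FF p T (x :: x :: L) S * FF p T (c :: c :: L) S ≤ FF p T (c :: x :: L) S ^ 2 := by
  induction L with
  | nil =>
    intro _ S hS hc c x hcA
    obtain ⟨l, h1, h2⟩ := hF.af_base hS (by simpa using hc)
    exact hF.hyp [] S l h1 h2 c x (hF.pos _ (by simp [hcA]) S hS (by simpa using hc))
  | cons c1 L ih =>
    intro hL S hS hc c x hcA
    have hL' : ∀ c ∈ L, Amp p T c := fun c h => hL c (by simp [h])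
    simp only [List.length_cons] at hc
    refine hF.hyp (c1 :: L) S (fun x => FF p T (c1 :: x :: c1 :: L) S) ?_ ?_ c x ?_
    · intro s x y
      rw [hF.swap, hF.linear_first, hF.swap, hF.swap _ _ y]
    · exact fun x hx => hF.af_step hS c1 L (by omega) (hL c1 (by simp)) hL' (ih hL') x hx
    · refine hF.pos _ ?_ S hS (by simp only [List.length_cons]; omega)
      intro c' hc'
      simp only [List.mem_cons] at hc'
      rcases hc' with rfl | rfl | rfl | h
      · exact hcA
      · exact hcA
      · exact hL _ (by simp)
      · exact hL' _ h
end

open scoped InnerProductSpace Topology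
open Filter

section
variable {n d : ℕ} {p : Fin n → EE d} {T : Finset (Fin n) → Prop}

theorem Fan.continuous_family (hF : Fan p T) (L : List ((Fin n → ℝ) × (Fin n → ℝ))) : ∀ S,
    Continuous fun t : ℝ => FF p T (L.map fun q => q.1 + t • q.2) S := by
  induction L with
  | nil => intro S; exact continuous_const
  | cons q L ih =>
    intro S
    simp only [List.map_cons, hF.linear_first]
    by_cases hS : T S
    · simp only [FF, if_pos hS]
      have := fun j => ih (insert j S)
      fun_prop
    · simp only [FF, if_neg hS]; fun_prop

theorem Fan.af_nef (hF : Fan p T) {b : Fin n → ℝ} (hb : Amp p T b) (L : List (Fin n → ℝ))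
    (hL : ∀ c ∈ L, Nef p T c) {S : Finset (Fin n)} (hS : T S) (hc : S.card + 2 + L.length = d)
    (c x : Fin n → ℝ) (hcn : Nef p T c) :
    FF p T (x :: x :: L) S * FF p T (c :: c :: L) S ≤ FF p T (c :: x :: L) S ^ 2 := by
  have h1 := hF.continuous_family ((x, 0) :: (x, 0) :: L.map fun c => (c, b)) S
  have h2 := hF.continuous_family ((c, b) :: (c, b) :: L.map fun c => (c, b)) S
  have h3 := hF.continuous_family ((c, b) :: (x, 0) :: L.map fun c => (c, b)) S
  simp only [List.map_cons, List.map_map, smul_zero, add_zero, Function.comp_def] at h1 h2 h3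
  have h4 := ((h1.mul h2).tendsto 0).mono_left (nhdsWithin_le_nhds (s := Set.Ioi 0))
  have h5 := ((h3.pow 2).tendsto 0).mono_left (nhdsWithin_le_nhds (s := Set.Ioi 0))
  have key := le_of_tendsto_of_tendsto h4 h5 ?_
  · simpa using key
  filter_upwards [self_mem_nhdsWithin] with t ht
  refine hF.af _ ?_ S hS (by simpa using hc) _ _ (hcn.add_amp hb ht)
  intro c' hc'
  simp only [List.mem_map] at hc'
  obtain ⟨a, ha, rfl⟩ := hc'
  exact (hL a ha).add_amp hb ht

def Big (p : Fin n → EE d) (i : Fin n) (c : Fin n → ℝ) : Prop :=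
  ∃ v : EE d, ⟪v, p i⟫_ℝ = c i ∧ ∀ j, j ≠ i → ⟪v, p j⟫_ℝ < c j

theorem Amp.big {b : Fin n → ℝ} (hb : Amp p T b) {i : Fin n} (hi : T {i}) : Big p i b := by
  obtain ⟨v, h1, h2⟩ := hb _ hi
  exact ⟨v, h1 i (by simp), fun j hj => h2 j (by simpa using hj)⟩

theorem Fan.big_pos (hF : Fan p T) {b : Fin n → ℝ} (hb : Amp p T b) {i : Fin n} (hi : T {i})
    (L : List (Fin n → ℝ)) : ∀ (M : List (Fin n → ℝ)), (∀ c ∈ L, Nef p T c ∧ Big p i c) →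
    (∀ c ∈ M, Amp p T c) → 1 + (L.length + M.length) = d → 0 < FF p T (L ++ M) {i} := by
  induction L with
  | nil => intro M _ hM hc; exact hF.pos _ hM _ hi (by simpa using hc)
  | cons c L ih =>
    intro M hL hM hc
    have hpos := ih (b :: M) (fun c h => hL c (by simp [h])) (by simpa [hb] using hM)
      (by simp only [List.length_cons] at hc ⊢; omega)
    rw [hF.perm (List.perm_middle)] at hpos
    obtain ⟨v, hv1, hv2⟩ := (hL c (by simp)).2
    obtain ⟨w, hw1, hw2⟩ := hb.big hi
    obtain ⟨δ, hδ, hδ2⟩ := small_pos (fun j => c j - ⟪v, p j⟫_ℝ) (fun j => - (b j - ⟪w, p j⟫_ℝ))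
    rw [List.cons_append, hF.cons _ hi c v (by simpa using hv1)]
    rw [hF.cons _ hi b w (by simpa using hw1)] at hpos
    refine lt_of_lt_of_le (mul_pos hδ hpos) ?_
    rw [Finset.mul_sum]
    refine Finset.sum_le_sum fun j _ => ?_
    rw [← mul_assoc]
    refine mul_le_mul_of_nonneg_right ?_ (hF.nonneg _ ?_ _)
    · by_cases hj : j = i
      · subst hj; rw [hv1, hw1]; simp
      · have := hδ2 j (sub_pos.2 (hv2 j hj))
        linarith
    · intro c' hc'
      rw [List.mem_append] at hc'
      rcases hc' with h | h
      · exact (hL c' (by simp [h])).1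
      · exact (hM c' h).nef

theorem Amp.open' {b : Fin n → ℝ} (hF : Fan p T) (hb : Amp p T b) (c : Fin n → ℝ) :
    ∃ s : ℝ, 0 < s ∧ Amp p T (b + s • c) := by
  have h : ∀ᶠ s : ℝ in 𝓝[>] (0:ℝ), ∀ S : Finset (Fin n), T S →
      ∃ v : EE d, (∀ i ∈ S, ⟪v, p i⟫_ℝ = (b + s • c) i) ∧ ∀ i, i ∉ S → ⟪v, p i⟫_ℝ < (b + s • c) i := by
    rw [Filter.eventually_all]
    intro S
    by_cases hS : T S
    swap
    · exact Filter.Eventually.of_forall fun s h => absurd h hS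
    obtain ⟨v, h1, h2⟩ := hb S hS
    have h3 : ∀ i, ∀ᶠ s : ℝ in 𝓝[>] (0:ℝ), i ∉ S → ⟪v + s • tv p S c, p i⟫_ℝ < (b + s • c) i := by
      intro i
      by_cases hi : i ∈ S
      · exact Filter.Eventually.of_forall fun s h => absurd hi h
      have hc : Continuous fun s : ℝ => (b + s • c) i - ⟪v + s • tv p S c, p i⟫_ℝ := by
        simp only [Pi.add_apply, Pi.smul_apply, inner_add_left, inner_smul_left, smul_eq_mul, RCLike.conj_to_real]
        fun_prop
      have := (hc.tendsto 0).mono_left (nhdsWithin_le_nhds (s := Set.Ioi 0))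
      have h4 := this.eventually (lt_mem_nhds (a := 0) (by simpa using h2 i hi))
      filter_upwards [h4] with s hs _
      linarith
    filter_upwards [Filter.eventually_all.2 h3] with s hs _
    refine ⟨v + s • tv p S c, fun i hi => ?_, hs⟩
    rw [inner_add_left, inner_smul_left, h1 i hi, hF.tight hS c i hi]
    simp
  obtain ⟨s, hs, hs2⟩ := (h.and self_mem_nhdsWithin).exists
  exact ⟨s, hs2, hs⟩

/-- a hyperbolic form: isotropic vectors orthogonal to a positive vector are in the kernel -/
theorem Fan.hyp_ker (hF : Fan p T) (L : List (Fin n → ℝ)) (S : Finset (Fin n)) (c x : Fin n → ℝ)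
    (haf : ∀ x, FF p T (x :: x :: L) S * FF p T (c :: c :: L) S ≤ FF p T (c :: x :: L) S ^ 2)
    (hpos : 0 < FF p T (c :: c :: L) S) (hcx : FF p T (c :: x :: L) S = 0)
    (hxx : FF p T (x :: x :: L) S = 0) (y : Fin n → ℝ) : FF p T (x :: y :: L) S = 0 := by
  set s := - (FF p T (c :: y :: L) S / FF p T (c :: c :: L) S) with hs
  have hlin2 : ∀ (a u w : Fin n → ℝ) (t : ℝ), FF p T (a :: (u + t • w) :: L) S
      = FF p T (a :: u :: L) S + t * FF p T (a :: w :: L) S := by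
    intro a u w t
    rw [hF.swap, hF.linear_first, hF.swap L S u, hF.swap L S w]
  have hcz : FF p T (c :: (y + s • c) :: L) S = 0 := by
    rw [hlin2, hs]; field_simp; ring
  have hxz : FF p T (x :: (y + s • c) :: L) S = FF p T (x :: y :: L) S := by
    rw [hlin2, hF.swap L S x c, hcx]; ring
  rw [← hxz]
  generalize y + s • c = z at hcz hxz ⊢
  have h : ∀ t : ℝ, FF p T (z :: z :: L) S + 2 * t * FF p T (x :: z :: L) S ≤ 0 := by
    intro t
    have h1 := haf (z + t • x)
    rw [hlin2 c, hcz, hcx, hlin2, hF.linear_first, hF.linear_first, hxx, hF.swap L S z x] at h1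
    have h2 : (FF p T (z :: z :: L) S + 2 * t * FF p T (x :: z :: L) S) * FF p T (c :: c :: L) S ≤ 0 := by
      nlinarith
    by_contra hcon
    push Not at hcon
    exact absurd h2 (not_le.2 (mul_pos hcon hpos))
  by_contra hne
  have := h ((1 - FF p T (z :: z :: L) S) / (2 * FF p T (x :: z :: L) S))
  field_simp at this
  norm_num at this

theorem Fan.corank_amp (hF : Fan p T) {b0 : Fin n → ℝ} (hb0 : Amp p T b0) (hi : ∀ i, T {i})
    (h1n : Nef p T (fun _ => 1)) (h1b : ∀ i, Big p i (fun _ => 1)) (x : Fin n → ℝ)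
    (hx : ∀ y, FF p T (x :: y :: List.replicate (d - 2) (fun _ => 1)) ∅ = 0) (Bs : List (Fin n → ℝ)) :
    ∀ (k : ℕ), (∀ b ∈ Bs, Amp p T b) → Bs.length + k + 2 = d → ∀ y,
      FF p T (x :: y :: (Bs ++ List.replicate k (fun _ => 1))) ∅ = 0 := by
  induction Bs with
  | nil =>
    intro k _ hk y
    have : k = d - 2 := by simp at hk; omega
    rw [this]; exact hx y
  | cons b Bs ih =>
    intro k hB hk y
    simp only [List.length_cons] at hk
    set o : Fin n → ℝ := fun _ => 1 with ho
    set L := Bs ++ List.replicate k o with hL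
    have ih' : ∀ y, FF p T (o :: x :: y :: L) ∅ = 0 := by
      intro y
      rw [← ih (k+1) (fun b h => hB b (by simp [h])) (by omega) y]
      refine hF.perm ?_ _
      have h1 : (Bs ++ List.replicate (k+1) o).Perm (o :: L) := by
        rw [List.replicate_succ]; exact List.perm_middle
      exact ((List.perm_middle (l₁ := [x, y]) (a := o) (l₂ := L)).symm).trans ((h1.symm.cons y).cons x)
    have hLn : ∀ c ∈ L, Amp p T c ∨ c = o := by
      intro c hc
      rw [hL, List.mem_append] at hc
      rcases hc with h | h
      · exact Or.inl (hB c (by simp [h]))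
      · exact Or.inr (List.eq_of_mem_replicate h)
    have hLnef : ∀ c ∈ L, Nef p T c := fun c hc => (hLn c hc).elim Amp.nef (fun h => h ▸ h1n)
    have hLlen : L.length + 3 = d := by rw [hL]; simp; omega
    have hpos : ∀ i, 0 < FF p T (o :: o :: L) {i} := by
      intro i
      have := hF.big_pos hb0 (hi i) (o :: o :: L) [] ?_ (by simp) (by simp; omega)
      · simpa using this
      intro c hc
      simp only [List.mem_cons] at hc
      rcases hc with rfl | rfl | h
      · exact ⟨h1n, h1b i⟩
      · exact ⟨h1n, h1b i⟩
      · exact (hLn c h).elim (fun h => ⟨h.nef, h.big (hi i)⟩) (fun h => h ▸ ⟨h1n, h1b i⟩)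
    have haf : ∀ i x, FF p T (x :: x :: L) {i} * FF p T (o :: o :: L) {i} ≤ FF p T (o :: x :: L) {i} ^ 2 :=
      fun i x => hF.af_nef hb0 L hLnef (hi i) (by simp; omega) o x h1n
    have hox : ∀ i, FF p T (o :: x :: L) {i} = 0 := by
      intro i
      have := hF.single (o :: x :: L) (S := ∅) (j := i) (by simp)
      rw [insert_empty_eq] at this
      rw [← this, ← ih' (Pi.single i 1)]
      exact hF.perm ((List.perm_middle (l₁ := [o, x]) (a := Pi.single i 1) (l₂ := L)).symm) _
    have hexp : ∀ (c : Fin n → ℝ) y, FF p T (c :: x :: y :: L) ∅ = ∑ i, c i * FF p T (x :: y :: L) {i} := by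
      intro c y
      rw [hF.cons _ hF.empty c 0 (by simp)]
      simp
    have hle : ∀ i, FF p T (x :: x :: L) {i} ≤ 0 := by
      intro i
      have h := haf i x
      rw [hox] at h
      by_contra hcon
      push Not at hcon
      have := mul_pos hcon (hpos i)
      simp at h
      linarith
    have hzero : ∀ i, FF p T (x :: x :: L) {i} = 0 := by
      have := ih' x
      rw [hexp] at this
      simp only [ho, one_mul] at this
      rw [Finset.sum_eq_zero_iff_of_nonpos (fun i _ => hle i)] at this
      exact fun i => this i (Finset.mem_univ _)
    have hall : ∀ i y, FF p T (x :: y :: L) {i} = 0 := fun i y =>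
      hF.hyp_ker L {i} o x (haf i) (hpos i) (hox i) (hzero i) y
    have := hexp b y
    simp only [hall, mul_zero, Finset.sum_const_zero] at this
    rw [← this, List.cons_append]
    exact hF.perm (List.perm_middle (l₁ := [x, y]) (a := b) (l₂ := L)) _

theorem Fan.corank_all (hF : Fan p T) {b0 : Fin n → ℝ} (hb0 : Amp p T b0) (hi : ∀ i, T {i})
    (h1n : Nef p T (fun _ => 1)) (h1b : ∀ i, Big p i (fun _ => 1)) (x : Fin n → ℝ)
    (hx : ∀ y, FF p T (x :: y :: List.replicate (d - 2) (fun _ => 1)) ∅ = 0) (L : List (Fin n → ℝ)) :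
    ∀ (Bs : List (Fin n → ℝ)), (∀ b ∈ Bs, Amp p T b) → L.length + Bs.length + 2 = d → ∀ y,
      FF p T (x :: y :: (L ++ Bs)) ∅ = 0 := by
  induction L with
  | nil =>
    intro Bs hB hc y
    have := hF.corank_amp hb0 hi h1n h1b x hx Bs 0 hB (by simpa using hc) y
    simpa using this
  | cons c L ih =>
    intro Bs hB hc y
    simp only [List.length_cons] at hc
    obtain ⟨s, hs, hA⟩ := Amp.open' hF hb0 c
    have h1 := ih (b0 :: Bs) (by simpa [hb0] using hB) (by simp; omega) y
    have h2 := ih ((b0 + s • c) :: Bs) (by simpa [hA] using hB) (by simp; omega) y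
    have hp : ∀ e, FF p T (x :: y :: (L ++ e :: Bs)) ∅ = FF p T (e :: x :: y :: (L ++ Bs)) ∅ := fun e =>
      hF.perm (List.perm_middle (l₁ := x :: y :: L) (a := e) (l₂ := Bs)) _
    rw [hp] at h1 h2
    rw [hF.linear_first, h1, zero_add] at h2
    rw [← (mul_eq_zero.1 h2).resolve_left hs.ne', List.cons_append]
    exact hF.perm (List.perm_middle (l₁ := [x, y]) (a := c) (l₂ := L ++ Bs)) _

theorem Fan.zero_all (hF : Fan p T) (x : Fin n → ℝ) (h : ∀ L, FF p T (x :: L) ∅ = 0) (S : Finset (Fin n)) :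
    ∀ L, FF p T (x :: L) S = 0 := by
  classical
  induction S using Finset.induction_on with
  | empty => exact h
  | insert j S hj ih =>
    intro L
    rw [← hF.single _ hj, hF.swap]
    exact ih _

theorem Fan.lin_of_zero (hF : Fan p T) (x : Fin n → ℝ) (h : ∀ S L, FF p T (x :: L) S = 0) (k : ℕ) :
    ∀ S, T S → S.card + k + 1 = d → ∃ v : EE d, ∀ i, T (insert i S) → ⟪v, p i⟫_ℝ = x i := by
  classical
  induction k with
  | zero =>
    intro S hS hc
    obtain ⟨j, hj, hTj⟩ := hF.pure hS (by omega)
    obtain ⟨v, hv⟩ := exists_tight (hF.indep _ hTj) x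
    refine ⟨v, fun i hTi => ?_⟩
    by_cases hi : i ∈ insert j S
    · exact hv i hi
    have hiS : i ∉ S := fun h => hi (by simp [h])
    have hij : i ≠ j := fun h => hi (by simp [h])
    obtain ⟨u, hu0, hu⟩ := exists_perp p S (by omega)
    have hne : ∀ k, k ∉ S → T (insert k S) → ⟪u, p k⟫_ℝ ≠ 0 := by
      intro k hk hT h0
      refine hu0 (perp_zero_of_indep (hF.indep _ hT) ?_ u ?_)
      · rw [Finset.card_insert_of_notMem hk]; omega
      · intro i hi
        rcases Finset.mem_insert.1 hi with rfl | hi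
        · exact h0
        · exact hu i hi
    have huniq : ∀ k, k ∉ S → T (insert k S) → k ≠ j → k = i := by
      intro k hk hTk hkj
      have hopp : ∀ k, k ∉ S → T (insert k S) → k ≠ j → ⟪u, p j⟫_ℝ * ⟪u, p k⟫_ℝ < 0 := by
        intro k hk hTk hkj
        rcases lt_trichotomy (⟪u, p j⟫_ℝ * ⟪u, p k⟫_ℝ) 0 with h | h | h
        · exact h
        · exact absurd h (mul_ne_zero (hne j hj hTj) (hne k hk hTk))
        · exact absurd (hF.ridge_unique (by omega) u hu hj hTj hTk h).symm hkj
      refine hF.ridge_unique (by omega) u hu hk hTk hTi ?_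
      have h1 := mul_pos_of_neg_of_neg (hopp k hk hTk hkj) (hopp i hiS hTi hij)
      have h2 : 0 < ⟪u, p j⟫_ℝ ^ 2 := by have := hne j hj hTj; positivity
      by_contra hcon
      push Not at hcon
      nlinarith
    have h1 := h S []
    rw [hF.cons [] hS x v (fun i hi => hv i (by simp [hi])), Finset.sum_eq_single i] at h1
    · have h2 := hF.pos [] (by simp) _ hTi (by rw [Finset.card_insert_of_notMem hiS]; simpa using hc)
      have := (mul_eq_zero.1 h1).resolve_right h2.ne'
      linarith
    · intro k _ hki
      by_cases hk : k ∈ insert j S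
      · rw [hv k hk]; simp
      · simp only [Finset.mem_insert, not_or] at hk
        by_cases hT : T (insert k S)
        · exact absurd (huniq k hk.2 hT hk.1) hki
        · rw [hF.not_mem _ hT, mul_zero]
    · simp
  | succ k ih =>
    intro S hS hc
    have hex : ∀ j, ∃ v : EE d, j ∉ S → T (insert j S) → ∀ i, T (insert i (insert j S)) → ⟪v, p i⟫_ℝ = x i := by
      intro j
      by_cases hj : j ∉ S ∧ T (insert j S)
      · obtain ⟨v, hv⟩ := ih _ hj.2 (by rw [Finset.card_insert_of_notMem hj.1]; omega)
        exact ⟨v, fun _ _ => hv⟩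
      · exact ⟨0, fun h1 h2 => absurd ⟨h1, h2⟩ hj⟩
    choose v hv using hex
    obtain ⟨j0, hj0, hT0⟩ := hF.pure hS (by omega)
    have hall := hF.conn hS (by omega) (fun j => v j = v j0) ⟨j0, hj0, hT0, rfl⟩ (by
      intro j k hj hk hjk hT hvj
      rw [← hvj]
      by_contra hne
      have hTj : T (insert j S) := hF.down _ _ (Finset.subset_insert _ _) hT
      have hTk : T (insert k S) :=
        hF.down _ _ (Finset.insert_subset_insert _ (Finset.subset_insert _ _)) hT
      have key : ∀ i, T (insert i (insert k (insert j S))) → ⟪v k - v j, p i⟫_ℝ = 0 := by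
        intro i hTi
        rw [inner_sub_left, hv j hj hTj i, hv k hk hTk i, sub_self]
        · refine hF.down _ _ ?_ hTi
          intro a; simp; tauto
        · refine hF.down _ _ ?_ hTi
          intro a; simp; tauto
      obtain ⟨i, _, hTi, hpos⟩ := hF.side hT (v k - v j) (sub_ne_zero.2 hne) (by
        intro i hi
        exact key i (by rw [Finset.insert_eq_of_mem hi]; exact hT))
      rw [key i hTi] at hpos
      exact lt_irrefl _ hpos)
    refine ⟨v j0, fun i hTi => ?_⟩
    by_cases hi : i ∈ S
    · exact hv j0 hj0 hT0 i (by rw [Finset.insert_eq_of_mem (by simp [hi])]; exact hT0)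
    · rw [← hall i hi hTi]
      exact hv i hi hTi i (by rw [Finset.insert_eq_of_mem (by simp)]; exact hTi)

theorem Fan.corank (hF : Fan p T) {b0 : Fin n → ℝ} (hb0 : Amp p T b0) (hi : ∀ i, T {i})
    (h1n : Nef p T (fun _ => 1)) (h1b : ∀ i, Big p i (fun _ => 1)) (hd : 2 ≤ d) (x : Fin n → ℝ)
    (hx : ∀ y, FF p T (x :: y :: List.replicate (d - 2) (fun _ => 1)) ∅ = 0) :
    ∃ v : EE d, ∀ i, ⟪v, p i⟫_ℝ = x i := by
  have h0 : ∀ L, FF p T (x :: L) ∅ = 0 := by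
    intro L
    rcases L with _ | ⟨y, L⟩
    · exact hF.card_ne _ (by simp; omega)
    · by_cases hl : L.length + 2 = d
      · have := hF.corank_all hb0 hi h1n h1b x hx L [] (by simp) (by simpa using hl) y
        simpa using this
      · exact hF.card_ne _ (by simp; omega)
  obtain ⟨v, hv⟩ := hF.lin_of_zero x (hF.zero_all x h0) (d - 1) ∅ hF.empty (by simp; omega)
  exact ⟨v, fun i => hv i (by simpa using hi i)⟩

end

open scoped InnerProductSpace Topology
open Filter

/-- affine functions are pairs -/
noncomputable def ev {d : ℕ} (Z : EE d × ℝ) (y : EE d) : ℝ := ⟪Z.1, y⟫_ℝ + Z.2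

theorem ev_add {d : ℕ} (Z W : EE d × ℝ) (y : EE d) : ev (Z + W) y = ev Z y + ev W y := by
  simp [ev, inner_add_left]; ring

theorem ev_smul {d : ℕ} (s : ℝ) (Z : EE d × ℝ) (y : EE d) : ev (s • Z) y = s * ev Z y := by
  simp [ev, inner_smul_left]; ring

theorem ev_finsum {d : ℕ} {ι : Type*} (s : Finset ι) (Z : ι → EE d × ℝ) (y : EE d) :
    ev (∑ i ∈ s, Z i) y = ∑ i ∈ s, ev (Z i) y := by
  classical
  induction s using Finset.induction_on with
  | empty => simp [ev]
  | insert a s ha ih => rw [Finset.sum_insert ha, Finset.sum_insert ha, ev_add, ih]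

theorem ev_sub_pt {d : ℕ} (Z : EE d × ℝ) (x y : EE d) : ⟪Z.1, y - x⟫_ℝ = ev Z y - ev Z x := by
  simp [ev, inner_sub_right]

theorem ev_const {d : ℕ} (s : ℝ) (y : EE d) : ev ((0 : EE d), s) y = s := by simp [ev]

theorem ev_comb {d : ℕ} {ι : Type*} (Z : EE d × ℝ) (s : Finset ι) (w : ι → ℝ) (z : ι → EE d) :
    ev Z (∑ i ∈ s, w i • z i) = (∑ i ∈ s, w i * ev Z (z i)) + (1 - ∑ i ∈ s, w i) * Z.2 := by
  simp only [ev, inner_sum, inner_smul_right, mul_add, Finset.sum_add_distrib, ← Finset.sum_mul]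
  ring

theorem hull_range {d n : ℕ} (p : Fin n → EE d) (y : EE d) : y ∈ convexHull ℝ (Set.range p) ↔
    ∃ w : Fin n → ℝ, (∀ i, 0 ≤ w i) ∧ ∑ i, w i = 1 ∧ ∑ i, w i • p i = y := by
  constructor
  · intro h
    rw [← Set.image_univ] at h
    have := (mem_convexHull_iff_exists_fintype (R := ℝ) (s := p '' Set.univ) (x := y)).1 h
    rw [Set.image_univ, convexHull_range_eq_exists_affineCombination] at h
    obtain ⟨s, w, hw0, hw1, rfl⟩ := h
    rw [s.affineCombination_eq_linear_combination _ _ hw1]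
    classical
    refine ⟨fun i => if i ∈ s then w i else 0, fun i => ?_, ?_, ?_⟩
    · dsimp only; split_ifs with h
      · exact hw0 i h
      · exact le_rfl
    · simpa using hw1
    · simp [ite_smul]
  · rintro ⟨w, h0, h1, rfl⟩
    exact (convex_convexHull ℝ _).sum_mem (fun i _ => h0 i) h1
      (fun i _ => subset_convexHull _ _ ⟨i, rfl⟩)

theorem hull_image {d n : ℕ} (p : Fin n → EE d) (S : Set (Fin n)) (y : EE d) : y ∈ convexHull ℝ (p '' S) ↔
    ∃ w : Fin n → ℝ, (∀ i, 0 ≤ w i) ∧ (∀ i, i ∉ S → w i = 0) ∧ ∑ i, w i = 1 ∧ ∑ i, w i • p i = y := by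
  classical
  constructor
  · intro h
    have hc : Convex ℝ {y : EE d | ∃ w : Fin n → ℝ, (∀ i, 0 ≤ w i) ∧ (∀ i, i ∉ S → w i = 0) ∧
        ∑ i, w i = 1 ∧ ∑ i, w i • p i = y} := by
      rintro _ ⟨w, h1, h2, h3, rfl⟩ _ ⟨w', h1', h2', h3', rfl⟩ a b ha hb hab
      refine ⟨fun i => a * w i + b * w' i, fun i => ?_, fun i hi => ?_, ?_, ?_⟩
      · have := h1 i; have := h1' i; positivity
      · simp [h2 i hi, h2' i hi]
      · rw [Finset.sum_add_distrib, ← Finset.mul_sum, ← Finset.mul_sum, h3, h3', mul_one, mul_one, hab]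
      · simp only [add_smul, Finset.sum_add_distrib, mul_smul, Finset.smul_sum]
    refine convexHull_min ?_ hc h
    rintro _ ⟨i, hi, rfl⟩
    refine ⟨Pi.single i 1, fun j => ?_, fun j hj => ?_, ?_, ?_⟩
    · by_cases h : j = i
      · subst h; simp
      · simp [h]
    · have : j ≠ i := fun h => hj (h ▸ hi)
      simp [this]
    · simp
    · simp [Pi.single_apply, ite_smul]
  · rintro ⟨w, h0, hS, h1, rfl⟩
    have : ∑ i, w i • p i = ∑ i ∈ Finset.univ.filter (· ∈ S), w i • p i := by
      rw [Finset.sum_filter]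
      refine Finset.sum_congr rfl fun i _ => ?_
      split_ifs with h
      · rfl
      · rw [hS i h, zero_smul]
    rw [this]
    refine (convex_convexHull ℝ _).sum_mem (fun i _ => h0 i) ?_ (fun i hi => subset_convexHull _ _ ⟨i, by simpa using hi, rfl⟩)
    rw [← h1, Finset.sum_filter]
    refine Finset.sum_congr rfl fun i _ => ?_
    split_ifs with h
    · rfl
    · rw [hS i h]

section
variable {n d : ℕ} {p : Fin n → EE d}

theorem ev_hull_nonneg {Z : EE d × ℝ} (h : ∀ i, 0 ≤ ev Z (p i)) {y : EE d}
    (hy : y ∈ convexHull ℝ (Set.range p)) : 0 ≤ ev Z y := by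
  obtain ⟨w, h0, h1, rfl⟩ := (hull_range p y).1 hy
  rw [ev_comb, h1]
  have : 0 ≤ ∑ i, w i * ev Z (p i) := Finset.sum_nonneg fun i _ => mul_nonneg (h0 i) (h i)
  linarith

theorem int_span {x : EE d} (hx : x ∈ interior (convexHull ℝ (Set.range p))) (u : EE d) (hu : u ≠ 0) :
    ∃ i, 0 < ⟪u, p i - x⟫_ℝ := by
  by_contra hcon
  push Not at hcon
  have hc : Continuous fun t : ℝ => x + t • u := by fun_prop
  have h1 : ∀ᶠ t : ℝ in 𝓝[>] (0:ℝ), x + t • u ∈ convexHull ℝ (Set.range p) := by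
    have := (hc.tendsto 0).mono_left (nhdsWithin_le_nhds (s := Set.Ioi 0))
    refine this.eventually ?_
    simpa using mem_interior_iff_mem_nhds.1 hx
  obtain ⟨t, ht, ht0⟩ := (h1.and self_mem_nhdsWithin).exists
  have h2 := ev_hull_nonneg (Z := (-u, ⟪u, x⟫_ℝ)) (p := p) (by
    intro i
    have := hcon i
    simp only [ev, inner_sub_right, inner_neg_left] at this ⊢
    linarith) ht
  simp only [ev, inner_neg_left, inner_add_right, inner_smul_right] at h2
  have h3 : 0 < ⟪u, u⟫_ℝ := real_inner_self_pos.2 hu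
  have ht0' : 0 < t := ht0
  nlinarith

theorem int_pos {x : EE d} (hx : x ∈ interior (convexHull ℝ (Set.range p))) {Z : EE d × ℝ}
    (hZ : ∀ i, 0 ≤ ev Z (p i)) (hne : ∃ i, ev Z (p i) ≠ 0) : 0 < ev Z x := by
  refine lt_of_le_of_ne (ev_hull_nonneg hZ (interior_subset hx)) fun h0 => ?_
  by_cases h : Z.1 = 0
  · obtain ⟨i, hi⟩ := hne
    apply hi
    simp only [ev, h, inner_zero_left] at h0 ⊢
    exact h0.symm
  · obtain ⟨i, hi⟩ := int_span hx (-Z.1) (neg_ne_zero.2 h)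
    rw [inner_neg_left, ev_sub_pt, ← h0] at hi
    have := hZ i
    linarith

def Gen (p : Fin n → EE d) (a : Fin n → ℝ) : Prop :=
  ∀ S : Finset (Fin n), (∃ Z, ∀ i ∈ S, ev Z (p i) = a i) → ∀ l : Fin n → ℝ, ∑ i ∈ S, l i = 0 →
    ∑ i ∈ S, l i • p i = 0 → ∀ i ∈ S, l i = 0

theorem exists_gen (p : Fin n → EE d) : ∃ a, Gen p a := by
  classical
  let Dep : Finset (Fin n) → (Fin n → ℝ) → Prop := fun S l => ∑ i ∈ S, l i = 0 ∧
    ∑ i ∈ S, l i • p i = 0 ∧ ∃ i ∈ S, l i ≠ 0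
  have hex : ∀ S, ∃ l, (∃ l', Dep S l') → Dep S l := by
    intro S
    by_cases h : ∃ l', Dep S l'
    · exact ⟨h.choose, fun _ => h.choose_spec⟩
    · exact ⟨0, fun h' => absurd h' h⟩
  choose l hl using hex
  let P : Finset (Fin n) → Polynomial ℝ := fun S => ∑ i ∈ S, Polynomial.C (l S i) * Polynomial.X ^ (i : ℕ)
  have hP : ∀ S, (∃ l', Dep S l') → P S ≠ 0 := by
    intro S h h0
    obtain ⟨_, _, i, hi, hne⟩ := hl S h
    apply hne
    have := congrArg (fun q => Polynomial.coeff q (i : ℕ)) h0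
    simp only [P, Polynomial.finsetSum_coeff, Polynomial.coeff_C_mul, Polynomial.coeff_X_pow,
      Polynomial.coeff_zero] at this
    rw [Finset.sum_eq_single i] at this
    · simpa using this
    · intro b _ hb
      have : (i : ℕ) ≠ b := fun h => hb (Fin.ext h.symm)
      simp [this]
    · exact fun h => absurd hi h
  obtain ⟨t, ht⟩ : ∃ t : ℝ, ∀ S, (∃ l', Dep S l') → (P S).eval t ≠ 0 := by
    have hfin : (⋃ S : Finset (Fin n), {t : ℝ | (∃ l', Dep S l') ∧ (P S).eval t = 0}).Finite := by
      refine Set.finite_iUnion fun S => ?_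
      by_cases h : ∃ l', Dep S l'
      · refine ((P S).roots.toFinset.finite_toSet).subset ?_
        rintro t ⟨_, ht⟩
        simpa [hP S h] using ht
      · convert Set.finite_empty
        ext t; simp [h]
    obtain ⟨t, ht⟩ := hfin.exists_notMem
    refine ⟨t, fun S h h0 => ht ?_⟩
    rw [Set.mem_iUnion]
    exact ⟨S, h, h0⟩
  refine ⟨fun i => t ^ (i : ℕ), ?_⟩
  rintro S ⟨Z, hZ⟩ l' h1 h2
  by_contra hcon
  push Not at hcon
  have hD : ∃ l', Dep S l' := ⟨l', h1, h2, hcon⟩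
  apply ht S hD
  obtain ⟨g1, g2, _⟩ := hl S hD
  have := ev_comb Z S (l S) p
  rw [g1, g2] at this
  simp only [P, Polynomial.eval_finsetSum, Polynomial.eval_mul, Polynomial.eval_C, Polynomial.eval_pow,
    Polynomial.eval_X]
  rw [Finset.sum_congr rfl (fun i hi => congrArg (l S i * ·) (hZ i hi))] at this
  simp only [ev, inner_zero_right] at this
  linarith

def T0 (p : Fin n → EE d) (a : Fin n → ℝ) (S : Finset (Fin n)) : Prop :=
  (∃ Z, (∀ i, 0 ≤ ev Z (p i)) ∧ (∀ i ∈ S, ev Z (p i) = 0) ∧ ∃ i, ev Z (p i) ≠ 0) ∧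
  ∃ Z, (∀ i ∈ S, ev Z (p i) = a i) ∧ ∀ i, i ∉ S → a i < ev Z (p i)

theorem T0_TT {a : Fin n → ℝ} {x : EE d} (hx : x ∈ interior (convexHull ℝ (Set.range p))) :
    ∃ ε : ℝ, 0 < ε ∧ ∀ S, TT (fun i => p i - x) (fun i => 1 - ε * a i) S ↔ T0 p a S := by
  have hA : ∀ S, ∀ᶠ ε : ℝ in 𝓝[>] (0:ℝ), T0 p a S → TT (fun i => p i - x) (fun i => 1 - ε * a i) S := by
    intro S
    by_cases hS : T0 p a S
    swap
    · exact Eventually.of_forall fun ε h => absurd h hS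
    obtain ⟨⟨Z0, h1, h2, h3⟩, Z1, h4, h5⟩ := hS
    have hpos := int_pos hx h1 h3
    have hc : Tendsto (fun ε : ℝ => 1 - ε * ev Z1 x) (𝓝[>] 0) (𝓝 (1 - 0 * ev Z1 x)) :=
      ((by fun_prop : Continuous fun ε : ℝ => 1 - ε * ev Z1 x).tendsto 0).mono_left nhdsWithin_le_nhds
    have := hc.eventually (lt_mem_nhds (a := 0) (by simp))
    filter_upwards [this, self_mem_nhdsWithin] with ε hε hε0 _
    have hε0' : 0 < ε := hε0
    set s := (1 - ε * ev Z1 x) / ev Z0 x with hs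
    have hs0 : 0 < s := div_pos hε hpos
    have hsx : s * ev Z0 x = 1 - ε * ev Z1 x := by rw [hs]; field_simp
    have hval : ∀ i, ⟪-(ε • Z1.1 + s • Z0.1), p i - x⟫_ℝ = 1 - (ε * ev Z1 (p i) + s * ev Z0 (p i)) := by
      intro i
      rw [inner_neg_left, inner_add_left, inner_smul_left, inner_smul_left, ev_sub_pt, ev_sub_pt]
      simp only [RCLike.conj_to_real]
      linear_combination hsx
    refine ⟨-(ε • Z1.1 + s • Z0.1), fun i hi => ?_, fun i hi => ?_⟩
    · rw [hval, h4 i hi, h2 i hi]; ring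
    · rw [hval]
      have := mul_lt_mul_of_pos_left (h5 i hi) hε0'
      have := mul_nonneg hs0.le (h1 i)
      linarith
  have hB : ∀ S, ∀ᶠ ε : ℝ in 𝓝[>] (0:ℝ), TT (fun i => p i - x) (fun i => 1 - ε * a i) S → T0 p a S := by
    intro S
    let C : Set (ℝ × EE d) := {q | q.1 ∈ Set.Icc (0:ℝ) 1 ∧ (∀ i, q.1 * a i ≤ 1 - ⟪q.2, p i - x⟫_ℝ) ∧
      ∀ i ∈ S, 1 - ⟪q.2, p i - x⟫_ℝ = q.1 * a i}
    obtain ⟨m, hm, hbd⟩ := spanning_bound (fun i => p i - x) (int_span hx)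
    have hCc : IsClosed C := by
      have hCe : C = (Prod.fst ⁻¹' Set.Icc (0:ℝ) 1) ∩
          ((⋂ i, {q : ℝ × EE d | q.1 * a i ≤ 1 - ⟪q.2, p i - x⟫_ℝ}) ∩
            ⋂ i ∈ S, {q : ℝ × EE d | 1 - ⟪q.2, p i - x⟫_ℝ = q.1 * a i}) := by
        ext q; simp [C]
      rw [hCe]
      refine IsClosed.inter (isClosed_Icc.preimage continuous_fst) (IsClosed.inter ?_ ?_)
      · exact isClosed_iInter fun i => isClosed_le (by fun_prop) (by fun_prop)
      · exact isClosed_iInter fun i => isClosed_iInter fun _ => isClosed_eq (by fun_prop) (by fun_prop)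
    have hCb : C ⊆ Set.Icc (0:ℝ) 1 ×ˢ Metric.closedBall (0 : EE d) ((∑ i, (1 + |a i|)) / m) := by
      rintro ⟨ε, v⟩ ⟨h1, h2, _⟩
      refine ⟨h1, ?_⟩
      rw [mem_closedBall_zero_iff, le_div_iff₀ hm, mul_comm]
      refine (hbd v).trans (Finset.sum_le_sum fun i _ => max_le ?_ ?_)
      · have h3 := h2 i
        have h4 : -|a i| ≤ ε * a i := by
          have := neg_abs_le (a i)
          have := abs_nonneg (a i)
          have h10 := h1.1
          have h11 := h1.2
          simp only at h10 h11
          nlinarith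
        simp only at h3
        linarith
      · positivity
    have hcomp : IsCompact C := ((isCompact_Icc.prod (isCompact_closedBall _ _)).of_isClosed_subset hCc hCb)
    have hproj := (hcomp.image continuous_fst).isClosed
    by_cases h0 : (0:ℝ) ∈ Prod.fst '' C
    · obtain ⟨⟨ε0, v⟩, ⟨-, hv1, hv2⟩, rfl⟩ := h0
      simp only [zero_mul] at hv1 hv2
      filter_upwards [self_mem_nhdsWithin] with ε hε hT
      have hε0' : 0 < ε := hε
      have hev : ∀ (w y : EE d), ev (-w, 1 + ⟪w, x⟫_ℝ) y = 1 - ⟪w, y - x⟫_ℝ := by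
        intro w y; simp [ev, inner_sub_right]; ring
      constructor
      · refine ⟨(-v, 1 + ⟪v, x⟫_ℝ), fun i => ?_, fun i hi => ?_, ?_⟩
        · rw [hev]; exact hv1 i
        · rw [hev]; exact hv2 i hi
        · by_contra hcon
          push Not at hcon
          have h1 := ev_hull_nonneg (Z := -(-v, 1 + ⟪v, x⟫_ℝ)) (p := p) (by
            intro i
            rw [← neg_one_smul ℝ, ev_smul, hcon i]; simp) (interior_subset hx)
          rw [← neg_one_smul ℝ, ev_smul, hev] at h1
          simp at h1
          linarith
      · obtain ⟨w, hw1, hw2⟩ := hT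
        refine ⟨ε⁻¹ • (-w, 1 + ⟪w, x⟫_ℝ), fun i hi => ?_, fun i hi => ?_⟩
        · rw [ev_smul, hev, hw1 i hi]; field_simp; ring
        · rw [ev_smul, hev, lt_inv_mul_iff₀ hε0']
          have := hw2 i hi
          linarith
    · have h1 : ∀ᶠ ε : ℝ in 𝓝[>] (0:ℝ), ε ∉ Prod.fst '' C :=
        nhdsWithin_le_nhds (hproj.isOpen_compl.mem_nhds h0)
      have h2 : ∀ᶠ ε : ℝ in 𝓝[>] (0:ℝ), ε < 1 := nhdsWithin_le_nhds (Iio_mem_nhds one_pos)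
      filter_upwards [h1, h2, self_mem_nhdsWithin] with ε hε hε1 hε0 hT
      exfalso
      apply hε
      obtain ⟨v, hv1, hv2⟩ := hT
      refine ⟨(ε, v), ⟨⟨le_of_lt hε0, hε1.le⟩, fun i => ?_, fun i hi => ?_⟩, rfl⟩
      · by_cases hi : i ∈ S
        · simp only [hv1 i hi]; linarith
        · have := hv2 i hi
          simp only; linarith
      · simp only [hv1 i hi]; ring
  obtain ⟨ε, ⟨h1, h2⟩, h3⟩ := (((eventually_all.2 hA).and (eventually_all.2 hB)).and
    (self_mem_nhdsWithin (s := Set.Ioi (0:ℝ)))).exists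
  exact ⟨ε, h3, fun S => ⟨h2 S, h1 S⟩⟩

theorem T0_indep {a : Fin n → ℝ} (hg : Gen p a) {x : EE d}
    (hx : x ∈ interior (convexHull ℝ (Set.range p))) {S : Finset (Fin n)} (hS : T0 p a S) :
    LinearIndepOn ℝ (fun i => p i - x) (S : Set (Fin n)) := by
  obtain ⟨⟨Z0, h1, h2, h3⟩, Z1, h4, h5⟩ := hS
  have hpos := int_pos hx h1 h3
  rw [linearIndepOn_finset_iff]
  intro l hl
  have e1 : ∑ i ∈ S, l i = 0 := by
    have h := congrArg (fun y => ⟪Z0.1, y⟫_ℝ) hl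
    simp only [inner_sum, inner_smul_right, ev_sub_pt, inner_zero_right] at h
    rw [Finset.sum_congr rfl (fun i hi => by rw [h2 i hi, zero_sub]), ← Finset.sum_mul] at h
    exact (mul_eq_zero.1 h).resolve_right (neg_ne_zero.2 hpos.ne')
  refine hg S ⟨Z1, h4⟩ l e1 ?_
  simp only [smul_sub, Finset.sum_sub_distrib, ← Finset.sum_smul, e1, zero_smul, sub_zero] at hl
  exact hl

theorem T0_empty {a : Fin n → ℝ} (hn : 0 < n) : T0 p a ∅ := by
  refine ⟨⟨(0, 1), fun i => ?_, by simp, ⟨⟨0, hn⟩, ?_⟩⟩, (0, ∑ i, (|a i| + 1)), by simp, fun i _ => ?_⟩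
  · rw [ev_const]; exact zero_le_one
  · rw [ev_const]; exact one_ne_zero
  · rw [ev_const]
    have h1 : |a i| + 1 ≤ ∑ i, (|a i| + 1) :=
      Finset.single_le_sum (f := fun i => |a i| + 1) (fun i _ => by positivity) (Finset.mem_univ i)
    have := le_abs_self (a i)
    linarith

theorem pos_of_int {x : EE d} (hx : x ∈ interior (convexHull ℝ (Set.range p))) : 0 < n := by
  rcases Nat.eq_zero_or_pos n with h | h
  · subst h
    have : Set.range p = ∅ := Set.range_eq_empty _
    rw [this] at hx; simp at hx
  · exact h

theorem T0_fan {a : Fin n → ℝ} (hg : Gen p a) {x : EE d}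
    (hx : x ∈ interior (convexHull ℝ (Set.range p))) :
    Fan (fun i => p i - x) (T0 p a) ∧ ∃ b, Amp (fun i => p i - x) (T0 p a) b := by
  obtain ⟨ε, hε, h⟩ := T0_TT (a := a) hx
  have hTT : TT (fun i => p i - x) (fun i => 1 - ε * a i) = T0 p a := by
    funext S; exact propext (h S)
  have h1 := fan_of (fun i => p i - x) (fun i => 1 - ε * a i) (int_span hx)
    ((h ∅).2 (T0_empty (pos_of_int hx))) (fun S hS => T0_indep hg hx ((h S).1 hS))
  have h2 := amp_TT (fun i => p i - x) (fun i => 1 - ε * a i)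
  rw [hTT] at h1 h2
  exact ⟨h1, _, h2⟩

/-- the linear functional giving `1 - Z / Z x` -/
theorem tight_of_Z {x : EE d} {Z : EE d × ℝ} (hZ : 0 < ev Z x) (y : EE d) :
    ⟪-((ev Z x)⁻¹ • Z.1), y - x⟫_ℝ = 1 - ev Z y / ev Z x := by
  rw [inner_neg_left, inner_smul_left, ev_sub_pt]
  simp only [RCLike.conj_to_real]
  field_simp; ring

theorem T0_nef {a : Fin n → ℝ} {x : EE d} (hx : x ∈ interior (convexHull ℝ (Set.range p))) :
    Nef (fun i => p i - x) (T0 p a) (fun _ => 1) := by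
  rintro S ⟨⟨Z0, h1, h2, h3⟩, -⟩
  have hpos := int_pos hx h1 h3
  refine ⟨-((ev Z0 x)⁻¹ • Z0.1), fun i hi => ?_, fun i => ?_⟩
  · rw [tight_of_Z hpos, h2 i hi]; simp
  · rw [tight_of_Z hpos]
    have := div_nonneg (h1 i) hpos.le
    linarith

def Expo (p : Fin n → EE d) : Prop := ∀ i, ∃ Z, ev Z (p i) = 0 ∧ ∀ j, j ≠ i → 0 < ev Z (p j)

theorem expo_of_vert (hinj : Function.Injective p)
    (hv : Set.range p = Set.extremePoints ℝ (convexHull ℝ (Set.range p))) : Expo p := by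
  intro i
  have hK : IsCompact (convexHull ℝ (p '' {i}ᶜ)) := (Set.toFinite _).isCompact_convexHull ℝ
  have hnot : p i ∉ convexHull ℝ (p '' {i}ᶜ) := by
    intro h
    have hext : p i ∈ Set.extremePoints ℝ (convexHull ℝ (Set.range p)) := hv ▸ ⟨i, rfl⟩
    have hmem : p i ∈ Set.extremePoints ℝ (convexHull ℝ (p '' {i}ᶜ)) :=
      inter_extremePoints_subset_extremePoints_of_subset (convexHull_mono (Set.image_subset_range _ _)) ⟨h, hext⟩
    obtain ⟨j, hj, hij⟩ := extremePoints_convexHull_subset hmem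
    exact hj (hinj hij)
  obtain ⟨f, u, v, hf1, huv, hf2⟩ := geometric_hahn_banach_compact_closed
    (convex_singleton (p i)) isCompact_singleton (convex_convexHull ℝ _) hK.isClosed
    (Set.disjoint_singleton_left.2 hnot)
  refine ⟨((InnerProductSpace.toDual ℝ (EE d)).symm f, - f (p i)), ?_, fun j hj => ?_⟩
  · simp [ev]
  · have h1 := hf1 (p i) rfl
    have h2 := hf2 (p j) (subset_convexHull _ _ ⟨j, hj, rfl⟩)
    simp only [ev, InnerProductSpace.toDual_symm_apply]
    linarith

theorem Expo.nonneg {Z : EE d × ℝ} {i : Fin n} (h1 : ev Z (p i) = 0) (h2 : ∀ j, j ≠ i → 0 < ev Z (p j)) (j : Fin n) :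
    0 ≤ ev Z (p j) := by
  by_cases h : j = i
  · rw [h, h1]
  · exact (h2 j h).le

theorem exists_ne_of_int (hd : 0 < d) {x : EE d} (hx : x ∈ interior (convexHull ℝ (Set.range p))) (i : Fin n) :
    ∃ j, j ≠ i := by
  by_contra hcon
  push Not at hcon
  have hu : (EuclideanSpace.single ⟨0, hd⟩ 1 : EE d) ≠ 0 := by
    intro h
    have := congrArg (fun v : EE d => v ⟨0, hd⟩) h
    simp at this
  obtain ⟨j, hj⟩ := int_span hx _ hu
  obtain ⟨k, hk⟩ := int_span hx _ (neg_ne_zero.2 hu)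
  rw [hcon j] at hj
  rw [hcon k, inner_neg_left] at hk
  linarith

theorem T0_single {a : Fin n → ℝ} (hE : Expo p) (hd : 0 < d) {x : EE d}
    (hx : x ∈ interior (convexHull ℝ (Set.range p))) (i : Fin n) : T0 p a {i} := by
  obtain ⟨Z, h1, h2⟩ := hE i
  obtain ⟨j0, hj0⟩ := exists_ne_of_int hd hx i
  refine ⟨⟨Z, Expo.nonneg h1 h2, by simpa using h1, j0, (h2 j0 hj0).ne'⟩, ?_⟩
  obtain ⟨δ, hδ, hs⟩ := small_pos (fun j => ev Z (p j)) (fun j => a i - a j)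
  refine ⟨δ⁻¹ • Z + (0, a i), by simp [ev_add, ev_smul, h1, ev_const], fun j hj => ?_⟩
  have hj' : j ≠ i := by simpa using hj
  have := hs j (h2 j hj')
  rw [ev_add, ev_smul, ev_const]
  have h3 : δ⁻¹ * ev Z (p j) + (a i - a j) = δ⁻¹ * (ev Z (p j) + δ * (a i - a j)) := by field_simp
  have h4 : 0 < δ⁻¹ * (ev Z (p j) + δ * (a i - a j)) := by positivity
  linarith

theorem one_big (hE : Expo p) (hd : 0 < d) {x : EE d}
    (hx : x ∈ interior (convexHull ℝ (Set.range p))) (i : Fin n) :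
    Big (fun i => p i - x) i (fun _ => 1) := by
  obtain ⟨Z, h1, h2⟩ := hE i
  obtain ⟨j0, hj0⟩ := exists_ne_of_int hd hx i
  have hpos := int_pos hx (Expo.nonneg h1 h2) ⟨j0, (h2 j0 hj0).ne'⟩
  refine ⟨-((ev Z x)⁻¹ • Z.1), ?_, fun j hj => ?_⟩
  · rw [tight_of_Z hpos, h1]; simp
  · rw [tight_of_Z hpos]
    have := div_pos (h2 j hj) hpos
    linarith

end

open scoped InnerProductSpace Topology
open Filter

section
variable {n d : ℕ} {p : Fin n → EE d} {a : Fin n → ℝ}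

/-- the mixed degree with all entries one -/
noncomputable def WW (p : Fin n → EE d) (a : Fin n → ℝ) (x : EE d) (k : ℕ) (S : Finset (Fin n)) : ℝ :=
  FF (fun i => p i - x) (T0 p a) (List.replicate k (fun _ => 1)) S

theorem WW_nonneg (hg : Gen p a) {x : EE d} (hx : x ∈ interior (convexHull ℝ (Set.range p))) (k : ℕ)
    (S : Finset (Fin n)) : 0 ≤ WW p a x k S :=
  (T0_fan hg hx).1.nonneg _ (fun c hc => by rw [List.eq_of_mem_replicate hc]; exact T0_nef hx) S

theorem WW_step (hg : Gen p a) {x : EE d} (hx : x ∈ interior (convexHull ℝ (Set.range p))) (k : ℕ)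
    {S : Finset (Fin n)} (hS : T0 p a S) {Z : EE d × ℝ} (hZ : ∀ i ∈ S, ev Z (p i) = 0) (hpos : 0 < ev Z x) :
    WW p a x (k+1) S = ∑ j, ev Z (p j) / ev Z x * WW p a x k (insert j S) := by
  rw [WW, List.replicate_succ, (T0_fan hg hx).1.cons _ hS _ (-((ev Z x)⁻¹ • Z.1))]
  · refine Finset.sum_congr rfl fun j _ => ?_
    rw [tight_of_Z hpos, sub_sub_cancel]; rfl
  · intro i hi
    rw [tight_of_Z hpos, hZ i hi]; simp

theorem continuousOn_DD (S : Finset (Fin n)) : Continuous fun x : EE d => DD (fun i => p i - x) S := by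
  unfold DD
  split_ifs with h
  · refine continuous_abs.comp ?_
    have : Continuous fun m : Fin d → EE d => detE d m := by
      unfold detE
      simp only [Module.Basis.det_apply]
      refine Continuous.matrix_det ?_
      refine continuous_matrix fun i j => ?_
      simp only [Module.Basis.toMatrix_apply, OrthonormalBasis.coe_toBasis_repr_apply,
        EuclideanSpace.basisFun_repr]
      fun_prop
    exact this.comp (by fun_prop)
  · exact continuous_const

theorem WW_cont (hg : Gen p a) (k : ℕ) : ∀ S : Finset (Fin n),
    ContinuousOn (fun x => WW p a x k S) (interior (convexHull ℝ (Set.range p))) := by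
  induction k with
  | zero =>
    intro S
    simp only [WW, List.replicate_zero, FF]
    by_cases hS : T0 p a S ∧ S.card = d
    · simp only [if_pos hS]
      refine ContinuousOn.inv₀ (continuousOn_DD S).continuousOn fun x hx => ?_
      exact (DD_pos (T0_indep hg hx hS.1) hS.2).ne'
    · simp only [if_neg hS]; exact continuousOn_const
  | succ k ih =>
    intro S
    by_cases hS : T0 p a S
    · obtain ⟨⟨Z, h1, h2, h3⟩, -⟩ := id hS
      refine ContinuousOn.congr (f := fun x => ∑ j, ev Z (p j) / ev Z x * WW p a x k (insert j S)) ?_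
        (fun x hx => WW_step hg hx k hS h2 (int_pos hx h1 h3))
      refine continuousOn_finsetSum _ fun j _ => ContinuousOn.mul ?_ (ih _)
      refine ContinuousOn.div continuousOn_const ?_ fun x hx => (int_pos hx h1 h3).ne'
      unfold ev; fun_prop
    · refine ContinuousOn.congr (f := fun x => 0) continuousOn_const fun x hx => ?_
      exact (T0_fan hg hx).1.not_mem _ hS

theorem WW_span (hg : Gen p a) {x : EE d} (hx : x ∈ interior (convexHull ℝ (Set.range p))) (k : ℕ) :
    ∀ S, T0 p a S → S.card + k = d → WW p a x k S ≠ 0 → ∀ m,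
      (∀ Z, (∀ i, 0 ≤ ev Z (p i)) → (∀ i ∈ S, ev Z (p i) = 0) → ev Z (p m) = 0) →
      ∃ l : Fin n → ℝ, ∑ i ∈ S, l i = 1 ∧ ∑ i ∈ S, l i • p i = p m := by
  classical
  induction k with
  | zero =>
    intro S hS hc _ m hm
    have hsp := span_of_indep (T0_indep hg hx hS) (by simpa using hc)
    obtain ⟨l, hl⟩ := mem_span_fin (p := fun i => p i - x) (S := S) (x := p m - x) (by rw [hsp]; trivial)
    obtain ⟨⟨Z, h1, h2, h3⟩, -⟩ := hS
    have hpos := int_pos hx h1 h3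
    have e1 : ∑ i ∈ S, l i = 1 := by
      have h := congrArg (fun y => ⟪Z.1, y⟫_ℝ) hl
      simp only [inner_sum, inner_smul_right, ev_sub_pt] at h
      rw [Finset.sum_congr rfl (fun i hi => by rw [h2 i hi, zero_sub]), ← Finset.sum_mul, hm Z h1 h2] at h
      have : (∑ i ∈ S, l i - 1) * ev Z x = 0 := by linarith
      have := (mul_eq_zero.1 this).resolve_right hpos.ne'
      linarith
    refine ⟨l, e1, ?_⟩
    simp only [smul_sub, Finset.sum_sub_distrib, ← Finset.sum_smul, e1, one_smul] at hl
    exact sub_left_injective hl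
  | succ k ih =>
    intro S hS hc hne m hm
    obtain ⟨⟨Z, h1, h2, h3⟩, -⟩ := id hS
    have hpos := int_pos hx h1 h3
    rw [WW_step hg hx k hS h2 hpos] at hne
    obtain ⟨j, -, hj⟩ := Finset.exists_ne_zero_of_sum_ne_zero hne
    have hZj : ev Z (p j) ≠ 0 := fun h => hj (by rw [h]; simp)
    have hWj : WW p a x k (insert j S) ≠ 0 := fun h => hj (by rw [h]; simp)
    have hT : T0 p a (insert j S) := by
      by_contra hT; exact hWj ((T0_fan hg hx).1.not_mem _ hT)
    have hjS : j ∉ S := fun h => hZj (h2 j h)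
    obtain ⟨l, hl1, hl2⟩ := ih _ hT (by rw [Finset.card_insert_of_notMem hjS]; omega) hWj m
      (fun Z hZ1 hZ2 => hm Z hZ1 fun i hi => hZ2 i (by simp [hi]))
    have h := ev_comb Z (insert j S) l p
    rw [hl1, hl2, hm Z h1 h2, Finset.sum_insert hjS, Finset.sum_eq_zero (s := S) (fun i hi => by rw [h2 i hi, mul_zero])] at h
    have hlj : l j = 0 := by
      have : l j * ev Z (p j) = 0 := by linarith
      exact (mul_eq_zero.1 this).resolve_right hZj
    rw [Finset.sum_insert hjS, hlj] at hl1 hl2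
    exact ⟨l, by simpa using hl1, by simpa using hl2⟩

theorem no_collinear (hE : Expo p) {i j m : Fin n} (hij : i ≠ j) (hmi : m ≠ i) (hmj : m ≠ j) (s t : ℝ)
    (hst : s + t = 1) (h : p m = s • p i + t • p j) : False := by
  have hev : ∀ Z, ev Z (p m) = s * ev Z (p i) + t * ev Z (p j) := by
    intro Z
    rw [h]
    simp only [ev, inner_add_right, inner_smul_right]
    linear_combination -Z.2 * hst
  obtain ⟨Z, h1, h2⟩ := hE m
  have e := hev Z
  rw [h1] at e
  have hi := h2 i hmi.symm
  have hj := h2 j hmj.symm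
  rcases lt_or_ge s 0 with hs | hs
  · obtain ⟨Y, k1, k2⟩ := hE j
    have e := hev Y
    rw [k1] at e
    have := k2 m hmj
    have := k2 i hij
    nlinarith
  rcases lt_or_ge t 0 with ht | ht
  · obtain ⟨Y, k1, k2⟩ := hE i
    have e := hev Y
    rw [k1] at e
    have := k2 m hmi
    have := k2 j hij.symm
    nlinarith
  have e1 := mul_nonneg hs hi.le
  have e2 := mul_nonneg ht hj.le
  have e3 : s * ev Z (p i) = 0 := by linarith
  have e4 : t * ev Z (p j) = 0 := by linarith
  have := (mul_eq_zero.1 e3).resolve_right hi.ne'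
  have := (mul_eq_zero.1 e4).resolve_right hj.ne'
  linarith

theorem face_extreme {Z : EE d × ℝ} (hZ : ∀ i, 0 ≤ ev Z (p i)) :
    IsExtreme ℝ (convexHull ℝ (Set.range p)) (convexHull ℝ (p '' {i | ev Z (p i) = 0})) := by
  have hmem : ∀ y, y ∈ convexHull ℝ (Set.range p) → ev Z y = 0 →
      y ∈ convexHull ℝ (p '' {i | ev Z (p i) = 0}) := by
    intro y hy h0
    obtain ⟨w, hw0, hw1, rfl⟩ := (hull_range p y).1 hy
    rw [hull_image]
    refine ⟨w, hw0, fun i hi => ?_, hw1, rfl⟩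
    rw [ev_comb, hw1, sub_self, zero_mul, add_zero,
      Finset.sum_eq_zero_iff_of_nonneg (fun i _ => mul_nonneg (hw0 i) (hZ i))] at h0
    exact (mul_eq_zero.1 (h0 i (Finset.mem_univ _))).resolve_right hi
  have hzero : ∀ y, y ∈ convexHull ℝ (p '' {i | ev Z (p i) = 0}) → ev Z y = 0 := by
    intro y hy
    obtain ⟨w, hw0, hwS, hw1, rfl⟩ := (hull_image p _ y).1 hy
    rw [ev_comb, hw1, sub_self, zero_mul, add_zero]
    refine Finset.sum_eq_zero fun i _ => ?_
    by_cases h : ev Z (p i) = 0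
    · rw [h, mul_zero]
    · rw [hwS i h, zero_mul]
  constructor
  · exact convexHull_mono (Set.image_subset_range _ _)
  · intro y hy z hz u hu huyz
    refine hmem y hy ?_
    obtain ⟨s, t, hs, ht, hst, rfl⟩ := huyz
    have h0 := hzero _ hu
    have e : ev Z (s • y + t • z) = s * ev Z y + t * ev Z z := by
      simp only [ev, inner_add_right, inner_smul_right]
      linear_combination -Z.2 * hst
    have hy0 := ev_hull_nonneg hZ hy
    have hz0 := ev_hull_nonneg hZ hz
    rw [e] at h0
    have := mul_nonneg ht.le hz0
    have h1 := mul_nonneg hs.le hy0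
    have : s * ev Z y = 0 := by linarith
    exact (mul_eq_zero.1 this).resolve_left hs.ne'

theorem edge_of_exposed {i j : Fin n} (h : ∀ m, m ≠ i → m ≠ j → ∃ Z, (∀ i, 0 ≤ ev Z (p i)) ∧
    ev Z (p i) = 0 ∧ ev Z (p j) = 0 ∧ ev Z (p m) ≠ 0) :
    IsExtreme ℝ (convexHull ℝ (Set.range p)) (segment ℝ (p i) (p j)) := by
  have hex : ∀ m, ∃ Z, (∀ i, 0 ≤ ev Z (p i)) ∧ ev Z (p i) = 0 ∧ ev Z (p j) = 0 ∧
      (m ≠ i → m ≠ j → ev Z (p m) ≠ 0) := by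
    intro m
    by_cases hm : m ≠ i ∧ m ≠ j
    · obtain ⟨Z, h1, h2, h3, h4⟩ := h m hm.1 hm.2
      exact ⟨Z, h1, h2, h3, fun _ _ => h4⟩
    · exact ⟨0, by simp [ev], by simp [ev], by simp [ev], fun h1 h2 => absurd ⟨h1, h2⟩ hm⟩
  choose Z h1 h2 h3 h4 using hex
  have key := face_extreme (p := p) (Z := ∑ m, Z m) (fun i => by
    rw [ev_finsum]; exact Finset.sum_nonneg fun m _ => h1 m i)
  have hset : {k | ev (∑ m, Z m) (p k) = 0} = {i, j} := by
    ext k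
    simp only [Set.mem_ofPred_eq, ev_finsum, Set.mem_insert_iff, Set.mem_singleton_iff]
    rw [Finset.sum_eq_zero_iff_of_nonneg (fun m _ => h1 m k)]
    constructor
    · intro hk
      by_contra hcon
      push Not at hcon
      exact h4 k hcon.1 hcon.2 (hk k (Finset.mem_univ _))
    · rintro (rfl | rfl) m _
      · exact h2 m
      · exact h3 m
  rw [hset, Set.image_pair, convexHull_pair] at key
  exact key

theorem edge_of_WW (hE : Expo p) (hg : Gen p a) {x : EE d} (hx : x ∈ interior (convexHull ℝ (Set.range p)))
    (hd : 2 ≤ d) {i j : Fin n} (hij : i ≠ j) (h : WW p a x (d-2) {j, i} ≠ 0) :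
    IsExtreme ℝ (convexHull ℝ (Set.range p)) (segment ℝ (p i) (p j)) := by
  have hT : T0 p a {j, i} := by
    by_contra hT; exact h ((T0_fan hg hx).1.not_mem _ hT)
  refine edge_of_exposed fun m hmi hmj => ?_
  by_contra hcon
  push Not at hcon
  obtain ⟨l, hl1, hl2⟩ := WW_span hg hx (d-2) {j, i} hT (by rw [Finset.card_pair hij.symm]; omega) h m
    (fun Z hZ1 hZ2 => hcon Z hZ1 (hZ2 i (by simp)) (hZ2 j (by simp)))
  rw [Finset.sum_pair hij.symm] at hl1 hl2
  exact no_collinear hE hij.symm hmj hmi _ _ hl1 hl2.symm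

theorem edge_dim_one {p : Fin n → EE 1} (hE : Expo p) (hinj : Function.Injective p) {i j : Fin n} (hij : i ≠ j) :
    IsExtreme ℝ (convexHull ℝ (Set.range p)) (segment ℝ (p i) (p j)) := by
  refine edge_of_exposed fun m hmi hmj => ?_
  exfalso
  have hne : p i 0 - p j 0 ≠ 0 := by
    intro h
    apply hij; apply hinj
    ext k
    rw [Subsingleton.elim k 0]; linarith
  refine no_collinear hE hij hmi hmj ((p m 0 - p j 0) / (p i 0 - p j 0)) (1 - (p m 0 - p j 0) / (p i 0 - p j 0)) (by ring) ?_
  ext k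
  rw [Subsingleton.elim k 0]
  simp only [PiLp.add_apply, PiLp.smul_apply, smul_eq_mul]
  field_simp
  ring

end

open scoped InnerProductSpace Topology
open Filter

section
variable {n d : ℕ} {p : Fin n → EE d} {a : Fin n → ℝ}

structure Stress (p : Fin n → EE d) (x : EE d) (M : Fin n → Fin n → ℝ) (α : Fin n → ℝ) : Prop where
  symm : ∀ i j, M i j = M j i
  row : ∀ i, ∑ j, M i j = α i
  pos : ∀ i, 0 < α i
  sum : ∑ i, α i = 1
  off : ∀ i j, i ≠ j → 0 ≤ M i j
  edge : ∀ i j, i ≠ j → M i j ≠ 0 → IsExtreme ℝ (convexHull ℝ (Set.range p)) (segment ℝ (p i) (p j))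
  ker : ∀ v i, ∑ j, M i j * ⟪v, p j - x⟫_ℝ = 0
  nsd : ∀ y : Fin n → ℝ, ∑ i, α i * y i = 0 → ∑ i, ∑ j, M i j * (y i * y j) ≤ 0
  full : ∀ y : Fin n → ℝ, ∑ i, α i * y i = 0 → ∑ i, ∑ j, M i j * (y i * y j) = 0 →
    ∃ v : EE d, ∀ i, ⟪v, p i - x⟫_ℝ = y i

noncomputable def alp (p : Fin n → EE d) (a : Fin n → ℝ) (x : EE d) (i : Fin n) : ℝ :=
  WW p a x (d-1) {i} / ∑ j, WW p a x (d-1) {j}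

theorem WW_single_pos (hE : Expo p) (hg : Gen p a) (hd : 0 < d) {x : EE d}
    (hx : x ∈ interior (convexHull ℝ (Set.range p))) (i : Fin n) : 0 < WW p a x (d-1) {i} := by
  obtain ⟨hF, b, hb⟩ := T0_fan hg hx
  have := hF.big_pos hb (T0_single hE hd hx i) (List.replicate (d-1) (fun _ => 1)) []
    (fun c hc => by rw [List.eq_of_mem_replicate hc]; exact ⟨T0_nef hx, one_big hE hd hx i⟩) (by simp)
    (by simp; omega)
  rw [List.append_nil] at this
  exact this

theorem WW_sum_pos (hE : Expo p) (hg : Gen p a) (hd : 0 < d) {x : EE d}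
    (hx : x ∈ interior (convexHull ℝ (Set.range p))) : 0 < ∑ i, WW p a x (d-1) {i} := by
  have : Nonempty (Fin n) := ⟨⟨0, pos_of_int hx⟩⟩
  exact Finset.sum_pos (fun i _ => WW_single_pos hE hg hd hx i) Finset.univ_nonempty

theorem alp_cont (hE : Expo p) (hg : Gen p a) (hd : 0 < d) (i : Fin n) :
    ContinuousOn (fun x => alp p a x i) (interior (convexHull ℝ (Set.range p))) :=
  (WW_cont hg _ _).div (continuousOn_finsetSum _ fun _ _ => WW_cont hg _ _)
    fun _ hx => (WW_sum_pos hE hg hd hx).ne'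

theorem stress_two (hE : Expo p) (hg : Gen p a) (hd : 2 ≤ d) {x : EE d}
    (hx : x ∈ interior (convexHull ℝ (Set.range p))) : ∃ M, Stress p x M (alp p a x) := by
  classical
  obtain ⟨hF, b, hb⟩ := T0_fan hg hx
  have hd0 : 0 < d := by omega
  set o : Fin n → ℝ := fun _ => 1 with ho
  set R := List.replicate (d-2) o with hR
  set q : Fin n → EE d := fun i => p i - x with hq
  set T := T0 p a with hT
  set G := ∑ i, WW p a x (d-1) {i} with hG
  have hGpos : 0 < G := WW_sum_pos hE hg hd0 hx
  set m : Fin n → Fin n → ℝ := fun i j => FF q T (Pi.single i 1 :: Pi.single j 1 :: R) ∅ with hm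
  have hsymm : ∀ i j, m i j = m j i := fun i j => hF.swap _ _ _ _
  have hexp1 : ∀ i z, FF q T (Pi.single i 1 :: z :: R) ∅ = ∑ j, m i j * z j := by
    intro i z
    rw [hF.swap, hF.expand]
    refine Finset.sum_congr rfl fun j _ => ?_
    rw [mul_comm]
    congr 1
    exact hF.swap _ _ _ _
  have hexp : ∀ y z, FF q T (y :: z :: R) ∅ = ∑ i, y i * ∑ j, m i j * z j := by
    intro y z
    rw [hF.expand]
    exact Finset.sum_congr rfl fun i _ => by rw [hexp1]
  have hRs : o :: R = List.replicate (d-1) o := by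
    rw [hR, ← List.replicate_succ]; congr 1; omega
  have hrow : ∀ i, ∑ j, m i j = WW p a x (d-1) {i} := by
    intro i
    have h1 := hexp1 i o
    simp only [ho, mul_one] at h1
    rw [← h1, hF.single _ (by simp), insert_empty_eq]
    show FF q T (o :: R) {i} = _
    rw [hRs]; rfl
  have halp : ∀ i, alp p a x i = WW p a x (d-1) {i} / G := fun i => rfl
  have hB1 : ∀ y, FF q T (o :: y :: R) ∅ = G * ∑ i, alp p a x i * y i := by
    intro y
    rw [hF.swap, hexp, Finset.mul_sum]
    refine Finset.sum_congr rfl fun i _ => ?_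
    simp only [ho, mul_one]
    rw [hrow, halp]; field_simp
  have hsum : ∑ i, alp p a x i = 1 := by
    simp only [halp]; rw [← Finset.sum_div, ← hG, div_self hGpos.ne']
  have hB11 : FF q T (o :: o :: R) ∅ = G := by
    rw [hB1]; simp only [ho, mul_one]; rw [hsum, mul_one]
  have hquad : ∀ y : Fin n → ℝ, ∑ i, ∑ j, m i j / G * (y i * y j) = FF q T (y :: y :: R) ∅ / G := by
    intro y
    rw [hexp, Finset.sum_div]
    refine Finset.sum_congr rfl fun i _ => ?_
    rw [Finset.mul_sum, Finset.sum_div]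
    refine Finset.sum_congr rfl fun j _ => ?_
    ring
  have haf : ∀ y, FF q T (y :: y :: R) ∅ * FF q T (o :: o :: R) ∅ ≤ FF q T (o :: y :: R) ∅ ^ 2 := fun y =>
    hF.af_nef hb R (fun c hc => by rw [List.eq_of_mem_replicate hc]; exact T0_nef hx) hF.empty
      (by rw [hR]; simp; omega) o y (T0_nef hx)
  have hsingle : ∀ i j, i ≠ j → m i j = WW p a x (d-2) {j, i} := by
    intro i j hij
    simp only [hm]
    rw [hF.single _ (by simp), hF.single _ (by simp [hij.symm]), insert_empty_eq]
    rfl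
  refine ⟨fun i j => m i j / G, ?_, ?_, ?_, hsum, ?_, ?_, ?_, ?_, ?_⟩
  · intro i j; rw [hsymm]
  · intro i; rw [← Finset.sum_div, hrow]; rfl
  · exact fun i => div_pos (WW_single_pos hE hg hd0 hx i) hGpos
  · intro i j hij
    refine div_nonneg ?_ hGpos.le
    rw [hsingle i j hij]
    exact WW_nonneg hg hx _ _
  · intro i j hij h
    refine edge_of_WW hE hg hx hd hij ?_
    rw [← hsingle i j hij]
    intro h0; apply h; simp only [h0, zero_div]
  · intro v i
    have h1 := hexp1 i (fun j => ⟪v, q j⟫_ℝ)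
    rw [hF.swap, hF.kills] at h1
    have : ∑ j, m i j / G * ⟪v, p j - x⟫_ℝ = (∑ j, m i j * ⟪v, q j⟫_ℝ) / G := by
      rw [Finset.sum_div]
      refine Finset.sum_congr rfl fun j _ => ?_
      simp only [hq]; ring
    rw [this, ← h1, zero_div]
  · intro y hy
    rw [hquad]
    have h1 := haf y
    rw [hB11, hB1, hy] at h1
    refine div_nonpos_of_nonpos_of_nonneg ?_ hGpos.le
    by_contra hcon
    push Not at hcon
    have := mul_pos hcon hGpos
    simp at h1
    linarith
  · intro y hy h0
    rw [hquad] at h0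
    have hyy : FF q T (y :: y :: R) ∅ = 0 := (div_eq_zero_iff.1 h0).resolve_right hGpos.ne'
    have hoy : FF q T (o :: y :: R) ∅ = 0 := by rw [hB1, hy, mul_zero]
    refine hF.corank hb (fun i => T0_single hE hd0 hx i) (T0_nef hx) (fun i => one_big hE hd0 hx i) hd y ?_
    exact hF.hyp_ker R ∅ o y haf (by rw [hB11]; exact hGpos) hoy hyy

theorem stress_one {p : Fin n → EE 1} (hE : Expo p) (hinj : Function.Injective p) (hg : Gen p a) {x : EE 1}
    (hx : x ∈ interior (convexHull ℝ (Set.range p))) : ∃ M, Stress p x M (alp p a x) := by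
  classical
  obtain ⟨hF, b, hb⟩ := T0_fan hg hx
  have hGpos := WW_sum_pos hE hg one_pos hx
  have hpos : ∀ i, 0 < alp p a x i := fun i => div_pos (WW_single_pos hE hg one_pos hx i) hGpos
  have hsum : ∑ i, alp p a x i = 1 := by
    simp only [alp]; rw [← Finset.sum_div, div_self hGpos.ne']
  have hFF : ∀ y, FF (fun i => p i - x) (T0 p a) [y] ∅ =
      (∑ i, WW p a x (1-1) {i}) * ∑ i, alp p a x i * y i := by
    intro y
    rw [hF.cons _ hF.empty y 0 (by simp), Finset.mul_sum]
    refine Finset.sum_congr rfl fun i _ => ?_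
    simp only [inner_zero_left, sub_zero, insert_empty_eq, alp]
    field_simp
    simp [WW]
  have hk : ∀ v, ∑ j, alp p a x j * ⟪v, p j - x⟫_ℝ = 0 := by
    intro v
    have h1 := hFF (fun j => ⟪v, p j - x⟫_ℝ)
    rw [hF.kills] at h1
    exact (mul_eq_zero.1 h1.symm).resolve_left hGpos.ne'
  refine ⟨fun i j => alp p a x i * alp p a x j, fun i j => mul_comm _ _, ?_, hpos, hsum, ?_, ?_, ?_, ?_, ?_⟩
  · intro i; rw [← Finset.mul_sum, hsum, mul_one]
  · exact fun i j _ => (mul_pos (hpos i) (hpos j)).le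
  · exact fun i j hij _ => edge_dim_one hE hinj hij
  · intro v i
    simp only [mul_assoc]
    rw [← Finset.mul_sum, hk, mul_zero]
  · intro y hy
    have : ∑ i, ∑ j, alp p a x i * alp p a x j * (y i * y j) = (∑ i, alp p a x i * y i) * ∑ j, alp p a x j * y j := by
      rw [Finset.sum_mul_sum]
      exact Finset.sum_congr rfl fun i _ => Finset.sum_congr rfl fun j _ => by ring
    rw [this, hy]; simp
  · intro y hy _
    have h0 : ∀ L, FF (fun i => p i - x) (T0 p a) (y :: L) ∅ = 0 := by
      intro L
      rcases L with _ | ⟨z, L⟩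
      · rw [hFF, hy, mul_zero]
      · exact hF.card_ne _ (by simp)
    obtain ⟨v, hv⟩ := hF.lin_of_zero y (hF.zero_all y h0) 0 ∅ hF.empty (by simp)
    exact ⟨v, fun i => hv i (by simpa using T0_single hE one_pos hx i)⟩

theorem stress_exists (hE : Expo p) (hinj : Function.Injective p) (hg : Gen p a) (hd : 0 < d) {x : EE d}
    (hx : x ∈ interior (convexHull ℝ (Set.range p))) : ∃ M, Stress p x M (alp p a x) := by
  rcases Nat.lt_or_ge d 2 with h | h
  · obtain rfl : d = 1 := by omega
    exact stress_one hE hinj hg hx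
  · exact stress_two hE hg h hx

theorem Stress.energy {x : EE d} {M : Fin n → Fin n → ℝ} {α : Fin n → ℝ} (h : Stress p x M α) (z : Fin n → EE d) :
    ∑ i, ∑ j, M i j * ⟪z i, z j⟫_ℝ = ∑ i, α i * ‖z i‖ ^ 2 - (∑ i, ∑ j, M i j * ‖z i - z j‖ ^ 2) / 2 := by
  have h1 : ∑ i, ∑ j, M i j * ‖z i‖ ^ 2 = ∑ i, α i * ‖z i‖ ^ 2 :=
    Finset.sum_congr rfl fun i _ => by rw [← Finset.sum_mul, h.row]
  have h2 : ∑ i, ∑ j, M i j * ‖z j‖ ^ 2 = ∑ i, α i * ‖z i‖ ^ 2 := by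
    rw [Finset.sum_comm, ← h1]
    exact Finset.sum_congr rfl fun i _ => Finset.sum_congr rfl fun j _ => by rw [h.symm]
  have h3 : ∑ i, ∑ j, M i j * ‖z i - z j‖ ^ 2 = ∑ i, ∑ j, M i j * ‖z i‖ ^ 2 + ∑ i, ∑ j, M i j * ‖z j‖ ^ 2
      - 2 * ∑ i, ∑ j, M i j * ⟪z i, z j⟫_ℝ := by
    rw [Finset.mul_sum, ← Finset.sum_add_distrib, ← Finset.sum_sub_distrib]
    refine Finset.sum_congr rfl fun i _ => ?_
    rw [Finset.mul_sum, ← Finset.sum_add_distrib, ← Finset.sum_sub_distrib]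
    refine Finset.sum_congr rfl fun j _ => ?_
    rw [norm_sub_sq_real]; ring
  rw [h3, h1, h2]; ring

theorem Stress.bal {x : EE d} {M : Fin n → Fin n → ℝ} {α : Fin n → ℝ} (h : Stress p x M α) :
    ∑ i, α i • p i = x := by
  have h1 : ∀ v, ⟪v, ∑ i, α i • (p i - x)⟫_ℝ = 0 := by
    intro v
    simp only [inner_sum, inner_smul_right, ← h.row, Finset.sum_mul]
    rw [Finset.sum_comm]
    refine Finset.sum_eq_zero fun j _ => ?_
    rw [← h.ker v j]
    exact Finset.sum_congr rfl fun i _ => by rw [h.symm]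
  have h2 := inner_self_eq_zero.1 (h1 _)
  simp only [smul_sub, Finset.sum_sub_distrib, ← Finset.sum_smul, h.sum, one_smul] at h2
  exact sub_eq_zero.1 h2

theorem variance_id {α : Fin n → ℝ} (hs : ∑ i, α i = 1) (q : Fin n → EE d) (c : EE d) :
    ∑ i, α i * ‖q i - c‖ ^ 2 = ∑ i, α i * ‖q i - ∑ j, α j • q j‖ ^ 2 + ‖(∑ j, α j • q j) - c‖ ^ 2 := by
  set φ := ∑ j, α j • q j with hφ
  have h1 : ∑ i, α i * ⟪q i - φ, φ - c⟫_ℝ = 0 := by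
    have : ∑ i, α i • (q i - φ) = 0 := by
      simp only [smul_sub, Finset.sum_sub_distrib, ← Finset.sum_smul, hs, one_smul]
      rw [← hφ, sub_self]
    have h2 := congrArg (fun y => ⟪y, φ - c⟫_ℝ) this
    simpa [sum_inner, inner_smul_left] using h2
  have h2 : ∀ i, ‖q i - c‖ ^ 2 = ‖q i - φ‖ ^ 2 + 2 * ⟪q i - φ, φ - c⟫_ℝ + ‖φ - c‖ ^ 2 := by
    intro i
    rw [← norm_add_sq_real, sub_add_sub_cancel]
  simp only [h2, mul_add, Finset.sum_add_distrib, ← Finset.sum_mul, hs, one_mul]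
  have h3 : ∑ i, α i * (2 * ⟪q i - φ, φ - c⟫_ℝ) = 2 * ∑ i, α i * ⟪q i - φ, φ - c⟫_ℝ := by
    rw [Finset.mul_sum]; exact Finset.sum_congr rfl fun i _ => by ring
  rw [h3, h1]; ring

theorem Stress.ineq {x : EE d} {M : Fin n → Fin n → ℝ} {α : Fin n → ℝ} (h : Stress p x M α) (q : Fin n → EE d)
    (hpq : ∀ i j, i ≠ j → IsExtreme ℝ (convexHull ℝ (Set.range p)) (segment ℝ (p i) (p j)) →
      ‖q i - q j‖ ≤ ‖p i - p j‖) :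
    ∑ i, α i * ‖q i - ∑ j, α j • q j‖ ^ 2 ≤ ∑ i, α i * ‖p i - x‖ ^ 2 ∧
    (∑ i, α i * ‖q i - ∑ j, α j • q j‖ ^ 2 = ∑ i, α i * ‖p i - x‖ ^ 2 →
      ∀ k, ∃ v : EE d, ∀ i, ⟪v, p i - x⟫_ℝ = (q i - ∑ j, α j • q j) k) := by
  set φ := ∑ j, α j • q j with hφ
  have hz : ∀ k, ∑ i, α i * (q i - φ) k = 0 := by
    intro k
    have : ∑ i, α i • (q i - φ) = 0 := by
      simp only [smul_sub, Finset.sum_sub_distrib, ← Finset.sum_smul, h.sum, one_smul]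
      rw [← hφ, sub_self]
    have h2 := congrArg (fun y : EE d => y k) this
    simpa using h2
  have e1 := h.energy (fun i => q i - φ)
  have e2 := h.energy (fun i => p i - x)
  have e3 : ∑ i, ∑ j, M i j * ⟪p i - x, p j - x⟫_ℝ = 0 :=
    Finset.sum_eq_zero fun i _ => h.ker _ i
  have e4 : ∑ i, ∑ j, M i j * ⟪q i - φ, q j - φ⟫_ℝ = ∑ k, ∑ i, ∑ j, M i j * ((q i - φ) k * (q j - φ) k) := by
    symm
    rw [Finset.sum_comm]
    refine Finset.sum_congr rfl fun i _ => ?_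
    rw [Finset.sum_comm]
    refine Finset.sum_congr rfl fun j _ => ?_
    rw [← Finset.mul_sum]
    congr 1
    rw [PiLp.inner_apply]
    refine Finset.sum_congr rfl fun k _ => ?_
    simp [mul_comm]
  have e5 : ∑ i, ∑ j, M i j * ‖q i - q j‖ ^ 2 ≤ ∑ i, ∑ j, M i j * ‖p i - p j‖ ^ 2 := by
    refine Finset.sum_le_sum fun i _ => Finset.sum_le_sum fun j _ => ?_
    by_cases hij : i = j
    · subst hij; simp
    by_cases hM : M i j = 0
    · simp [hM]
    · exact mul_le_mul_of_nonneg_left (pow_le_pow_left₀ (norm_nonneg _) (hpq i j hij (h.edge i j hij hM)) 2)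
        (h.off i j hij)
  have e6 : ∀ k ∈ Finset.univ, ∑ i, ∑ j, M i j * ((q i - φ) k * (q j - φ) k) ≤ 0 := fun k _ => h.nsd _ (hz k)
  have e7 := Finset.sum_nonpos e6
  simp only [sub_sub_sub_cancel_right] at e1 e2
  rw [e3] at e2
  rw [e4] at e1
  refine ⟨by linarith, fun heq k => ?_⟩
  refine h.full _ (hz k) ?_
  have e8 : ∑ k, ∑ i, ∑ j, M i j * ((q i - φ) k * (q j - φ) k) = 0 := by linarith
  rw [Finset.sum_eq_zero_iff_of_nonpos e6] at e8
  exact e8 k (Finset.mem_univ _)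

end

open scoped InnerProductSpace Topology
open Filter

section
variable {n d : ℕ} {p q : Fin n → EE d} {a : Fin n → ℝ}

theorem mem_of_hull (hE : Expo p) {I : Set (Fin n)} {k : Fin n} (h : p k ∈ convexHull ℝ (p '' I)) : k ∈ I := by
  obtain ⟨Z, h1, h2⟩ := hE k
  obtain ⟨w, hw0, hwI, hw1, hw⟩ := (hull_image p I _).1 h
  by_contra hk
  have e := ev_comb Z Finset.univ w p
  rw [hw, h1, hw1, sub_self, zero_mul, add_zero, eq_comm,
    Finset.sum_eq_zero_iff_of_nonneg (fun i _ => mul_nonneg (hw0 i) (Expo.nonneg h1 h2 i))] at e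
  have hz : ∀ i, w i = 0 := by
    intro i
    by_cases hi : i = k
    · rw [hi]; exact hwI k hk
    · exact (mul_eq_zero.1 (e i (Finset.mem_univ _))).resolve_right (h2 i hi).ne'
  simp [hz] at hw1

theorem supp_mem (hE : Expo p) {I : Set (Fin n)}
    (hI : IsExtreme ℝ (convexHull ℝ (Set.range p)) (convexHull ℝ (p '' I))) {w : Fin n → ℝ} (hw0 : ∀ i, 0 ≤ w i)
    (hw1 : ∑ i, w i = 1) (hz : ∑ i, w i • p i ∈ convexHull ℝ (p '' I)) {k : Fin n} (hk : 0 < w k) : k ∈ I := by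
  classical
  apply mem_of_hull hE
  have hle : w k ≤ 1 := by
    rw [← hw1]; exact Finset.single_le_sum (fun i _ => hw0 i) (Finset.mem_univ k)
  have hsplit : ∑ i ∈ Finset.univ.erase k, w i = 1 - w k := by
    rw [← hw1, ← Finset.add_sum_erase _ _ (Finset.mem_univ k)]; ring
  have hsplit2 : ∑ i, w i • p i = w k • p k + ∑ i ∈ Finset.univ.erase k, w i • p i :=
    (Finset.add_sum_erase _ _ (Finset.mem_univ k)).symm
  rcases hle.lt_or_eq with hlt | heq
  · have h1 : 0 < 1 - w k := by linarith
    refine hI.2 (x := p k) (subset_convexHull _ _ ⟨k, rfl⟩)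
      (y := ∑ i ∈ Finset.univ.erase k, ((1 - w k)⁻¹ * w i) • p i) ?_ hz ⟨w k, 1 - w k, hk, h1, by ring, ?_⟩
    · refine (convex_convexHull ℝ _).sum_mem (fun i _ => ?_) ?_ (fun i _ => subset_convexHull _ _ ⟨i, rfl⟩)
      · have := hw0 i; positivity
      · rw [← Finset.mul_sum, hsplit]; field_simp
    · rw [hsplit2, Finset.smul_sum]
      congr 1
      refine Finset.sum_congr rfl fun i _ => ?_
      rw [smul_smul]; congr 1; field_simp
  · rw [← heq] at hle
    have h0 : ∀ i ∈ Finset.univ.erase k, w i = 0 := by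
      rw [← Finset.sum_eq_zero_iff_of_nonneg (fun i _ => hw0 i), hsplit, heq, sub_self]
    rw [hsplit2, Finset.sum_eq_zero (fun i hi => by rw [h0 i hi, zero_smul]), heq, one_smul, add_zero] at hz
    exact hz

theorem not_aff (hE : Expo p) {I : Set (Fin n)}
    (hI : IsExtreme ℝ (convexHull ℝ (Set.range p)) (convexHull ℝ (p '' I))) {m : Fin n} (hm : m ∉ I) :
    p m ∉ affineSpan ℝ (p '' I) := by
  classical
  intro h
  have hc : ∃ l : Fin n → ℝ, (∀ i, i ∉ I → l i = 0) ∧ ∑ i, l i = 1 ∧ ∑ i, l i • p i = p m := by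
    rw [Set.image_eq_range] at h
    obtain ⟨s, w, hw1, hw⟩ := eq_affineCombination_of_mem_affineSpan h
    rw [s.affineCombination_eq_linear_combination _ _ hw1] at hw
    refine ⟨fun i => if hi : i ∈ I then (if (⟨i, hi⟩ : I) ∈ s then w ⟨i, hi⟩ else 0) else 0, fun i hi => by simp [hi], ?_, ?_⟩
    · rw [← hw1, ← Finset.sum_subset (Finset.subset_univ (s.map ⟨Subtype.val, Subtype.val_injective⟩))]
      · rw [Finset.sum_map]
        refine Finset.sum_congr rfl fun i hi => ?_
        simp [hi]
      · intro i _ hi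
        simp only [Finset.mem_map, Function.Embedding.coeFn_mk, Subtype.exists, exists_and_right, exists_eq_right, not_exists] at hi
        by_cases h : i ∈ I
        · simp [h, hi h]
        · simp [h]
    · rw [hw, ← Finset.sum_subset (Finset.subset_univ (s.map ⟨Subtype.val, Subtype.val_injective⟩))]
      · rw [Finset.sum_map]
        refine Finset.sum_congr rfl fun i hi => ?_
        simp [hi]
      · intro i _ hi
        simp only [Finset.mem_map, Function.Embedding.coeFn_mk, Subtype.exists, exists_and_right, exists_eq_right, not_exists] at hi
        by_cases h : i ∈ I
        · simp [h, hi h]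
        · simp [h]
  obtain ⟨l, hl0, hl1, hl2⟩ := hc
  have hcard : 0 < (Finset.univ.filter (· ∈ I)).card := by
    rw [Finset.card_pos]
    by_contra hcon
    rw [Finset.not_nonempty_iff_eq_empty] at hcon
    have : ∀ i, l i = 0 := fun i => hl0 i fun hi => by
      have : i ∈ Finset.univ.filter (· ∈ I) := by simp [hi]
      rw [hcon] at this; simp at this
    simp [this] at hl1
  set N : ℝ := ((Finset.univ.filter (· ∈ I)).card : ℝ) with hN
  have hNpos : 0 < N := by rw [hN]; exact_mod_cast hcard
  set β : Fin n → ℝ := fun i => if i ∈ I then N⁻¹ else 0 with hβ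
  have hβ1 : ∑ i, β i = 1 := by
    rw [hβ, ← Finset.sum_filter, Finset.sum_const, nsmul_eq_mul, ← hN]; field_simp
  obtain ⟨δ, hδ, hs⟩ := small_pos β (fun i => β i - l i)
  have hβ0 : ∀ i, 0 ≤ β i := fun i => by simp only [hβ]; split_ifs <;> positivity
  have hg0 : ∀ i, 0 ≤ β i + δ * (β i - l i) := by
    intro i
    by_cases hi : i ∈ I
    · exact (hs i (by simp [hβ, hi, hNpos])).le
    · simp [hβ, hi, hl0 i hi]
  have hmem : ∑ i, β i • p i ∈ convexHull ℝ (p '' I) :=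
    (hull_image p I _).2 ⟨β, hβ0, fun i hi => by simp [hβ, hi], hβ1, rfl⟩
  have hmem2 : ∑ i, (β i + δ * (β i - l i)) • p i ∈ convexHull ℝ (Set.range p) :=
    (hull_range p _).2 ⟨_, hg0, by
      rw [Finset.sum_add_distrib, ← Finset.mul_sum, Finset.sum_sub_distrib, hβ1, hl1]; ring, rfl⟩
  refine hm (mem_of_hull hE (hI.2 (x := p m) (subset_convexHull _ _ ⟨m, rfl⟩) hmem2 hmem
    ⟨δ / (1 + δ), 1 / (1 + δ), by positivity, by positivity, by field_simp; ring, ?_⟩))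
  rw [← hl2, Finset.smul_sum, Finset.smul_sum, ← Finset.sum_add_distrib]
  refine Finset.sum_congr rfl fun i _ => ?_
  rw [smul_smul, smul_smul, ← add_smul]
  congr 1
  field_simp; ring

def cl (q : Fin n → EE d) (S : Finset (Fin n)) : Set (Fin n) :=
  {m | ∀ Z, (∀ i, 0 ≤ ev Z (q i)) → (∀ i ∈ S, ev Z (q i) = 0) → ev Z (q m) = 0}

theorem cl_extreme (q : Fin n → EE d) (S : Finset (Fin n)) :
    IsExtreme ℝ (convexHull ℝ (Set.range q)) (convexHull ℝ (q '' cl q S)) := by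
  have hex : ∀ m, ∃ Z, (∀ i, 0 ≤ ev Z (q i)) ∧ (∀ i ∈ S, ev Z (q i) = 0) ∧ (m ∉ cl q S → ev Z (q m) ≠ 0) := by
    intro m
    by_cases hm : m ∈ cl q S
    · exact ⟨0, by simp [ev], by simp [ev], fun h => absurd hm h⟩
    · have hm' := hm
      simp only [cl, Set.mem_ofPred_eq] at hm'
      push Not at hm'
      obtain ⟨Z, h1, h2, h3⟩ := hm'
      exact ⟨Z, h1, h2, fun _ => h3⟩
  choose Z h1 h2 h3 using hex
  have h0 : ∀ i, 0 ≤ ev (∑ m, Z m) (q i) := fun i => by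
    rw [ev_finsum]; exact Finset.sum_nonneg fun m _ => h1 m i
  have key := face_extreme h0
  have hset : {k | ev (∑ m, Z m) (q k) = 0} = cl q S := by
    ext k
    constructor
    · intro hk
      rw [Set.mem_ofPred_eq, ev_finsum, Finset.sum_eq_zero_iff_of_nonneg (fun m _ => h1 m k)] at hk
      by_contra hcon
      exact h3 k hcon (hk k (Finset.mem_univ _))
    · intro hk
      refine hk _ h0 fun i hi => ?_
      rw [ev_finsum]; exact Finset.sum_eq_zero fun m _ => h2 m i hi
  rwa [hset] at key

theorem full_aux (hE : Expo p) (hg : Gen q a) {x : EE d} (hx : x ∈ interior (convexHull ℝ (Set.range q)))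
    (hcomb : ∀ S : Set (Fin n), IsExtreme ℝ (convexHull ℝ (Set.range p)) (convexHull ℝ (p '' S)) ↔
      IsExtreme ℝ (convexHull ℝ (Set.range q)) (convexHull ℝ (q '' S))) (k : ℕ) :
    ∀ S, T0 q a S → S.Nonempty → S.card + k = d → WW q a x k S ≠ 0 →
      Module.finrank ℝ (affineSpan ℝ (p '' cl q S)).direction + k + 1 ≤
        Module.finrank ℝ (affineSpan ℝ (Set.range p)).direction := by
  classical
  have hcl : ∀ S i, i ∈ S → i ∈ cl q S := fun S i hi Z _ h => h i hi
  have hstep : ∀ (S : Finset (Fin n)) (A : Set (Fin n)), S.Nonempty → cl q S ⊆ A → ∀ j ∈ A, j ∉ cl q S →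
      Module.finrank ℝ (affineSpan ℝ (p '' cl q S)).direction + 1 ≤
        Module.finrank ℝ (affineSpan ℝ (p '' A)).direction := by
    intro S A hS hA j hjA hj
    obtain ⟨i, hi⟩ := hS
    have hlt : affineSpan ℝ (p '' cl q S) < affineSpan ℝ (p '' A) := by
      refine lt_of_le_of_ne (affineSpan_mono ℝ (Set.image_mono hA)) fun h => ?_
      refine not_aff hE ((hcomb _).2 (cl_extreme q S)) hj ?_
      rw [h]
      exact subset_affineSpan ℝ _ ⟨j, hjA, rfl⟩
    exact Submodule.finrank_lt_finrank_of_lt (AffineSubspace.direction_lt_of_nonempty hlt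
      ⟨p i, subset_affineSpan ℝ _ ⟨i, hcl S i hi, rfl⟩⟩)
  induction k with
  | zero =>
    intro S hS hne hc _
    obtain ⟨⟨Z, h1, h2, m, h3⟩, -⟩ := hS
    rw [← Set.image_univ]
    exact hstep S Set.univ hne (Set.subset_univ _) m trivial fun h => h3 (h Z h1 h2)
  | succ k ih =>
    intro S hS hSne hc hne
    obtain ⟨⟨Z, h1, h2, h3⟩, -⟩ := id hS
    have hpos := int_pos hx h1 h3
    rw [WW_step hg hx k hS h2 hpos] at hne
    obtain ⟨j, -, hj⟩ := Finset.exists_ne_zero_of_sum_ne_zero hne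
    have hZj : ev Z (q j) ≠ 0 := fun h => hj (by rw [h]; simp)
    have hWj : WW q a x k (insert j S) ≠ 0 := fun h => hj (by rw [h]; simp)
    have hT : T0 q a (insert j S) := by
      by_contra hT; exact hWj ((T0_fan hg hx).1.not_mem _ hT)
    have hjS : j ∉ S := fun h => hZj (h2 j h)
    have h4 := ih _ hT (by simp) (by rw [Finset.card_insert_of_notMem hjS]; omega) hWj
    have h5 := hstep S (cl q (insert j S)) hSne (fun i hi Z hZ1 hZ2 => hi Z hZ1 fun i hi => hZ2 i (by simp [hi]))
      j (hcl _ _ (by simp)) (fun h => hZj (h Z h1 h2))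
    omega

theorem full_dim (hE : Expo p) (hEq : Expo q) (hd : 0 < d) {x : EE d} (hx : x ∈ interior (convexHull ℝ (Set.range q)))
    (hcomb : ∀ S : Set (Fin n), IsExtreme ℝ (convexHull ℝ (Set.range p)) (convexHull ℝ (p '' S)) ↔
      IsExtreme ℝ (convexHull ℝ (Set.range q)) (convexHull ℝ (q '' S))) :
    (interior (convexHull ℝ (Set.range p))).Nonempty := by
  obtain ⟨a, hg⟩ := exists_gen q
  have i : Fin n := ⟨0, pos_of_int hx⟩
  have h := full_aux hE hg hx hcomb (d-1) {i} (T0_single hEq hd hx i) (by simp) (by simp; omega)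
    (WW_single_pos hEq hg hd hx i).ne'
  rw [interior_convexHull_nonempty_iff_affineSpan_eq_top]
  have hne : ((affineSpan ℝ (Set.range p) : AffineSubspace ℝ (EE d)) : Set (EE d)).Nonempty :=
    ⟨p i, subset_affineSpan ℝ _ ⟨i, rfl⟩⟩
  rw [← AffineSubspace.direction_eq_top_iff_of_nonempty hne]
  apply Submodule.eq_top_of_finrank_eq
  refine le_antisymm (Submodule.finrank_le _) ?_
  rw [finrank_euclideanSpace_fin]
  omega

end

open scoped InnerProductSpace Topology
open Filter

section
variable {d : ℕ}

theorem det_interp (A : EE d →L[ℝ] EE d) (v : Fin (d+1) → ℝ) (hv : Function.Injective v) (t : ℝ) :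
    (ContinuousLinearMap.id ℝ (EE d) + t • A).det =
      ∑ j, (Lagrange.basis Finset.univ v j).eval t * (ContinuousLinearMap.id ℝ (EE d) + v j • A).det := by
  classical
  set b := (EuclideanSpace.basisFun (Fin d) ℝ).toBasis
  set M := LinearMap.toMatrix b b (A : EE d →ₗ[ℝ] EE d) with hM
  set f : Polynomial ℝ := Matrix.det ((Polynomial.X : Polynomial ℝ) • M.map Polynomial.C + (1 : Matrix (Fin d) (Fin d) ℝ).map Polynomial.C)
    with hf
  have hdet : ∀ s : ℝ, (ContinuousLinearMap.id ℝ (EE d) + s • A).det = f.eval s := by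
    intro s
    have h1 : f.eval s = Matrix.det (s • M + 1) := by
      rw [hf, ← Polynomial.coe_evalRingHom, RingHom.map_det]
      congr 1
      ext i j
      simp [Matrix.add_apply, Matrix.smul_apply, Matrix.one_apply]
      split_ifs <;> simp [mul_comm]
    rw [h1, ContinuousLinearMap.det, ← LinearMap.det_toMatrix b]
    congr 1
    simp only [ContinuousLinearMap.toLinearMap_add, ContinuousLinearMap.toLinearMap_smul, map_add, map_smul]
    rw [add_comm, ContinuousLinearMap.coe_id, LinearMap.toMatrix_id]
  have hdeg : f.degree < (Finset.univ : Finset (Fin (d+1))).card := by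
    have := Polynomial.natDegree_det_X_add_C_le M 1
    rw [Fintype.card_fin] at this
    refine lt_of_le_of_lt Polynomial.degree_le_natDegree ?_
    rw [Finset.card_univ, Fintype.card_fin]
    exact_mod_cast Nat.lt_succ_of_le this
  have h2 := Lagrange.eq_interpolate_of_eval_eq (s := Finset.univ) (v := v) (r := fun j => f.eval (v j)) (f := f)
    (hv.injOn) hdeg (fun _ _ => rfl)
  rw [hdet]
  conv_lhs => rw [h2]
  simp only [hdet]
  rw [Lagrange.interpolate_apply, Polynomial.eval_finsetSum]
  refine Finset.sum_congr rfl fun j _ => ?_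
  simp [mul_comm]

theorem det_pos_small (A : EE d →L[ℝ] EE d) {K t : ℝ} (hA : ‖A‖ ≤ K) (ht : 0 ≤ t) (htK : t * K < 1) :
    0 < (ContinuousLinearMap.id ℝ (EE d) + t • A).det := by
  have hcont : Continuous fun s : ℝ => (ContinuousLinearMap.id ℝ (EE d) + s • A).det :=
    ContinuousLinearMap.continuous_det.comp (by fun_prop)
  have hne : ∀ s ∈ Set.Icc 0 t, (ContinuousLinearMap.id ℝ (EE d) + s • A).det ≠ 0 := by
    intro s hs h0
    have := LinearMap.bot_lt_ker_of_det_eq_zero h0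
    obtain ⟨v, hv, hv0⟩ := (Submodule.ne_bot_iff _).1 this.ne'
    have hv1 : v + s • A v = 0 := by simpa using hv
    have h1 : ‖v‖ = s * ‖A v‖ := by
      conv_lhs => rw [eq_neg_of_add_eq_zero_left hv1, norm_neg, norm_smul, Real.norm_of_nonneg hs.1]
    have h2 : ‖A v‖ ≤ K * ‖v‖ := (A.le_opNorm v).trans (by gcongr)
    have h3 : 0 < ‖v‖ := norm_pos_iff.2 hv0
    have hK : 0 ≤ K := (norm_nonneg _).trans hA
    have h4 : s * K ≤ t * K := by gcongr; exact hs.2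
    nlinarith [mul_le_mul_of_nonneg_left h2 hs.1]
  by_contra hcon
  push Not at hcon
  have h0 : (ContinuousLinearMap.id ℝ (EE d) + (0:ℝ) • A).det = 1 := by
    simp [ContinuousLinearMap.det]
  obtain ⟨s, hs, hs0⟩ := intermediate_value_Icc' ht hcont.continuousOn (show (0:ℝ) ∈ _ from ⟨hcon, by simp only [h0]; norm_num⟩)
  exact hne s hs hs0

theorem no_retract {R : ℝ} (hR : 0 < R) (r : EE d → EE d)
    (hC : ∀ x, ‖x‖ ≤ R → ContDiffAt ℝ 1 r x) (hn : ∀ x, ‖x‖ ≤ R → ‖r x‖ = R) (hid : ∀ x, ‖x‖ = R → r x = x) : False := by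
  classical
  set k0 : EE d → EE d := fun x => r x - x with hk0
  have hC0 : ∀ x, ‖x‖ ≤ R → ContDiffAt ℝ 1 k0 x := fun x hx => (hC x hx).sub contDiffAt_id
  have hD0 : ∀ x, ‖x‖ ≤ R → DifferentiableAt ℝ k0 x := fun x hx => (hC0 x hx).differentiableAt (by norm_num)
  have hcf : ContinuousOn (fderiv ℝ k0) (Metric.closedBall 0 R) := fun x hx =>
    ((hC0 x (by simpa using hx)).fderiv_right (m := 0) (by norm_num)).continuousAt.continuousWithinAt
  obtain ⟨K0, hK0⟩ := (isCompact_closedBall (0 : EE d) R).exists_bound_of_continuousOn hcf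
  set K : NNReal := K0.toNNReal with hK
  have hKb : ∀ x ∈ Metric.closedBall (0 : EE d) R, ‖fderiv ℝ k0 x‖ ≤ K := fun x hx =>
    (hK0 x hx).trans (Real.le_coe_toNNReal _)
  have hlip0 : LipschitzOnWith K k0 (Metric.closedBall 0 R) :=
    Convex.lipschitzOnWith_of_nnnorm_fderiv_le (𝕜 := ℝ) (fun x hx => hD0 x (by simpa using hx))
      (fun x hx => by exact_mod_cast hKb x hx) (convex_closedBall _ _)
  set k : EE d → EE d := fun x => if ‖x‖ ≤ R then k0 x else 0 with hk
  have hkout : ∀ x, R ≤ ‖x‖ → k x = 0 := by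
    intro x hx
    simp only [hk]
    split_ifs with h
    · simp [hk0, hid x (le_antisymm h hx)]
    · rfl
  have hkin : ∀ x, ‖x‖ ≤ R → k x = k0 x := fun x hx => by simp [hk, hx]
  have hl1 : ∀ x y, ‖x‖ ≤ R → ‖y‖ ≤ R → ‖k x - k y‖ ≤ K * ‖x - y‖ := by
    intro x y hx hy
    rw [hkin x hx, hkin y hy]
    exact hlip0.norm_sub_le (by simpa using hx) (by simpa using hy)
  have hl2 : ∀ x y, ‖x‖ ≤ R → R ≤ ‖y‖ → ‖k x - k y‖ ≤ K * ‖x - y‖ := by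
    intro x y hx hy
    have hc : ContinuousOn (fun s : ℝ => ‖x + s • (y - x)‖) (Set.Icc 0 1) := by fun_prop
    obtain ⟨s, hs, hsR⟩ := intermediate_value_Icc (zero_le_one) hc (show R ∈ _ from ⟨by simpa using hx, by simpa using hy⟩)
    have hsR' : ‖x + s • (y - x)‖ = R := hsR
    have h1 := hl1 x (x + s • (y - x)) hx hsR'.le
    rw [hkout _ hsR'.ge] at h1
    rw [hkout y hy]
    refine h1.trans ?_
    gcongr
    have : x - (x + s • (y - x)) = s • (x - y) := by module
    rw [this, norm_smul, Real.norm_of_nonneg hs.1]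
    exact mul_le_of_le_one_left (norm_nonneg _) hs.2
  have hl : ∀ x y, ‖k x - k y‖ ≤ K * ‖x - y‖ := by
    intro x y
    rcases le_total ‖x‖ R with hx | hx <;> rcases le_total ‖y‖ R with hy | hy
    · exact hl1 x y hx hy
    · exact hl2 x y hx hy
    · rw [norm_sub_rev, norm_sub_rev x]; exact hl2 y x hy hx
    · rw [hkout x hx, hkout y hy]; simp; positivity
  set B := Metric.ball (0 : EE d) R with hB
  have hvol : ∀ t : ℝ, 0 ≤ t → t * K < 1 →
      ∫ x in B, (ContinuousLinearMap.id ℝ (EE d) + t • fderiv ℝ k0 x).det = MeasureTheory.volume.real B := by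
    intro t ht htK
    set F : EE d → EE d := fun x => x + t • k x with hF
    have hinj : Function.Injective F := by
      intro x y hxy
      have h1 : x - y = -(t • (k x - k y)) := by
        have : x + t • k x = y + t • k y := hxy
        rw [smul_sub, eq_neg_iff_add_eq_zero]
        calc _ = (x + t • k x) - (y + t • k y) := by abel
          _ = 0 := sub_eq_zero.2 this
      have h2 : ‖x - y‖ = t * ‖k x - k y‖ := by
        conv_lhs => rw [h1, norm_neg, norm_smul, Real.norm_of_nonneg ht]
      have h3 := hl x y
      by_contra hne
      have h4 : 0 < ‖x - y‖ := norm_pos_iff.2 (sub_ne_zero.2 hne)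
      nlinarith [mul_le_mul_of_nonneg_left h3 ht]
    have hsurj : Function.Surjective F := by
      have happ : ApproximatesLinearOn F ((ContinuousLinearEquiv.refl ℝ (EE d) : EE d ≃L[ℝ] EE d) : EE d →L[ℝ] EE d) Set.univ
          (t.toNNReal * K) := by
        intro x _ y _
        have : F x - F y - ((ContinuousLinearEquiv.refl ℝ (EE d) : EE d ≃L[ℝ] EE d) : EE d →L[ℝ] EE d) (x - y) = t • (k x - k y) := by
          simp [hF]; module
        rw [this, norm_smul, Real.norm_of_nonneg ht]
        push_cast
        rw [Real.coe_toNNReal t ht, mul_assoc]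
        exact mul_le_mul_of_nonneg_left (hl x y) ht
      refine happ.surjective ?_
      rcases subsingleton_or_nontrivial (EE d) with h | h
      · exact Or.inl h
      · right
        have : ‖((ContinuousLinearEquiv.refl ℝ (EE d)).symm : EE d →L[ℝ] EE d)‖₊ = 1 := by
          have : ((ContinuousLinearEquiv.refl ℝ (EE d)).symm : EE d →L[ℝ] EE d) = ContinuousLinearMap.id ℝ (EE d) := rfl
          rw [this]
          ext
          simp
        rw [this, inv_one, ← NNReal.coe_lt_coe]
        push_cast
        rwa [Real.coe_toNNReal t ht]
    have himg : F '' B = B := by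
      have hout : ∀ x, x ∉ B → F x = x := by
        intro x hx
        have : R ≤ ‖x‖ := by simpa [hB] using hx
        simp [hF, hkout x this]
      ext y
      constructor
      · rintro ⟨x, hx, rfl⟩
        by_contra hc
        have := hinj (hout _ hc)
        rw [this] at hc
        exact hc hx
      · intro hy
        obtain ⟨x, rfl⟩ := hsurj y
        refine ⟨x, ?_, rfl⟩
        by_contra hc
        rw [hout x hc] at hy
        exact hc hy
    have hder : ∀ x ∈ B, HasFDerivWithinAt F (ContinuousLinearMap.id ℝ (EE d) + t • fderiv ℝ k0 x) B x := by
      intro x hx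
      have hx1 : ‖x‖ < R := by simpa [hB] using hx
      have h1 : HasFDerivAt (fun x => x + t • k0 x) (ContinuousLinearMap.id ℝ (EE d) + t • fderiv ℝ k0 x) x :=
        (hasFDerivAt_id x).add ((hD0 x hx1.le).hasFDerivAt.const_smul t)
      refine h1.hasFDerivWithinAt.congr (fun y hy => ?_) ?_
      · have hy1 : ‖y‖ < R := by simpa [hB] using hy
        simp only [hF, hkin y hy1.le]
      · simp only [hF, hkin x hx1.le]
    have hcv := MeasureTheory.integral_image_eq_integral_abs_det_fderiv_smul MeasureTheory.volume
      Metric.isOpen_ball.measurableSet hder hinj.injOn (fun _ => (1:ℝ))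
    rw [himg] at hcv
    simp only [smul_eq_mul, mul_one, MeasureTheory.integral_const, MeasureTheory.measureReal_restrict_apply_univ] at hcv
    rw [hcv]
    refine MeasureTheory.setIntegral_congr_fun Metric.isOpen_ball.measurableSet fun x hx => ?_
    have hx1 : x ∈ Metric.closedBall (0 : EE d) R := Metric.ball_subset_closedBall hx
    exact (abs_of_pos (det_pos_small _ (hKb x hx1) ht htK)).symm
  have hint : ∀ t : ℝ, MeasureTheory.IntegrableOn (fun x => (ContinuousLinearMap.id ℝ (EE d) + t • fderiv ℝ k0 x).det) B := by
    intro t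
    have : ContinuousOn (fun x => (ContinuousLinearMap.id ℝ (EE d) + t • fderiv ℝ k0 x).det) (Metric.closedBall 0 R) :=
      ContinuousLinearMap.continuous_det.comp_continuousOn (by fun_prop)
    exact (this.integrableOn_compact (isCompact_closedBall _ _)).mono_set Metric.ball_subset_closedBall
  set δ : ℝ := 1 / (K + 1) with hδ
  set v : Fin (d+1) → ℝ := fun j => δ * ((j : ℕ) / (d + 1)) with hv
  have hδ0 : 0 < δ := by positivity
  have hvinj : Function.Injective v := by
    intro i j hij
    have h1 : δ * ((i : ℕ) / (d + 1) : ℝ) = δ * ((j : ℕ) / (d + 1)) := hij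
    have h2 := mul_left_cancel₀ hδ0.ne' h1
    have hd1 : ((d:ℝ) + 1) ≠ 0 := by positivity
    rw [div_left_inj' hd1] at h2
    exact Fin.ext (by exact_mod_cast h2)
  have hv0 : ∀ j, 0 ≤ v j := fun j => by positivity
  have hvK : ∀ j, v j * K < 1 := by
    intro j
    have h1 : ((j:ℕ) / (d + 1) : ℝ) ≤ 1 := by
      rw [div_le_one (by positivity)]
      have : (j : ℕ) ≤ d + 1 := by omega
      exact_mod_cast this
    have h2 : v j ≤ δ := mul_le_of_le_one_right hδ0.le h1
    have h3 : v j * K ≤ δ * K := by gcongr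
    have h4 : δ * K < 1 := by
      rw [hδ, div_mul_eq_mul_div, one_mul, div_lt_one (by positivity)]
      linarith
    linarith
  have hone : ∫ x in B, (ContinuousLinearMap.id ℝ (EE d) + (1:ℝ) • fderiv ℝ k0 x).det = MeasureTheory.volume.real B := by
    simp_rw [fun x => det_interp (fderiv ℝ k0 x) v hvinj 1]
    rw [MeasureTheory.integral_finsetSum _ (fun j _ => (hint (v j)).const_mul _)]
    simp_rw [MeasureTheory.integral_const_mul]
    simp_rw [fun j => hvol (v j) (hv0 j) (hvK j)]
    rw [← Finset.sum_mul, ← Polynomial.eval_finsetSum, Lagrange.sum_basis hvinj.injOn Finset.univ_nonempty]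
    simp
  have hzero : ∫ x in B, (ContinuousLinearMap.id ℝ (EE d) + (1:ℝ) • fderiv ℝ k0 x).det = 0 := by
    refine MeasureTheory.setIntegral_eq_zero_of_forall_eq_zero fun x hx => ?_
    have hx1 : ‖x‖ < R := by simpa [hB] using hx
    have hdr : DifferentiableAt ℝ r x := (hC x hx1.le).differentiableAt (by norm_num)
    have h1 : fderiv ℝ k0 x = fderiv ℝ r x - ContinuousLinearMap.id ℝ (EE d) := by
      rw [hk0]
      exact (hdr.hasFDerivAt.sub (hasFDerivAt_id x)).fderiv
    rw [h1, one_smul, add_sub_cancel]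
    have h2 : ∀ w, ⟪r x, fderiv ℝ r x w⟫_ℝ = 0 := by
      intro w
      have h3 : HasFDerivAt (fun y => ⟪r y, r y⟫_ℝ) _ x := hdr.hasFDerivAt.inner ℝ hdr.hasFDerivAt
      have h4 : HasFDerivAt (fun y => ⟪r y, r y⟫_ℝ) (0 : EE d →L[ℝ] ℝ) x := by
        refine (hasFDerivAt_const (R^2) x).congr_of_eventuallyEq ?_
        filter_upwards [Metric.isOpen_ball.mem_nhds hx] with y hy
        have hy1 : ‖y‖ < R := by simpa [hB] using hy
        rw [real_inner_self_eq_norm_sq, hn y hy1.le]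
      have h5 := congrArg (fun L => L w) (h3.unique h4)
      simp [real_inner_comm] at h5
      linarith [real_inner_comm (r x) (fderiv ℝ r x w)]
    by_contra hdet
    have hu : IsUnit (LinearMap.det (fderiv ℝ r x : EE d →ₗ[ℝ] EE d)) := isUnit_iff_ne_zero.2 hdet
    obtain ⟨w, hw⟩ := ((Module.End.isUnit_iff _).1 ((LinearMap.isUnit_iff_isUnit_det _).2 hu)).2 (r x)
    have h6 := h2 w
    rw [show fderiv ℝ r x w = r x from hw, real_inner_self_eq_norm_sq, hn x hx1.le] at h6
    nlinarith
  rw [hzero] at hone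
  have : 0 < MeasureTheory.volume.real B := by
    rw [MeasureTheory.Measure.real, ENNReal.toReal_pos_iff]
    exact ⟨Metric.measure_ball_pos _ _ hR, MeasureTheory.measure_ball_lt_top⟩
  linarith

theorem exists_zero (g : EE d → EE d) (hg : Continuous g) (hid : ∀ x, 1 ≤ ‖x‖ → g x = x) : ∃ x, g x = 0 := by
  by_contra hcon
  push Not at hcon
  obtain ⟨c, hc, hcg⟩ : ∃ c > 0, ∀ x, c ≤ ‖g x‖ := by
    obtain ⟨x0, -, hx0⟩ := (isCompact_closedBall (0 : EE d) 1).exists_isMinOn ⟨0, by simp⟩ hg.norm.continuousOn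
    refine ⟨min ‖g x0‖ 1, lt_min (norm_pos_iff.2 (hcon _)) one_pos, fun x => ?_⟩
    rcases le_total ‖x‖ 1 with h | h
    · exact (min_le_left _ _).trans (hx0 (by simpa using h))
    · rw [hid x h]; exact (min_le_right _ _).trans h
  set h : EE d → EE d := fun x => g x - x with hh
  have hcont : Continuous h := hg.sub continuous_id
  have hsupp : HasCompactSupport h := by
    refine HasCompactSupport.intro (isCompact_closedBall (0 : EE d) 1) fun x hx => ?_
    have : 1 < ‖x‖ := by simpa using hx
    simp [hh, hid x this.le]
  have huc := hsupp.uniformContinuous_of_continuous hcont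
  obtain ⟨ε, hε, hεh⟩ := Metric.uniformContinuous_iff.1 huc (c/2) (by positivity)
  obtain ⟨s, hs, hsd⟩ := hcont.exists_contDiff_dist_le_of_forall_mem_ball_dist_le (lt_min hε one_pos)
  have h1 : ∀ x, ‖s x - h x‖ ≤ c/2 := fun x => by
    rw [← dist_eq_norm]
    exact hsd x _ fun y hy => (hεh ((Metric.mem_ball.1 hy).trans_le (min_le_left _ _))).le
  have h2 : ∀ x, 2 ≤ ‖x‖ → s x = 0 := by
    intro x hx
    have hx0 : h x = 0 := by simp [hh, hid x (by linarith)]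
    have := hsd x 0 fun y hy => by
      have hy1 : dist y x < 1 := (Metric.mem_ball.1 hy).trans_le (min_le_right _ _)
      have hy2 : 1 ≤ ‖y‖ := by
        rw [dist_eq_norm] at hy1
        have := norm_sub_norm_le x y
        rw [norm_sub_rev] at this
        linarith
      simp [hh, hid y hy2, hid x (by linarith)]
    have := dist_le_zero.1 this
    rw [this, hx0]
  set F : EE d → EE d := fun x => x + s x with hF
  have hFne : ∀ x, F x ≠ 0 := by
    intro x h0
    have h3 : g x = -(s x - h x) := by
      have : x + s x = 0 := h0
      simp only [hh]
      rw [eq_neg_of_add_eq_zero_right this]; abel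
    have h4 := hcg x
    rw [h3, norm_neg] at h4
    linarith [h1 x]
  have hFC : ContDiff ℝ 1 F := contDiff_id.add (hs.of_le (by exact_mod_cast le_top))
  refine no_retract (R := 2) two_pos (fun x => (2 / ‖F x‖) • F x) (fun x _ => ?_) (fun x _ => ?_) (fun x hx => ?_)
  · exact (contDiffAt_const.div (hFC.contDiffAt.norm ℝ (hFne x)) (norm_ne_zero_iff.2 (hFne x))).smul hFC.contDiffAt
  · rw [norm_smul, norm_div, norm_norm, Real.norm_two, div_mul_cancel₀ _ (norm_ne_zero_iff.2 (hFne x))]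
  · have : F x = x := by simp [hF, h2 x hx.ge]
    rw [this, hx]; simp

end

open scoped InnerProductSpace Topology
open Filter

section
variable {n d : ℕ} {p q : Fin n → EE d} {a : Fin n → ℝ}

theorem hit_lim (hE : Expo p) {c : EE d} (hc : c ∈ interior (convexHull ℝ (Set.range q)))
    (hcomb : ∀ S : Set (Fin n), IsExtreme ℝ (convexHull ℝ (Set.range p)) (convexHull ℝ (p '' S)) ↔
      IsExtreme ℝ (convexHull ℝ (Set.range q)) (convexHull ℝ (q '' S)))
    (W : ℕ → EE d) (β α : ℕ → Fin n → ℝ) (hW1 : ∀ k, 1/2 ≤ ‖W k‖) (hW2 : ∀ k, ‖W k‖ ≤ 1)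
    (hβ : ∀ k, β k ∈ stdSimplex ℝ (Fin n)) (hα : ∀ k, α k ∈ stdSimplex ℝ (Fin n))
    (hαβ : ∀ k, ∑ i, α k i • p i = ∑ i, β k i • p i)
    (hexp : ∀ k i j, β k i ≤ Real.exp (k * ⟪W k, q i - q j⟫_ℝ))
    (hle : ∀ k, ⟪W k, ∑ i, α k i • (q i - c)⟫_ℝ ≤ 0) : False := by
  have hK : IsCompact ((Metric.closedBall (0 : EE d) 1) ×ˢ (stdSimplex ℝ (Fin n) ×ˢ stdSimplex ℝ (Fin n))) :=
    (isCompact_closedBall _ _).prod ((isCompact_stdSimplex ℝ (Fin n)).prod (isCompact_stdSimplex ℝ (Fin n)))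
  obtain ⟨⟨w, b, l⟩, ⟨-, hb, hl⟩, s, hs, hlim⟩ := hK.tendsto_subseq (x := fun k => (W k, β k, α k))
    (fun k => ⟨by simpa using hW2 k, hβ k, hα k⟩)
  change b ∈ _ at hb
  change l ∈ _ at hl
  have hw : Tendsto (fun k => W (s k)) atTop (𝓝 w) := (continuous_fst.tendsto _).comp hlim
  have hbl : Tendsto (fun k => β (s k)) atTop (𝓝 b) := ((continuous_fst.comp continuous_snd).tendsto _).comp hlim
  have hll : Tendsto (fun k => α (s k)) atTop (𝓝 l) := ((continuous_snd.comp continuous_snd).tendsto _).comp hlim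
  have hbi : ∀ i, Tendsto (fun k => β (s k) i) atTop (𝓝 (b i)) := fun i => (tendsto_pi_nhds.1 hbl) i
  have hli : ∀ i, Tendsto (fun k => α (s k) i) atTop (𝓝 (l i)) := fun i => (tendsto_pi_nhds.1 hll) i
  have hwn : w ≠ 0 := by
    have : 1/2 ≤ ‖w‖ := ge_of_tendsto' hw.norm fun k => hW1 _
    intro h; rw [h, norm_zero] at this; norm_num at this
  obtain ⟨j1, hj1⟩ := int_span hc w hwn
  have : Nonempty (Fin n) := ⟨j1⟩
  obtain ⟨j0, hj0⟩ := Finite.exists_max fun j => ⟪w, q j - c⟫_ℝ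
  set m := ⟪w, q j0 - c⟫_ℝ with hm
  have hmpos : 0 < m := hj1.trans_le (hj0 j1)
  have hevZ : ∀ i, ev ((-w, m + ⟪w, c⟫_ℝ) : EE d × ℝ) (q i) = m - ⟪w, q i - c⟫_ℝ := by
    intro i; simp only [ev, inner_neg_left, inner_sub_right]; ring
  have hface := (hcomb _).2 (face_extreme (p := q) (Z := (-w, m + ⟪w, c⟫_ℝ)) fun i => by rw [hevZ]; linarith [hj0 i])
  set I : Set (Fin n) := {i | ev ((-w, m + ⟪w, c⟫_ℝ) : EE d × ℝ) (q i) = 0} with hI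
  have hbI : ∀ i, i ∉ I → b i = 0 := by
    intro i hi
    have hi1 : ⟪w, q i - c⟫_ℝ < m := by
      refine lt_of_le_of_ne (hj0 i) fun h => hi ?_
      rw [hI, Set.mem_ofPred_eq, hevZ, h, sub_self]
    have h0 : ⟪w, q i - q j0⟫_ℝ < 0 := by
      have : q i - q j0 = (q i - c) - (q j0 - c) := by abel
      rw [this, inner_sub_right]; linarith
    have ht : Tendsto (fun k => ⟪W (s k), q i - q j0⟫_ℝ) atTop (𝓝 ⟪w, q i - q j0⟫_ℝ) :=
      hw.inner tendsto_const_nhds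
    have hN : Tendsto (fun k => ((s k : ℕ) : ℝ)) atTop atTop := tendsto_natCast_atTop_atTop.comp hs.tendsto_atTop
    have h1 : Tendsto (fun k => ((s k : ℕ) : ℝ) * ⟪W (s k), q i - q j0⟫_ℝ) atTop atBot := hN.atTop_mul_neg h0 ht
    have h2 := Real.tendsto_exp_atBot.comp h1
    exact le_antisymm (le_of_tendsto_of_tendsto' (hbi i) h2 fun k => hexp _ _ _) (hb.1 i)
  have hsum : ∑ i, l i • p i = ∑ i, b i • p i := by
    have h1 : Tendsto (fun k => ∑ i, α (s k) i • p i) atTop (𝓝 (∑ i, l i • p i)) :=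
      tendsto_finsetSum _ fun i _ => (hli i).smul_const _
    have h2 : Tendsto (fun k => ∑ i, β (s k) i • p i) atTop (𝓝 (∑ i, b i • p i)) :=
      tendsto_finsetSum _ fun i _ => (hbi i).smul_const _
    simp_rw [hαβ] at h1
    exact tendsto_nhds_unique h1 h2
  have hlI : ∀ i, 0 < l i → i ∈ I := fun i hi =>
    supp_mem hE hface hl.1 hl.2 (by rw [hsum]; exact (hull_image p I _).2 ⟨b, hb.1, hbI, hb.2, rfl⟩) hi
  have hfin : ⟪w, ∑ i, l i • (q i - c)⟫_ℝ ≤ 0 := by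
    have h1 : Tendsto (fun k => ∑ i, α (s k) i • (q i - c)) atTop (𝓝 (∑ i, l i • (q i - c))) :=
      tendsto_finsetSum _ fun i _ => (hli i).smul_const _
    exact le_of_tendsto' (hw.inner h1) fun k => hle _
  have heq : ⟪w, ∑ i, l i • (q i - c)⟫_ℝ = m := by
    rw [inner_sum]
    calc ∑ i, ⟪w, l i • (q i - c)⟫_ℝ = ∑ i, l i * m := by
          refine Finset.sum_congr rfl fun i _ => ?_
          rw [inner_smul_right]
          rcases (hl.1 i).eq_or_lt with h | h
          · rw [← h]; simp
          · have := hlI i h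
            rw [hI, Set.mem_ofPred_eq, hevZ] at this
            rw [show ⟪w, q i - c⟫_ℝ = m by linarith]
      _ = m := by rw [← Finset.sum_mul, hl.2, one_mul]
  linarith

theorem pos_comb_interior (hne : (interior (convexHull ℝ (Set.range p))).Nonempty) {b : Fin n → ℝ}
    (hb : ∀ i, 0 < b i) (hb1 : ∑ i, b i = 1) : ∑ i, b i • p i ∈ interior (convexHull ℝ (Set.range p)) := by
  obtain ⟨x0, hx0⟩ := hne
  obtain ⟨w, hw0, hw1, hw⟩ := (hull_range p x0).1 (interior_subset hx0)
  obtain ⟨δ, hδ, hs⟩ := small_pos b (fun i => b i - w i)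
  -- y = (b + δ(b-w)) combination
  have hy : ∑ i, (b i + δ * (b i - w i)) • p i ∈ convexHull ℝ (Set.range p) :=
    (hull_range p _).2 ⟨_, fun i => (hs i (hb i)).le, by
      rw [Finset.sum_add_distrib, ← Finset.mul_sum, Finset.sum_sub_distrib, hb1, hw1]; simp, rfl⟩
  have := (convex_convexHull ℝ (Set.range p)).combo_interior_self_mem_interior hx0 hy
    (a := δ / (1 + δ)) (b := 1 / (1 + δ)) (by positivity) (by positivity) (by field_simp; ring)
  convert this using 1
  rw [← hw, Finset.smul_sum, Finset.smul_sum, ← Finset.sum_add_distrib]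
  refine Finset.sum_congr rfl fun i _ => ?_
  rw [smul_smul, smul_smul, ← add_smul]
  congr 1
  field_simp
  ring

theorem hit (hE : Expo p) (hinj : Function.Injective p) (hg : Gen p a) (hd : 0 < d)
    (hne : (interior (convexHull ℝ (Set.range p))).Nonempty)
    {c : EE d} (hc : c ∈ interior (convexHull ℝ (Set.range q)))
    (hcomb : ∀ S : Set (Fin n), IsExtreme ℝ (convexHull ℝ (Set.range p)) (convexHull ℝ (p '' S)) ↔
      IsExtreme ℝ (convexHull ℝ (Set.range q)) (convexHull ℝ (q '' S))) :
    ∃ x ∈ interior (convexHull ℝ (Set.range p)), ∑ i, alp p a x i • q i = c := by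
  by_contra hcon
  push Not at hcon
  have : Nonempty (Fin n) := ⟨⟨0, pos_of_int hc⟩⟩
  set b : EE d → Fin n → ℝ := fun y i => Real.exp ⟪y, q i⟫_ℝ / ∑ j, Real.exp ⟪y, q j⟫_ℝ with hb
  have hden : ∀ y : EE d, 0 < ∑ j, Real.exp ⟪y, q j⟫_ℝ := fun y =>
    Finset.sum_pos (fun j _ => Real.exp_pos _) Finset.univ_nonempty
  have hbpos : ∀ y i, 0 < b y i := fun y i => div_pos (Real.exp_pos _) (hden y)
  have hb1 : ∀ y, ∑ i, b y i = 1 := fun y => by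
    simp only [hb]; rw [← Finset.sum_div, div_self (hden y).ne']
  have hbc : ∀ i, Continuous fun y => b y i := fun i => by
    simp only [hb]
    exact Continuous.div (by fun_prop) (by fun_prop) fun y => (hden y).ne'
  have hble : ∀ y i j, b y i ≤ Real.exp ⟪y, q i - q j⟫_ℝ := by
    intro y i j
    simp only [hb]
    rw [inner_sub_right, Real.exp_sub]
    gcongr
    exact Finset.single_le_sum (f := fun j => Real.exp ⟪y, q j⟫_ℝ) (fun j _ => (Real.exp_pos _).le) (Finset.mem_univ j)
  set ψ : EE d → EE d := fun y => ∑ i, b y i • p i with hψ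
  have hψi : ∀ y, ψ y ∈ interior (convexHull ℝ (Set.range p)) := fun y => pos_comb_interior hne (hbpos y) (hb1 y)
  have hψc : Continuous ψ := continuous_finsetSum _ fun i _ => (hbc i).smul continuous_const
  set H : EE d → EE d := fun y => ∑ i, alp p a (ψ y) i • (q i - c) with hH
  have hHc : Continuous H := continuous_finsetSum _ fun i _ =>
    ((alp_cont hE hg hd i).comp_continuous hψc hψi).smul continuous_const
  have hst := fun y => stress_exists hE hinj hg hd (hψi y)
  have hHne : ∀ y, H y ≠ 0 := by
    intro y h0
    obtain ⟨M, hM⟩ := hst y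
    apply hcon _ (hψi y)
    simp only [hH, smul_sub, Finset.sum_sub_distrib, ← Finset.sum_smul, hM.sum, one_smul] at h0
    exact sub_eq_zero.1 h0
  have key : ∀ k : ℕ, ∃ w : EE d, 1/2 ≤ ‖w‖ ∧ ‖w‖ ≤ 1 ∧ ⟪w, H ((k:ℝ) • w)⟫_ℝ ≤ 0 := by
    intro k
    set τ : EE d → ℝ := fun w => max 0 (min 1 (2 * ‖w‖ - 1)) with hτ
    have hτc : Continuous τ := by fun_prop
    obtain ⟨w, hw⟩ := exists_zero (fun w => (1 - τ w) • H ((k:ℝ) • w) + τ w • w)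
      (by
        have : Continuous fun w : EE d => H ((k:ℝ) • w) := hHc.comp (by fun_prop)
        fun_prop)
      (fun x hx => by
        have : τ x = 1 := by simp only [hτ]; rw [min_eq_left (by linarith)]; norm_num
        simp [this])
    have h1 : 1/2 ≤ ‖w‖ := by
      by_contra hlt
      push Not at hlt
      have : τ w = 0 := by
        simp only [hτ]; exact max_eq_left ((min_le_right _ _).trans (by linarith))
      simp only [this, sub_zero, one_smul, zero_smul, add_zero] at hw
      exact hHne _ hw
    have hτ1 : τ w < 1 := by
      rcases lt_or_ge (τ w) 1 with h | h
      · exact h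
      · have h2 : τ w = 1 := le_antisymm (max_le zero_le_one (min_le_left _ _)) h
        simp only [h2, sub_self, zero_smul, one_smul, zero_add] at hw
        rw [hw, norm_zero] at h1; norm_num at h1
    have hτ0 : 0 ≤ τ w := le_max_left _ _
    refine ⟨w, h1, ?_, ?_⟩
    · by_contra hlt
      push Not at hlt
      have : τ w = 1 := by simp only [hτ]; rw [min_eq_left (by linarith)]; norm_num
      linarith
    · have h3 := congrArg (fun z => ⟪w, z⟫_ℝ) hw
      simp only [inner_add_right, inner_smul_right, inner_zero_right, real_inner_self_eq_norm_sq] at h3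
      by_contra hlt
      push Not at hlt
      nlinarith [mul_pos (sub_pos.2 hτ1) hlt, mul_nonneg hτ0 (sq_nonneg ‖w‖)]
  choose W hW1 hW2 hW3 using key
  refine hit_lim hE hc hcomb W (fun k => b ((k:ℝ) • W k)) (fun k => alp p a (ψ ((k:ℝ) • W k))) hW1 hW2
    (fun k => ⟨fun i => (hbpos _ i).le, hb1 _⟩) (fun k => ?_) (fun k => ?_) (fun k i j => ?_) hW3
  · obtain ⟨M, hM⟩ := hst ((k:ℝ) • W k)
    exact ⟨fun i => (hM.pos i).le, hM.sum⟩
  · obtain ⟨M, hM⟩ := hst ((k:ℝ) • W k)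
    exact hM.bal
  · have := hble ((k:ℝ) • W k) i j
    rwa [real_inner_smul_left] at this

end

open scoped InnerProductSpace Topology
open Filter

section
variable {n d : ℕ} {p q : Fin n → EE d} {a : Fin n → ℝ}

theorem rigid_map {x c : EE d} {r : ℝ} (hx : x ∈ interior (convexHull ℝ (Set.range p)))
    (T : EE d →ₗ[ℝ] EE d) (hT : ∀ i, q i - c = T (p i - x)) (hp : ∀ i, ‖p i - x‖ = r) (hq : ∀ i, ‖q i - c‖ = r)
    (hexpand : ∀ u, ‖u‖ ≤ ‖T u‖) :
    ∃ e : EE d ≃ᵢ EE d, ∀ i, e (p i) = q i := by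
  have h1 : ∀ i w, ⟪T (p i - x), T w⟫_ℝ = ⟪p i - x, w⟫_ℝ := by
    intro i w
    set g := p i - x with hg
    have hgg : ‖T g‖ = ‖g‖ := by rw [hg, ← hT, hq, hp]
    have h2 : ∀ t : ℝ, 0 ≤ (‖T w‖^2 - ‖w‖^2) + 2 * t * (⟪T g, T w⟫_ℝ - ⟪g, w⟫_ℝ) := by
      intro t
      have h3 := pow_le_pow_left₀ (norm_nonneg _) (hexpand (w + t • g)) 2
      rw [map_add, map_smul, norm_add_sq_real, norm_add_sq_real, inner_smul_right, inner_smul_right, norm_smul,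
        norm_smul, hgg, real_inner_comm g w, real_inner_comm (T g) (T w)] at h3
      linarith
    by_contra hne
    set B := ⟪T g, T w⟫_ℝ - ⟪g, w⟫_ℝ with hB
    have hBne : B ≠ 0 := sub_ne_zero.2 hne
    have h4 := h2 (-(‖T w‖^2 - ‖w‖^2 + 1) / (2 * B))
    have h5 : 2 * (-(‖T w‖^2 - ‖w‖^2 + 1) / (2 * B)) * B = -(‖T w‖^2 - ‖w‖^2 + 1) := by field_simp
    linarith
  have h2 : ∀ w, LinearMap.adjoint T (T w) = w := by
    intro w
    by_contra hne
    obtain ⟨i, hi⟩ := int_span hx _ (sub_ne_zero.2 hne)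
    rw [inner_sub_left, LinearMap.adjoint_inner_left, real_inner_comm, h1 i w, real_inner_comm] at hi
    simp at hi
  have h3 : ∀ w, ‖T w‖ = ‖w‖ := by
    intro w
    have : ⟪T w, T w⟫_ℝ = ⟪w, w⟫_ℝ := by rw [← LinearMap.adjoint_inner_left, h2]
    rw [real_inner_self_eq_norm_sq, real_inner_self_eq_norm_sq] at this
    exact (sq_eq_sq₀ (norm_nonneg _) (norm_nonneg _)).1 this
  let L : EE d →ₗᵢ[ℝ] EE d := ⟨T, h3⟩
  let L2 : EE d ≃ₗᵢ[ℝ] EE d := L.toLinearIsometryEquiv rfl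
  refine ⟨((IsometryEquiv.subRight x).trans L2.toIsometryEquiv).trans (IsometryEquiv.addRight c), fun i => ?_⟩
  change T (p i - x) + c = q i
  rw [← hT]; abel

theorem radius_of_isom {cP cQ : EE d} {rP rQ : ℝ} (hc : cQ ∈ interior (convexHull ℝ (Set.range q)))
    (hinsP : ∀ i, ‖p i - cP‖ = rP) (hinsQ : ∀ i, ‖q i - cQ‖ = rQ) (e : EE d ≃ᵢ EE d) (he : ∀ i, e (p i) = q i) :
    rP = rQ := by
  have h1 : ∀ i, ‖q i - e cP‖ = rP := by
    intro i
    rw [← he, ← dist_eq_norm, e.dist_eq, dist_eq_norm, hinsP]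
  have h2 : e cP = cQ := by
    by_contra hne
    set u := e cP - cQ with hu
    have hu0 : u ≠ 0 := sub_ne_zero.2 hne
    have h3 : ∀ i, 2 * ⟪u, q i - cQ⟫_ℝ = rQ^2 + ‖u‖^2 - rP^2 := by
      intro i
      have : q i - e cP = (q i - cQ) - u := by rw [hu]; abel
      have h4 := h1 i
      rw [this] at h4
      have h5 := norm_sub_sq_real (q i - cQ) u
      rw [h4, hinsQ, real_inner_comm] at h5; linarith
    obtain ⟨i, hi⟩ := int_span hc u hu0
    obtain ⟨j, hj⟩ := int_span hc (-u) (neg_ne_zero.2 hu0)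
    rw [inner_neg_left] at hj
    linarith [h3 i, h3 j]
  have := h1 ⟨0, pos_of_int hc⟩
  rw [← this, h2, hinsQ]

theorem main_ineq {x : EE d} {M : Fin n → Fin n → ℝ} {α : Fin n → ℝ} (h : Stress p x M α)
    (hpq : ∀ i j, i ≠ j → IsExtreme ℝ (convexHull ℝ (Set.range p)) (segment ℝ (p i) (p j)) →
      ‖q i - q j‖ ≤ ‖p i - p j‖) {cP cQ : EE d} {rP rQ : ℝ}
    (hinsP : ∀ i, ‖p i - cP‖ = rP) (hinsQ : ∀ i, ‖q i - cQ‖ = rQ) :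
    rQ^2 - ‖(∑ i, α i • q i) - cQ‖^2 ≤ rP^2 - ‖x - cP‖^2 ∧
    (rQ^2 - ‖(∑ i, α i • q i) - cQ‖^2 = rP^2 - ‖x - cP‖^2 →
      ∀ k, ∃ v : EE d, ∀ i, ⟪v, p i - x⟫_ℝ = (q i - ∑ j, α j • q j) k) := by
  have h1 := variance_id h.sum q cQ
  have h2 := variance_id h.sum p cP
  simp only [hinsP, hinsQ, ← Finset.sum_mul, h.sum, one_mul, h.bal] at h1 h2
  have h3 := h.ineq q hpq
  refine ⟨by linarith [h3.1], fun he => h3.2 (by linarith)⟩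

theorem main_pos (hd : 0 < d) (hpinj : Function.Injective p) (hE : Expo p) (hEq : Expo q)
    (hcomb : ∀ S : Set (Fin n), IsExtreme ℝ (convexHull ℝ (Set.range p)) (convexHull ℝ (p '' S)) ↔
      IsExtreme ℝ (convexHull ℝ (Set.range q)) (convexHull ℝ (q '' S)))
    {cP cQ : EE d} {rP rQ : ℝ} (hrP : 0 ≤ rP)
    (hinsP : ∀ i, ‖p i - cP‖ = rP) (hinsQ : ∀ i, ‖q i - cQ‖ = rQ)
    (hc : cQ ∈ interior (convexHull ℝ (Set.range q)))
    (hpq : ∀ i j, i ≠ j → IsExtreme ℝ (convexHull ℝ (Set.range p)) (segment ℝ (p i) (p j)) →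
      ‖q i - q j‖ ≤ ‖p i - p j‖) :
    rQ ≤ rP ∧ (rP = rQ → ∃ e : EE d ≃ᵢ EE d, ∀ i, e (p i) = q i) := by
  obtain ⟨a, hg⟩ := exists_gen p
  have hne := full_dim hE hEq hd hc hcomb
  obtain ⟨x, hx, hxc⟩ := hit hE hpinj hg hd hne hc hcomb
  obtain ⟨M, hM⟩ := stress_exists hE hpinj hg hd hx
  have h1 := main_ineq hM hpq hinsP hinsQ
  rw [hxc] at h1
  simp only [sub_self, norm_zero] at h1
  refine ⟨?_, ?_⟩
  · by_contra hlt
    push Not at hlt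
    nlinarith [h1.1, sq_nonneg ‖x - cP‖]
  rintro rfl
  have hxP : x = cP := by
    have : ‖x - cP‖ = 0 := by
      have := h1.1
      have h0 := norm_nonneg (x - cP)
      nlinarith
    exact sub_eq_zero.1 (norm_eq_zero.1 this)
  subst hxP
  obtain hv := h1.2 (by simp)
  choose v hv using hv
  let T : EE d →ₗ[ℝ] EE d :=
    { toFun := fun u => WithLp.toLp 2 fun k => ⟪v k, u⟫_ℝ
      map_add' := fun u w => by ext k; simp [inner_add_right]
      map_smul' := fun s u => by ext k; simp [inner_smul_right] }
  have hT : ∀ i, q i - cQ = T (p i - x) := fun i => by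
    ext k
    exact (hv k i).symm
  refine rigid_map hx T hT hinsP hinsQ fun u => ?_
  obtain ⟨s, hs, hsu⟩ : ∃ s : ℝ, 0 < s ∧ x + s • u ∈ interior (convexHull ℝ (Set.range p)) := by
    have hcont : Continuous fun s : ℝ => x + s • u := by fun_prop
    have h2 : ∀ᶠ s in 𝓝 (0:ℝ), x + s • u ∈ interior (convexHull ℝ (Set.range p)) :=
      hcont.continuousAt.eventually_mem (by simpa using isOpen_interior.mem_nhds hx)
    have h3 : ∀ᶠ s in 𝓝[>] (0:ℝ), x + s • u ∈ interior (convexHull ℝ (Set.range p)) := nhdsWithin_le_nhds h2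
    obtain ⟨s, hs1, hs2⟩ := (h3.and self_mem_nhdsWithin).exists
    exact ⟨s, hs2, hs1⟩
  obtain ⟨M', hM'⟩ := stress_exists hE hpinj hg hd hsu
  have h2 := (main_ineq hM' hpq hinsP hinsQ).1
  have h3 : (∑ i, alp p a (x + s • u) i • q i) - cQ = s • T u := by
    have h4 : ∑ i, alp p a (x + s • u) i • (q i - cQ) = (∑ i, alp p a (x + s • u) i • q i) - cQ := by
      simp only [smul_sub, Finset.sum_sub_distrib, ← Finset.sum_smul, hM'.sum, one_smul]
    have h5 : ∑ i, alp p a (x + s • u) i • (p i - x) = s • u := by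
      simp only [smul_sub, Finset.sum_sub_distrib, ← Finset.sum_smul, hM'.sum, one_smul, hM'.bal]
      abel
    rw [← h4, ← map_smul]
    conv_rhs => rw [← h5]
    rw [map_sum]
    refine Finset.sum_congr rfl fun i _ => ?_
    rw [hT, map_smul]
  rw [h3, add_sub_cancel_left, norm_smul, norm_smul, Real.norm_of_nonneg hs.le] at h2
  have h6 : (s * ‖u‖)^2 ≤ (s * ‖T u‖)^2 := by linarith
  have h7 := (sq_le_sq₀ (by positivity) (by positivity)).1 h6
  exact le_of_mul_le_mul_left h7 hs

end


theorem inscribed_version {n d : ℕ}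
    (p q : Fin n → EuclideanSpace ℝ (Fin d))
    (hpinj : Function.Injective p) (hqinj : Function.Injective q)
    (hpvert : Set.range p = Set.extremePoints ℝ (convexHull ℝ (Set.range p)))
    (hqvert : Set.range q = Set.extremePoints ℝ (convexHull ℝ (Set.range q)))
    (hcomb : CombEquiv p q)
    (cP cQ : EuclideanSpace ℝ (Fin d)) (rP rQ : ℝ)
    (hrP : 0 ≤ rP) (hrQ : 0 ≤ rQ)
    (hinsP : ∀ i, ‖p i - cP‖ = rP) (hinsQ : ∀ i, ‖q i - cQ‖ = rQ)
    (hc : cQ ∈ interior (convexHull ℝ (Set.range q)))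
    (h1 : ∀ i j, IsEdge p i j → ‖q i - q j‖ ≤ ‖p i - p j‖) :
    rQ ≤ rP ∧
      (rP = rQ ↔ ∃ e : EuclideanSpace ℝ (Fin d) ≃ᵢ EuclideanSpace ℝ (Fin d),
        ∀ i, e (p i) = q i) := by
  have hd := Nat.eq_zero_or_pos d
  rcases hd with hd | hd
  · subst hd
    have i : Fin n := ⟨0, pos_of_int hc⟩
    have hP : rP = 0 := by rw [← hinsP i, Subsingleton.elim (p i - cP) 0, norm_zero]
    have hQ : rQ = 0 := by rw [← hinsQ i, Subsingleton.elim (q i - cQ) 0, norm_zero]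
    refine ⟨by rw [hP, hQ], fun _ => ⟨IsometryEquiv.refl _, fun i => Subsingleton.elim _ _⟩, fun _ => by rw [hP, hQ]⟩
  · have h := main_pos hd hpinj (expo_of_vert hpinj hpvert) (expo_of_vert hqinj hqvert) hcomb hrP hinsP hinsQ hc
      (fun i j hij he => h1 i j ⟨hij, he⟩)
    exact ⟨h.1, h.2, fun ⟨e, he⟩ => radius_of_isom hc hinsP hinsQ e he⟩
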